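/- arXiv:1011.1785 — 4 statements merged into one kernel-verified Lean document; each statement's English description precedes it below -/
import Mathlib

section
/- Let Ω = (a,b) × ℝ with a < 0 < b, and let φ : Ω → ℝ be continuously differentiable with x·φ_x(x,y) + y·φ_y(x,y) ≥ 0 on Ω (φ is star-shaped). Assume that the set Z = {(x,y) ∈ Ω : x·φ_x(x,y) + y·φ_y(x,y) = 0} does not contain any non-trivial positive semi-orbit of the system (S): ẋ = y, ẏ = −x − y·φ(x,y). Then (S) has at most one limit cycle contained in Ω, and if such a limit cycle μ of period T exists, it is hyperbolic; in fact ∫₀^T div(μ(t)) dt < 0, where div(x,y) = −φ(x,y) − y·φ_y(x,y) is the divergence of the vector field of (S). -/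
open Set Filter Metric Real Topology intervalIntegral

noncomputable section

/-- `γ` solves the planar ODE with vector field `F` at every time in `s`. -/
def IsSolOn (F : ℝ × ℝ → ℝ × ℝ) (γ : ℝ → ℝ × ℝ) (s : Set ℝ) : Prop :=
  ∀ t ∈ s, HasDerivAt γ (F (γ t)) t

/-- A cycle: a non-constant `T`-periodic solution (with `T > 0`). -/
def IsCycle (F : ℝ × ℝ → ℝ × ℝ) (γ : ℝ → ℝ × ℝ) (T : ℝ) : Prop :=
  (∀ t, HasDerivAt γ (F (γ t)) t) ∧ 0 < T ∧ (∀ t, γ (t + T) = γ t) ∧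
    ∃ t₁ t₂, γ t₁ ≠ γ t₂

/-- A limit cycle: a cycle whose orbit has a neighbourhood containing no orbit
of any other cycle. -/
def IsLimitCycle (F : ℝ × ℝ → ℝ × ℝ) (γ : ℝ → ℝ × ℝ) (T : ℝ) : Prop :=
  IsCycle F γ T ∧
    ∃ U : Set (ℝ × ℝ), IsOpen U ∧ range γ ⊆ U ∧
      ∀ (γ' : ℝ → ℝ × ℝ) (T' : ℝ), IsCycle F γ' T' →
        range γ' ≠ range γ → ¬ range γ' ⊆ U

/-- There is a non-trivial positive semi-orbit of the system contained in `Z`. -/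
def HasSemiOrbitIn (F : ℝ × ℝ → ℝ × ℝ) (Z : Set (ℝ × ℝ)) : Prop :=
  ∃ (γ : ℝ → ℝ × ℝ) (t₀ : ℝ), IsSolOn F γ (Ici t₀) ∧
    (∃ t₁ ∈ Ici t₀, ∃ t₂ ∈ Ici t₀, γ t₁ ≠ γ t₂) ∧ γ '' Ici t₀ ⊆ Z

/-- There is a non-trivial (full) orbit of the system contained in `Z`. -/
def HasOrbitIn (F : ℝ × ℝ → ℝ × ℝ) (Z : Set (ℝ × ℝ)) : Prop :=
  ∃ γ : ℝ → ℝ × ℝ, (∀ t, HasDerivAt γ (F (γ t)) t) ∧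
    (∃ t₁ t₂, γ t₁ ≠ γ t₂) ∧ range γ ⊆ Z

/-- The vector field of system (S): ẋ = y, ẏ = −x − y·φ(x,y). -/
def phiVF (φ : ℝ × ℝ → ℝ) : ℝ × ℝ → ℝ × ℝ :=
  fun p => (p.2, -p.1 - p.2 * φ p)

structure CycData (x y f p q : ℝ → ℝ) (T : ℝ) : Prop where
  hT : 0 < T
  dx : ∀ t, HasDerivAt x (y t) t
  dy : ∀ t, HasDerivAt y (-x t - y t * f t) t
  df : ∀ t, HasDerivAt f (y t * p t + (-x t - y t * f t) * q t) t
  cp : Continuous p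
  cq : Continuous q
  px : ∀ t, x (t + T) = x t
  py : ∀ t, y (t + T) = y t
  pf : ∀ t, f (t + T) = f t
  pp : ∀ t, p (t + T) = p t
  pq : ∀ t, q (t + T) = q t
  star : ∀ t, 0 ≤ x t * p t + y t * q t
  nz : ∃ t, 0 < x t ^ 2 + y t ^ 2
  nE : ∃ t, x t * p t + y t * q t ≠ 0

lemma hd_congr {f g : ℝ → ℝ} {f' g' x : ℝ} (h : HasDerivAt f f' x) (hf : ∀ u, g u = f u)
    (e : g' = f') : HasDerivAt g g' x := by
  have : g = f := funext hf
  rw [this, e]; exact h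

lemma pos_of_gron (w w' c : ℝ → ℝ) (T : ℝ) (hT : 0 < T) (hc : Continuous c)
    (hw : ∀ t, HasDerivAt w (w' t) t) (h : ∀ t, c t * w t ≤ w' t)
    (hper : ∀ t, w (t + T) = w t) (h0 : ∃ t, 0 < w t) (t : ℝ) : 0 < w t := by
  have hm : Monotone (fun t => w t * exp (-∫ u in (0:ℝ)..t, c u)) := by
    refine monotone_of_hasDerivAt_nonneg
      (f' := fun t => (w' t - c t * w t) * exp (-∫ u in (0:ℝ)..t, c u)) ?_ ?_
    · intro t
      have h1 := (hc.integral_hasStrictDerivAt 0 t).hasDerivAt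
      refine hd_congr ((hw t).mul h1.neg.exp) (fun _ => rfl) ?_
      try simp only [Pi.neg_apply]; ring
    · intro t
      exact mul_nonneg (sub_nonneg.2 (h t)) (exp_pos _).le
  obtain ⟨t0, ht0⟩ := h0
  obtain ⟨n, hn⟩ := exists_nat_ge ((t0 - t) / T)
  have hp : Function.Periodic w T := hper
  rw [← (hp.nat_mul n) t]
  have hle : t0 ≤ t + n * T := by
    rw [div_le_iff₀ hT] at hn; linarith
  have h2 := hm hle
  have h3 : 0 < w t0 * exp (-∫ u in (0:ℝ)..t0, c u) := mul_pos ht0 (exp_pos _)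
  have h4 := h3.trans_le h2
  exact pos_of_mul_pos_left h4 (exp_pos _).le

namespace CycData

variable {x y f p q : ℝ → ℝ} {T : ℝ}

lemma cx (h : CycData x y f p q T) : Continuous x :=
  continuous_iff_continuousAt.2 fun t => (h.dx t).continuousAt

lemma cy (h : CycData x y f p q T) : Continuous y :=
  continuous_iff_continuousAt.2 fun t => (h.dy t).continuousAt

lemma cf (h : CycData x y f p q T) : Continuous f :=
  continuous_iff_continuousAt.2 fun t => (h.df t).continuousAt

lemma dV (h : CycData x y f p q T) (t : ℝ) :
    HasDerivAt (fun t => x t ^ 2 + y t ^ 2) (-2 * y t ^ 2 * f t) t := by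
  refine hd_congr (((h.dx t).pow 2).add ((h.dy t).pow 2)) (fun _ => rfl) ?_
  push_cast; ring

lemma dW (h : CycData x y f p q T) (t : ℝ) :
    HasDerivAt (fun t => x t ^ 2 + y t ^ 2 + x t * y t * f t)
      ((-f t - y t * q t) * (x t ^ 2 + y t ^ 2 + x t * y t * f t)
        + y t ^ 2 * (x t * p t + y t * q t)) t := by
  refine hd_congr ((h.dV t).add (((h.dx t).mul (h.dy t)).mul (h.df t))) (fun _ => rfl) ?_
  try simp only [Pi.mul_apply]; ring

lemma Vpos (h : CycData x y f p q T) (t : ℝ) : 0 < x t ^ 2 + y t ^ 2 := by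
  have := h.cf
  refine pos_of_gron _ _ (fun t => -(2 * |f t|)) T h.hT (by fun_prop) h.dV ?_ ?_ h.nz t
  · intro t
    have h1 := neg_abs_le (f t)
    have h2 := le_abs_self (f t)
    nlinarith [sq_nonneg (x t), sq_nonneg (y t), abs_nonneg (f t),
      mul_nonneg (sq_nonneg (x t)) (abs_nonneg (f t)),
      mul_nonneg (sq_nonneg (y t)) (sub_nonneg.2 h2)]
  · intro t; simp only [h.px, h.py]

lemma Wpos (h : CycData x y f p q T) (t : ℝ) :
    0 < x t ^ 2 + y t ^ 2 + x t * y t * f t := by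
  have := h.cf
  have := h.cy
  have := h.cq
  refine pos_of_gron _ _ (fun t => -f t - y t * q t) T h.hT (by fun_prop) h.dW ?_ ?_ ?_ t
  · intro t
    have := mul_nonneg (sq_nonneg (y t)) (h.star t)
    linarith
  · intro t; simp only [h.px, h.py, h.pf]
  · obtain ⟨c, _, hc⟩ := exists_hasDerivAt_eq_zero h.hT h.cx.continuousOn
      (by simpa using (h.px 0).symm) (fun t _ => h.dx t)
    refine ⟨c, ?_⟩
    have := h.Vpos c
    rw [hc] at *
    simpa using this

lemma ex (h : CycData x y f p q T) : ∃ t, 0 < y t ^ 2 * (x t * p t + y t * q t) := by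
  by_contra! hcon
  have h0 : ∀ t, y t ≠ 0 → x t * p t + y t * q t = 0 := by
    intro t ht
    have h1 := hcon t
    have h2 : 0 < y t ^ 2 := by positivity
    have h3 := h.star t
    nlinarith
  obtain ⟨t, ht⟩ := h.nE
  by_cases hy : y t = 0
  · have hx : x t ≠ 0 := by
      intro hx
      have := h.Vpos t
      simp [hx, hy] at this
    have hd := h.dy t
    have hne : -x t - y t * f t ≠ 0 := by simpa [hy] using hx
    have hev := hd.eventually_ne (c := 0) hne
    have hcont : Continuous (fun t => x t * p t + y t * q t) := by
      have := h.cx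
      have := h.cy
      have := h.cp
      have := h.cq
      fun_prop
    have h1 : Tendsto (fun t => x t * p t + y t * q t) (𝓝[≠] t) (𝓝 (x t * p t + y t * q t)) :=
      (hcont.tendsto t).mono_left nhdsWithin_le_nhds
    have h2 : Tendsto (fun t => x t * p t + y t * q t) (𝓝[≠] t) (𝓝 0) := by
      refine tendsto_const_nhds.congr' ?_
      filter_upwards [hev] with s hs
      exact (h0 s hs).symm
    exact ht (tendsto_nhds_unique h1 h2)
  · exact ht (h0 t hy)

lemma int_div (h : CycData x y f p q T) :
    (∫ t in (0:ℝ)..T, (-f t - y t * q t)) < 0 := by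
  have := h.cx
  have := h.cy
  have := h.cp
  have := h.cq
  have := h.cf
  set W : ℝ → ℝ := fun t => x t ^ 2 + y t ^ 2 + x t * y t * f t with hW
  have hWp : ∀ t, 0 < W t := h.Wpos
  have cW : Continuous W := by fun_prop
  set g : ℝ → ℝ := fun t => y t ^ 2 * (x t * p t + y t * q t) / W t with hg
  have cg : Continuous g := Continuous.div (by fun_prop) cW (fun t => (hWp t).ne')
  have hd : ∀ t, HasDerivAt (fun t => log (W t)) ((-f t - y t * q t) + g t) t := by
    intro t
    refine hd_congr ((h.dW t).log (hWp t).ne') (fun _ => rfl) ?_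
    have := (hWp t).ne'
    simp only [hg]
    change _ = ((-f t - y t * q t) * W t + _) / W t
    rw [add_div, mul_div_cancel_right₀ _ this]
  have hcd : Continuous (fun t => -f t - y t * q t) := by fun_prop
  have h1 := integral_eq_sub_of_hasDerivAt (a := 0) (b := T) (fun t _ => hd t)
    ((hcd.add cg).intervalIntegrable _ _)
  rw [integral_add (hcd.intervalIntegrable _ _) (cg.intervalIntegrable _ _)] at h1
  have h2 : W T = W 0 := by
    have e1 := h.px 0
    have e2 := h.py 0
    have e3 := h.pf 0
    rw [zero_add] at e1 e2 e3
    simp only [hW, e1, e2, e3]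
  rw [h2, sub_self] at h1
  have gper : Function.Periodic g T := by
    intro t; simp only [hg, hW, h.px, h.py, h.pf, h.pp, h.pq]
  have h3 : 0 < ∫ t in (0:ℝ)..T, g t := by
    refine integral_pos h.hT cg.continuousOn ?_ ?_
    · intro t _
      exact div_nonneg (mul_nonneg (sq_nonneg _) (h.star t)) (hWp t).le
    · obtain ⟨t, ht⟩ := h.ex
      have hgt : 0 < g t := div_pos ht (hWp t)
      obtain ⟨s, hs, e⟩ := gper.exists_mem_Ico₀ h.hT t
      exact ⟨s, ⟨hs.1, hs.2.le⟩, e ▸ hgt⟩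
  linarith

lemma polar (h : CycData x y f p q T) : ∃ (ρ s : ℝ → ℝ) (n : ℕ), 0 < n ∧
    Function.Surjective s ∧
    (∀ θ, x (s θ) = exp (ρ θ) * cos θ) ∧
    (∀ θ, y (s θ) = -(exp (ρ θ) * sin θ)) ∧
    (∀ θ, 0 < 1 - sin θ * cos θ * f (s θ)) ∧
    (∀ θ, HasDerivAt ρ (-(sin θ ^ 2 * f (s θ)) / (1 - sin θ * cos θ * f (s θ))) θ) ∧
    Function.Periodic ρ (n * (2 * π)) := by
  have := h.cx
  have := h.cy
  have := h.cf
  set W : ℝ → ℝ := fun t => x t ^ 2 + y t ^ 2 + x t * y t * f t with hW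
  set V : ℝ → ℝ := fun t => x t ^ 2 + y t ^ 2 with hV
  have hWp : ∀ t, 0 < W t := h.Wpos
  have hVp : ∀ t, 0 < V t := h.Vpos
  have cW : Continuous W := by fun_prop
  have cV : Continuous V := by fun_prop
  set m : ℝ → ℝ := fun t => W t / V t with hm
  have cm : Continuous m := cW.div cV fun t => (hVp t).ne'
  have mp : ∀ t, 0 < m t := fun t => div_pos (hWp t) (hVp t)
  have mper : Function.Periodic m T := by
    intro t; simp only [hm, hV, hW, h.px, h.py, h.pf]
  set θ₀ : ℝ := -Complex.arg ⟨x 0, y 0⟩ with hθ₀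
  set Θ : ℝ → ℝ := fun t => θ₀ + ∫ u in (0:ℝ)..t, m u with hΘ
  have dΘ : ∀ t, HasDerivAt Θ (m t) t := fun t =>
    ((cm.integral_hasStrictDerivAt 0 t).hasDerivAt).const_add θ₀
  have cΘ : Continuous Θ := continuous_iff_continuousAt.2 fun t => (dΘ t).continuousAt
  have sΘ : StrictMono Θ := strictMono_of_hasDerivAt_pos dΘ mp
  have surjΘ : Function.Surjective Θ := by
    refine cΘ.surjective ?_ ?_
    · exact tendsto_atTop_add_const_left _ _
        (mper.tendsto_atTop_intervalIntegral_of_pos' (cm.intervalIntegrable _ _) mp h.hT)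
    · exact tendsto_atBot_add_const_left _ _
        (mper.tendsto_atBot_intervalIntegral_of_pos' (cm.intervalIntegrable _ _) mp h.hT)
  set P : ℝ := ∫ u in (0:ℝ)..T, m u with hP
  have Ppos : 0 < P := integral_pos h.hT cm.continuousOn (fun t _ => (mp t).le)
    ⟨0, ⟨le_rfl, h.hT.le⟩, mp 0⟩
  have Θadd : ∀ t, Θ (t + T) = Θ t + P := by
    intro t
    have := mper.intervalIntegral_add_eq_add 0 t (fun a b => cm.intervalIntegrable a b)
    rw [zero_add] at this
    simp only [hΘ, this, hP]; ring
  -- log radius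
  set R : ℝ → ℝ := fun t => log (V t) / 2 with hR
  have dR : ∀ t, HasDerivAt R (-(y t ^ 2 * f t) / V t) t := by
    intro t
    refine hd_congr (((h.dV t).log (hVp t).ne').div_const 2) (fun _ => rfl) ?_
    simp only [hV]; ring
  have expR : ∀ t, exp (R t) ^ 2 = V t := by
    intro t
    rw [← exp_nat_mul]
    simp only [hR]
    rw [show ((2:ℕ):ℝ) * (log (V t) / 2) = log (V t) by push_cast; ring, exp_log (hVp t)]
  set A : ℝ → ℝ := fun t => (x t * cos (Θ t) - y t * sin (Θ t)) * exp (-R t) with hA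
  set B : ℝ → ℝ := fun t => (x t * sin (Θ t) + y t * cos (Θ t)) * exp (-R t) with hB
  have dA : ∀ t, HasDerivAt A 0 t := by
    intro t
    have h1 := ((h.dx t).mul (dΘ t).cos).sub ((h.dy t).mul (dΘ t).sin)
    refine hd_congr (h1.mul (dR t).neg.exp) (fun _ => rfl) ?_
    have := (hVp t).ne'
    try simp only [Pi.sub_apply, Pi.mul_apply, Pi.neg_apply, hm]
    have e : exp (-R t) ≠ 0 := (exp_pos _).ne'
    field_simp
    simp only [hV, hW]
    ring
  have dB : ∀ t, HasDerivAt B 0 t := by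
    intro t
    have h1 := ((h.dx t).mul (dΘ t).sin).add ((h.dy t).mul (dΘ t).cos)
    refine hd_congr (h1.mul (dR t).neg.exp) (fun _ => rfl) ?_
    have := (hVp t).ne'
    try simp only [Pi.add_apply, Pi.mul_apply, Pi.neg_apply, hm]
    have e : exp (-R t) ≠ 0 := (exp_pos _).ne'
    field_simp
    simp only [hV, hW]
    ring
  have constA : ∀ t, A t = A 0 := fun t =>
    is_const_of_deriv_eq_zero (fun t => (dA t).differentiableAt) (fun t => (dA t).deriv) t 0
  have constB : ∀ t, B t = B 0 := fun t =>
    is_const_of_deriv_eq_zero (fun t => (dB t).differentiableAt) (fun t => (dB t).deriv) t 0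
  have Θ0 : Θ 0 = θ₀ := by simp [hΘ]
  have hc0 := Complex.norm_mul_cos_arg ⟨x 0, y 0⟩
  have hs0 := Complex.norm_mul_sin_arg ⟨x 0, y 0⟩
  have hn0 : ‖(⟨x 0, y 0⟩ : ℂ)‖ = exp (R 0) := by
    have e1 : ‖(⟨x 0, y 0⟩ : ℂ)‖ ^ 2 = exp (R 0) ^ 2 := by
      rw [expR, Complex.sq_norm, Complex.normSq_mk]; simp only [hV]; ring
    exact (pow_left_inj₀ (norm_nonneg _) (exp_pos _).le two_ne_zero).1 e1
  rw [hn0] at hc0 hs0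
  simp only at hc0 hs0
  have A0 : A 0 = 1 := by
    simp only [hA, Θ0, hθ₀, cos_neg, sin_neg]
    have e1 : exp (R 0) * exp (-R 0) = 1 := by rw [← exp_add]; simp
    have e2 := sin_sq_add_cos_sq (Complex.arg ⟨x 0, y 0⟩)
    linear_combination (-cos (Complex.arg ⟨x 0, y 0⟩) * exp (-R 0)) * hc0
      - (sin (Complex.arg ⟨x 0, y 0⟩) * exp (-R 0)) * hs0 + exp (R 0) * exp (-R 0) * e2 + e1
  have B0 : B 0 = 0 := by
    simp only [hB, Θ0, hθ₀, cos_neg, sin_neg]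
    linear_combination (sin (Complex.arg ⟨x 0, y 0⟩) * exp (-R 0)) * hc0
      - (cos (Complex.arg ⟨x 0, y 0⟩) * exp (-R 0)) * hs0
  have pol : ∀ t, x t = exp (R t) * cos (Θ t) ∧ y t = -(exp (R t) * sin (Θ t)) := by
    intro t
    have hA' := (constA t).trans A0
    have hB' := (constB t).trans B0
    simp only [hA, hB, exp_neg] at hA' hB'
    have e := (exp_pos (R t)).ne'
    have e1 : x t * cos (Θ t) - y t * sin (Θ t) = exp (R t) := by
      field_simp at hA'; linarith
    have e2 : x t * sin (Θ t) + y t * cos (Θ t) = 0 := by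
      rcases mul_eq_zero.1 hB' with h | h
      · exact h
      · exact absurd h (inv_ne_zero e)
    have e3 := sin_sq_add_cos_sq (Θ t)
    constructor
    · linear_combination cos (Θ t) * e1 + sin (Θ t) * e2 - x t * e3
    · linear_combination -sin (Θ t) * e1 + cos (Θ t) * e2 - y t * e3
  have Rper : ∀ t, R (t + T) = R t := by
    intro t; simp only [hR, hV, h.px, h.py]
  -- the number of turns
  obtain ⟨k, hk⟩ : ∃ k : ℤ, (k : ℝ) * (2 * π) = P := by
    rw [← Real.cos_eq_one_iff]
    have e1 := pol 0
    have e2 := pol (0 + T)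
    rw [h.px, h.py, Rper, Θadd, e1.1, e1.2] at e2
    have e := (exp_pos (R 0)).ne'
    have c1 := mul_left_cancel₀ e e2.1
    have c2 := mul_left_cancel₀ e (neg_injective e2.2)
    have := cos_sub (Θ 0 + P) (Θ 0)
    rw [add_sub_cancel_left, ← c1, ← c2] at this
    rw [this]
    linarith [sin_sq_add_cos_sq (Θ 0)]
  have kpos : 0 < k := by
    have h2 : 0 < (k : ℝ) := by
      by_contra! hle
      have := mul_nonpos_of_nonpos_of_nonneg hle two_pi_pos.le
      linarith
    exact_mod_cast h2
  set e := sΘ.orderIsoOfSurjective Θ surjΘ with he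
  have hes : ∀ θ, Θ (e.symm θ) = θ := fun θ => e.apply_symm_apply θ
  have hcs : Continuous e.symm := e.symm.continuous
  have hfs : ∀ θ, W (e.symm θ) = V (e.symm θ) * (1 - sin θ * cos θ * f (e.symm θ)) := by
    intro θ
    have e1 := pol (e.symm θ)
    rw [hes] at e1
    have e2 := expR (e.symm θ)
    have : x (e.symm θ) * y (e.symm θ) = - V (e.symm θ) * (sin θ * cos θ) := by
      rw [e1.1, e1.2, ← e2]; ring
    have e3 : W (e.symm θ) = V (e.symm θ) + x (e.symm θ) * y (e.symm θ) * f (e.symm θ) := rfl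
    rw [e3, this]; ring
  refine ⟨fun θ => R (e.symm θ), e.symm, k.toNat, by omega, e.symm.surjective, ?_, ?_, ?_, ?_, ?_⟩
  · intro θ
    have := (pol (e.symm θ)).1
    rwa [hes] at this
  · intro θ
    have := (pol (e.symm θ)).2
    rwa [hes] at this
  · intro θ
    have h1 := hWp (e.symm θ)
    rw [hfs] at h1
    exact pos_of_mul_pos_right h1 (hVp _).le
  · intro θ
    have ds : HasDerivAt e.symm (m (e.symm θ))⁻¹ θ :=
      HasDerivAt.of_local_left_inverse hcs.continuousAt (dΘ _) (mp _).ne'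
        (Eventually.of_forall hes)
    have h1 := (dR (e.symm θ)).comp θ ds
    have hV0 := (hVp (e.symm θ)).ne'
    have hW0 := (hWp (e.symm θ)).ne'
    refine hd_congr (h1) (fun _ => rfl) ?_
    have e2 := expR (e.symm θ)
    have e1 := (pol (e.symm θ)).2
    rw [hes] at e1
    have hy : y (e.symm θ) ^ 2 = V (e.symm θ) * sin θ ^ 2 := by
      rw [e1, ← e2]; ring
    simp only [hm]
    rw [hfs] at hW0 ⊢
    have := right_ne_zero_of_mul hW0
    rw [hy]
    field_simp
  · have hkk : ((k.toNat : ℕ) : ℝ) = (k : ℝ) := by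
      have : ((k.toNat : ℕ) : ℤ) = k := Int.toNat_of_nonneg kpos.le
      exact_mod_cast congrArg (Int.cast : ℤ → ℝ) this
    intro θ
    have h1 : e.symm (θ + P) = e.symm θ + T := by
      apply sΘ.injective
      rw [hes, Θadd, hes]
    rw [hkk, hk]
    simp only [h1, Rper]

end CycData

lemma cyc_of (a b : ℝ) (φ : ℝ × ℝ → ℝ)
    (hφ : ContDiffOn ℝ 1 φ (Ioo a b ×ˢ (univ : Set ℝ)))
    (hstar : ∀ p ∈ Ioo a b ×ˢ (univ : Set ℝ),
      p.1 * fderiv ℝ φ p (1, 0) + p.2 * fderiv ℝ φ p (0, 1) ≥ 0)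
    (hZ : ¬ HasSemiOrbitIn (phiVF φ)
      {p ∈ Ioo a b ×ˢ (univ : Set ℝ) |
        p.1 * fderiv ℝ φ p (1, 0) + p.2 * fderiv ℝ φ p (0, 1) = 0})
    (γ : ℝ → ℝ × ℝ) (T : ℝ) (hγ : IsCycle (phiVF φ) γ T)
    (hr : range γ ⊆ Ioo a b ×ˢ (univ : Set ℝ)) :
    CycData (fun t => (γ t).1) (fun t => (γ t).2) (fun t => φ (γ t))
      (fun t => fderiv ℝ φ (γ t) (1, 0)) (fun t => fderiv ℝ φ (γ t) (0, 1)) T := by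
  obtain ⟨hd, hT, hper, hnc⟩ := hγ
  have hmem : ∀ t, γ t ∈ Ioo a b ×ˢ (univ : Set ℝ) := fun t => hr ⟨t, rfl⟩
  have hopen : IsOpen (Ioo a b ×ˢ (univ : Set ℝ)) := isOpen_Ioo.prod isOpen_univ
  have hcγ : Continuous γ := continuous_iff_continuousAt.2 fun t => (hd t).continuousAt
  have hfd : Continuous (fun t => fderiv ℝ φ (γ t)) :=
    (hφ.continuousOn_fderiv_of_isOpen hopen le_rfl).comp_continuous hcγ hmem
  have hdiff : ∀ t, HasFDerivAt φ (fderiv ℝ φ (γ t)) (γ t) := fun t =>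
    ((hφ.differentiableOn one_ne_zero).differentiableAt (hopen.mem_nhds (hmem t))).hasFDerivAt
  refine
    { hT := hT, dx := ?_, dy := ?_, df := ?_, cp := ?_, cq := ?_, px := ?_, py := ?_, pf := ?_,
      pp := ?_, pq := ?_, star := ?_, nz := ?_, nE := ?_ }
  · intro t; exact (hasFDerivAt_fst.comp_hasDerivAt t (hd t))
  · intro t; exact (hasFDerivAt_snd.comp_hasDerivAt t (hd t))
  · intro t
    have h1 := (hdiff t).comp_hasDerivAt t (hd t)
    refine hd_congr (h1) (fun _ => rfl) ?_
    have : phiVF φ (γ t) = (γ t).2 • ((1:ℝ), (0:ℝ))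
        + (-(γ t).1 - (γ t).2 * φ (γ t)) • ((0:ℝ), (1:ℝ)) := by
      simp [phiVF]
    rw [this, map_add, map_smul, map_smul, smul_eq_mul, smul_eq_mul]
  · exact hfd.clm_apply continuous_const
  · exact hfd.clm_apply continuous_const
  all_goals first | (intro t; simp only [hper]; done) | skip
  · intro t; exact hstar _ (hmem t)
  · by_contra! hcon
    obtain ⟨t₁, t₂, hne⟩ := hnc
    have hz : ∀ t, γ t = 0 := by
      intro t
      have := hcon t
      have h1 : (γ t).1 = 0 := by nlinarith [sq_nonneg (γ t).1, sq_nonneg (γ t).2]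
      have h2 : (γ t).2 = 0 := by nlinarith [sq_nonneg (γ t).1, sq_nonneg (γ t).2]
      exact Prod.ext h1 h2
    exact hne (by rw [hz, hz])
  · by_contra! hcon
    obtain ⟨t₁, t₂, hne⟩ := hnc
    have hp : Function.Periodic γ T := hper
    obtain ⟨s₁, hs₁, e₁⟩ := hp.exists_mem_Ico₀ hT t₁
    obtain ⟨s₂, hs₂, e₂⟩ := hp.exists_mem_Ico₀ hT t₂
    refine hZ ⟨γ, 0, fun t _ => hd t, ⟨s₁, hs₁.1, s₂, hs₂.1, ?_⟩, ?_⟩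
    · rwa [← e₁, ← e₂]
    · rintro _ ⟨t, _, rfl⟩
      exact ⟨hmem t, hcon t⟩

/-- Behaviour of `φ` along rays. -/
lemma ray (a b : ℝ) (φ : ℝ × ℝ → ℝ)
    (hφ : ContDiffOn ℝ 1 φ (Ioo a b ×ˢ (univ : Set ℝ)))
    (hstar : ∀ p ∈ Ioo a b ×ˢ (univ : Set ℝ),
      p.1 * fderiv ℝ φ p (1, 0) + p.2 * fderiv ℝ φ p (0, 1) ≥ 0)
    (c s r₁ r₂ : ℝ) (h1 : 0 < r₁) (h12 : r₁ < r₂)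
    (m1 : (r₁ * c, r₁ * s) ∈ Ioo a b ×ˢ (univ : Set ℝ))
    (m2 : (r₂ * c, r₂ * s) ∈ Ioo a b ×ˢ (univ : Set ℝ)) :
    φ (r₁ * c, r₁ * s) ≤ φ (r₂ * c, r₂ * s) ∧
    (φ (r₁ * c, r₁ * s) = φ (r₂ * c, r₂ * s) → ∀ r ∈ Icc r₁ r₂,
      r * c * fderiv ℝ φ (r * c, r * s) (1, 0) + r * s * fderiv ℝ φ (r * c, r * s) (0, 1) = 0) := by
  have hopen : IsOpen (Ioo a b ×ˢ (univ : Set ℝ)) := isOpen_Ioo.prod isOpen_univ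
  have hmem : ∀ r ∈ Icc r₁ r₂, (r * c, r * s) ∈ Ioo a b ×ˢ (univ : Set ℝ) := by
    intro r hr
    have m1' := m1.1
    have m2' := m2.1
    simp only [mem_Ioo] at m1' m2'
    refine ⟨?_, mem_univ _⟩
    simp only [mem_Ioo]
    rcases le_total 0 c with hc | hc
    · have := mul_le_mul_of_nonneg_right hr.1 hc
      have := mul_le_mul_of_nonneg_right hr.2 hc
      constructor <;> linarith
    · have := mul_le_mul_of_nonpos_right hr.1 hc
      have := mul_le_mul_of_nonpos_right hr.2 hc
      constructor <;> linarith
  have hd : ∀ r ∈ Icc r₁ r₂, HasDerivAt (fun r : ℝ => φ (r * c, r * s))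
      (c * fderiv ℝ φ (r * c, r * s) (1, 0) + s * fderiv ℝ φ (r * c, r * s) (0, 1)) r := by
    intro r hr
    have hf : HasFDerivAt φ (fderiv ℝ φ (r * c, r * s)) (r * c, r * s) :=
      ((hφ.differentiableOn one_ne_zero).differentiableAt
        (hopen.mem_nhds (hmem r hr))).hasFDerivAt
    have hl : HasDerivAt (fun r : ℝ => (r * c, r * s)) (c, s) r :=
      (hasDerivAt_mul_const c).prodMk (hasDerivAt_mul_const s)
    have h := HasFDerivAt.comp_hasDerivAt r hf hl
    refine hd_congr (h) (fun _ => rfl) ?_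
    have : (c, s) = c • ((1:ℝ), (0:ℝ)) + s • ((0:ℝ), (1:ℝ)) := by simp
    rw [this, map_add, map_smul, map_smul, smul_eq_mul, smul_eq_mul]
  have hmono : MonotoneOn (fun r : ℝ => φ (r * c, r * s)) (Icc r₁ r₂) := by
    refine monotoneOn_of_hasDerivWithinAt_nonneg (convex_Icc _ _)
      (fun r hr => (hd r hr).continuousAt.continuousWithinAt)
      (fun r hr => (hd r (interior_subset hr)).hasDerivWithinAt) ?_
    intro r hr
    have hr' := interior_subset hr
    have h0 := hstar _ (hmem r hr')
    simp only at h0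
    have hrp : 0 < r := h1.trans_le hr'.1
    have : 0 ≤ r * (c * fderiv ℝ φ (r * c, r * s) (1, 0)
        + s * fderiv ℝ φ (r * c, r * s) (0, 1)) := by linarith
    exact nonneg_of_mul_nonneg_right this hrp
  have l1 : r₁ ∈ Icc r₁ r₂ := ⟨le_rfl, h12.le⟩
  have l2 : r₂ ∈ Icc r₁ r₂ := ⟨h12.le, le_rfl⟩
  refine ⟨hmono l1 l2 h12.le, ?_⟩
  intro heq r hr
  have hcst : ∀ r ∈ Icc r₁ r₂, φ (r * c, r * s) = φ (r₁ * c, r₁ * s) := by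
    intro r hr
    have e1 := hmono l1 hr hr.1
    have e2 := hmono hr l2 hr.2
    simp only at e1 e2
    linarith
  have d1 := (hd r hr).hasDerivWithinAt (s := Icc r₁ r₂)
  have d2 : HasDerivWithinAt (fun r : ℝ => φ (r * c, r * s)) 0 (Icc r₁ r₂) r :=
    (hasDerivWithinAt_const r _ (φ (r₁ * c, r₁ * s))).congr hcst (hcst r hr)
  have := (uniqueDiffOn_Icc h12 r hr).eq_deriv _ d1 d2
  linear_combination r * this

lemma ray' (a b : ℝ) (φ : ℝ × ℝ → ℝ)
    (hφ : ContDiffOn ℝ 1 φ (Ioo a b ×ˢ (univ : Set ℝ)))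
    (hstar : ∀ p ∈ Ioo a b ×ˢ (univ : Set ℝ),
      p.1 * fderiv ℝ φ p (1, 0) + p.2 * fderiv ℝ φ p (0, 1) ≥ 0)
    (θ ρ₁ ρ₂ : ℝ) (P₁ P₂ : ℝ × ℝ)
    (e1 : P₁ = (exp ρ₁ * cos θ, -(exp ρ₁ * sin θ)))
    (e2 : P₂ = (exp ρ₂ * cos θ, -(exp ρ₂ * sin θ)))
    (m1 : P₁ ∈ Ioo a b ×ˢ (univ : Set ℝ))
    (m2 : P₂ ∈ Ioo a b ×ˢ (univ : Set ℝ)) :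
    0 ≤ (ρ₁ - ρ₂) * (φ P₁ - φ P₂) ∧
    (φ P₁ = φ P₂ → ρ₁ ≠ ρ₂ →
      P₁.1 * fderiv ℝ φ P₁ (1, 0) + P₁.2 * fderiv ℝ φ P₁ (0, 1) = 0) := by
  rw [← mul_neg] at e1 e2
  subst e1 e2
  rcases lt_trichotomy ρ₁ ρ₂ with hlt | heq | hlt
  · have h := ray a b φ hφ hstar (cos θ) (-sin θ) (exp ρ₁) (exp ρ₂) (exp_pos _)
      (exp_lt_exp.2 hlt) m1 m2
    refine ⟨mul_nonneg_of_nonpos_of_nonpos (by linarith) (by linarith [h.1]), fun hh _ => ?_⟩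
    exact h.2 hh _ ⟨le_rfl, (exp_lt_exp.2 hlt).le⟩
  · subst heq
    simp
  · have h := ray a b φ hφ hstar (cos θ) (-sin θ) (exp ρ₂) (exp ρ₁) (exp_pos _)
      (exp_lt_exp.2 hlt) m2 m1
    refine ⟨mul_nonneg (by linarith) (by linarith [h.1]), fun hh _ => ?_⟩
    exact h.2 hh.symm _ ⟨(exp_lt_exp.2 hlt).le, le_rfl⟩

lemma uniq (a b : ℝ) (φ : ℝ × ℝ → ℝ)
    (hφ : ContDiffOn ℝ 1 φ (Ioo a b ×ˢ (univ : Set ℝ)))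
    (hstar : ∀ p ∈ Ioo a b ×ˢ (univ : Set ℝ),
      p.1 * fderiv ℝ φ p (1, 0) + p.2 * fderiv ℝ φ p (0, 1) ≥ 0)
    (hZ : ¬ HasSemiOrbitIn (phiVF φ)
      {p ∈ Ioo a b ×ˢ (univ : Set ℝ) |
        p.1 * fderiv ℝ φ p (1, 0) + p.2 * fderiv ℝ φ p (0, 1) = 0})
    (γ₁ : ℝ → ℝ × ℝ) (T₁ : ℝ) (hγ₁ : IsCycle (phiVF φ) γ₁ T₁)
    (hr₁ : range γ₁ ⊆ Ioo a b ×ˢ (univ : Set ℝ))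
    (γ₂ : ℝ → ℝ × ℝ) (T₂ : ℝ) (hγ₂ : IsCycle (phiVF φ) γ₂ T₂)
    (hr₂ : range γ₂ ⊆ Ioo a b ×ˢ (univ : Set ℝ)) : range γ₁ = range γ₂ := by
  have H₁ := cyc_of a b φ hφ hstar hZ γ₁ T₁ hγ₁ hr₁
  have H₂ := cyc_of a b φ hφ hstar hZ γ₂ T₂ hγ₂ hr₂
  obtain ⟨ρ₁, s₁, n₁, hn₁, su₁, x₁, y₁, g₁, d₁, p₁⟩ := H₁.polar
  obtain ⟨ρ₂, s₂, n₂, hn₂, su₂, x₂, y₂, g₂, d₂, p₂⟩ := H₂.polar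
  have E₁ : ∀ θ, γ₁ (s₁ θ) = (exp (ρ₁ θ) * cos θ, -(exp (ρ₁ θ) * sin θ)) :=
    fun θ => Prod.ext (x₁ θ) (y₁ θ)
  have E₂ : ∀ θ, γ₂ (s₂ θ) = (exp (ρ₂ θ) * cos θ, -(exp (ρ₂ θ) * sin θ)) :=
    fun θ => Prod.ext (x₂ θ) (y₂ θ)
  have K := fun θ => ray' a b φ hφ hstar θ (ρ₁ θ) (ρ₂ θ) _ _ (E₁ θ) (E₂ θ)
    (hr₁ ⟨_, rfl⟩) (hr₂ ⟨_, rfl⟩)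
  set D : ℝ → ℝ := fun θ => ρ₁ θ - ρ₂ θ with hD
  have dD : ∀ θ, HasDerivAt D (-(sin θ ^ 2 * (φ (γ₁ (s₁ θ)) - φ (γ₂ (s₂ θ)))
      / ((1 - sin θ * cos θ * φ (γ₁ (s₁ θ))) * (1 - sin θ * cos θ * φ (γ₂ (s₂ θ)))))) θ := by
    intro θ
    refine hd_congr ((d₁ θ).sub (d₂ θ)) (fun _ => rfl) ?_
    have e1 := (g₁ θ).ne'
    have e2 := (g₂ θ).ne'
    rw [div_sub_div _ _ e1 e2, ← neg_div]
    congr 1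
    ring
  have dD2 := fun θ => (dD θ).pow 2
  have hmono : Monotone (fun θ => -(D θ ^ 2)) := by
    refine monotone_of_hasDerivAt_nonneg (fun θ => (dD2 θ).neg) ?_
    intro θ
    have e1 := g₁ θ
    have e2 := g₂ θ
    have e3 := (K θ).1
    have : 0 ≤ 2 * (sin θ ^ 2 * ((ρ₁ θ - ρ₂ θ) * (φ (γ₁ (s₁ θ)) - φ (γ₂ (s₂ θ))))
      / ((1 - sin θ * cos θ * φ (γ₁ (s₁ θ))) * (1 - sin θ * cos θ * φ (γ₂ (s₂ θ))))) :=
      mul_nonneg zero_le_two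
        (div_nonneg (mul_nonneg (sq_nonneg _) e3) (mul_pos e1 e2).le)
    refine this.trans (le_of_eq ?_)
    simp only [hD]
    push_cast
    ring
  set N : ℝ := (n₁ : ℝ) * n₂ * (2 * π) with hN
  have hNpos : 0 < N := by
    have : (0:ℝ) < n₁ := by exact_mod_cast hn₁
    have : (0:ℝ) < n₂ := by exact_mod_cast hn₂
    positivity
  have perD : Function.Periodic (fun θ => -(D θ ^ 2)) N := by
    intro θ
    have e1 := p₁.nat_mul n₂ θ
    have e2 := p₂.nat_mul n₁ θ
    have f1 : (n₂ : ℝ) * (n₁ * (2 * π)) = N := by rw [hN]; ring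
    have f2 : (n₁ : ℝ) * (n₂ * (2 * π)) = N := by rw [hN]; ring
    rw [f1] at e1
    rw [f2] at e2
    simp only [hD, e1, e2]
  have hconst : ∀ θ, -(D θ ^ 2) = -(D 0 ^ 2) := by
    have key : ∀ α β, -(D α ^ 2) ≤ -(D β ^ 2) := by
      intro α β
      obtain ⟨n, hn⟩ := exists_nat_ge ((α - β) / N)
      rw [div_le_iff₀ hNpos] at hn
      have h1 : α ≤ β + n * N := by linarith
      have h2 := hmono h1
      have h3 := perD.nat_mul n β
      simp only at h2 h3
      linarith
    exact fun θ => le_antisymm (key _ _) (key _ _)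
  by_cases hD0 : D 0 = 0
  · have hz : ∀ θ, ρ₁ θ = ρ₂ θ := by
      intro θ
      have := hconst θ
      rw [hD0] at this
      have : D θ = 0 := by simpa using this
      exact sub_eq_zero.1 this
    have hE : ∀ θ, γ₁ (s₁ θ) = γ₂ (s₂ θ) := by
      intro θ; rw [E₁, E₂, hz]
    rw [← su₁.range_comp γ₁, ← su₂.range_comp γ₂]
    congr 1
    funext θ
    exact hE θ
  · exfalso
    obtain ⟨t, ht⟩ := H₁.ex
    obtain ⟨θ, rfl⟩ := su₁ t
    have hDθ : D θ ≠ 0 := by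
      intro h0
      have := hconst θ
      rw [h0] at this
      apply hD0
      simpa using this.symm
    have hder : HasDerivAt (fun θ => D θ ^ 2) 0 θ := by
      have : (fun θ => D θ ^ 2) = fun _ => D 0 ^ 2 := by
        funext θ; exact neg_injective (hconst θ)
      rw [this]; exact hasDerivAt_const _ _
    have h0 := (dD2 θ).unique hder
    have hs : sin θ ≠ 0 := by
      intro h0
      have hy : (γ₁ (s₁ θ)).2 = 0 := by rw [E₁]; simp [h0]
      simp [hy] at ht
    have hφe : φ (γ₁ (s₁ θ)) = φ (γ₂ (s₂ θ)) := by
      have e1 := (g₁ θ).ne'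
      have e2 := (g₂ θ).ne'
      by_contra hne
      have hne' := sub_ne_zero.2 hne
      revert h0
      simp [hDθ, hs, e1, e2, hne']
    have := (K θ).2 hφe (sub_ne_zero.1 hDθ)
    simp only [this, mul_zero, lt_irrefl] at ht

/-- on the strip `Ω = (a,b) × ℝ`, if `φ` is star-shaped
(`x φ_x + y φ_y ≥ 0`) and the set where `x φ_x + y φ_y = 0` contains no
non-trivial positive semi-orbit of (S), then (S) has at most one limit cycle in
`Ω`, and any such limit cycle satisfies `∫₀ᵀ div < 0` (hence is hyperbolic). -/
theorem statement1 (a b : ℝ) (ha : a < 0) (hb : 0 < b) (φ : ℝ × ℝ → ℝ)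
    (hφ : ContDiffOn ℝ 1 φ (Ioo a b ×ˢ (univ : Set ℝ)))
    (hstar : ∀ p ∈ Ioo a b ×ˢ (univ : Set ℝ),
      p.1 * fderiv ℝ φ p (1, 0) + p.2 * fderiv ℝ φ p (0, 1) ≥ 0)
    (hZ : ¬ HasSemiOrbitIn (phiVF φ)
      {p ∈ Ioo a b ×ˢ (univ : Set ℝ) |
        p.1 * fderiv ℝ φ p (1, 0) + p.2 * fderiv ℝ φ p (0, 1) = 0}) :
    (∀ (γ₁ : ℝ → ℝ × ℝ) (T₁ : ℝ) (γ₂ : ℝ → ℝ × ℝ) (T₂ : ℝ),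
        IsLimitCycle (phiVF φ) γ₁ T₁ → range γ₁ ⊆ Ioo a b ×ˢ (univ : Set ℝ) →
        IsLimitCycle (phiVF φ) γ₂ T₂ → range γ₂ ⊆ Ioo a b ×ˢ (univ : Set ℝ) →
        range γ₁ = range γ₂) ∧
    (∀ (μ : ℝ → ℝ × ℝ) (T : ℝ),
        IsLimitCycle (phiVF φ) μ T → range μ ⊆ Ioo a b ×ˢ (univ : Set ℝ) →
        (∫ t in (0:ℝ)..T,
          (-φ (μ t) - (μ t).2 * fderiv ℝ φ (μ t) (0, 1))) < 0) := by
  refine ⟨?_, ?_⟩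
  · intro γ₁ T₁ γ₂ T₂ h₁ hr₁ h₂ hr₂
    exact uniq a b φ hφ hstar hZ γ₁ T₁ h₁.1 hr₁ γ₂ T₂ h₂.1 hr₂
  · intro μ T h hr
    exact (cyc_of a b φ hφ hstar hZ μ T h.1 hr).int_div
end
end

section
/- Let f₁, …, f_J : (a,b) → ℝ (a < 0 < b) be continuously differentiable with f_j ≡ 0 for every even j, and assume x·f_j'(x) + (j−1)·f_j(x) ≥ 0 for every odd j and every x ∈ (a,b). Assume condition (Seq): there exists a sequence x_m → 0 such that for every m there exists 1 ≤ j(m) ≤ J with x_m·f_{j(m)}'(x_m) + (j(m)−1)·f_{j(m)}(x_m) ≠ 0. Then the system ẋ = y, ẏ = −x − Σ_{j=1}^{J} f_j(x)·y^j has at most one limit cycle contained in (a,b) × ℝ, and if such a limit cycle exists it is hyperbolic. -/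
open Set Filter Metric Real Topology intervalIntegral

noncomputable section

/-- The vector field of the system ẋ = y, ẏ = −x − Σ_{j=1}^{J} f_j(x) yʲ. -/
def polyVF (J : ℕ) (f : ℕ → ℝ → ℝ) : ℝ × ℝ → ℝ × ℝ :=
  fun p => (p.2, -p.1 - ∑ j ∈ Finset.Icc 1 J, f j p.1 * p.2 ^ j)

/-- The divergence of `polyVF J f`. -/
def polyDiv (J : ℕ) (f : ℕ → ℝ → ℝ) : ℝ × ℝ → ℝ :=
  fun p => -∑ j ∈ Finset.Icc 1 J, (j : ℝ) * f j p.1 * p.2 ^ (j - 1)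


theorem anti_per_const (h : ℝ → ℝ) (P : ℝ) (hP : 0 < P) (ha : Antitone h)
    (hp : ∀ t, h (t + P) = h t) : ∀ s t, h s = h t := by
  have hk : ∀ (k : ℕ) t, h (t + k * P) = h t := by
    intro k
    induction k with
    | zero => intro t; simp
    | succ k ih =>
      intro t
      have := hp (t + k * P)
      rw [ih] at this
      rw [← this]; congr 1; push_cast; ring
  have key : ∀ s t, s ≤ t → h s = h t := by
    intro s t hst
    apply le_antisymm _ (ha hst)
    obtain ⟨k, hk'⟩ := exists_nat_gt ((t - s) / P)
    rw [div_lt_iff₀ hP] at hk'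
    rw [← hk k s]
    exact ha (by linarith)
  intro s t
  rcases le_total s t with h' | h'
  · exact key s t h'
  · exact (key t s h').symm

theorem per_nat (h : ℝ → ℝ) (P c : ℝ) (hp : ∀ t, h (t + P) = h t + c) (k : ℕ) :
    ∀ t, h (t + k * P) = h t + k * c := by
  induction k with
  | zero => intro t; simp
  | succ k ih =>
    intro t
    have := hp (t + k * P)
    rw [ih] at this
    have e : t + ((k + 1 : ℕ) : ℝ) * P = t + k * P + P := by push_cast; ring
    rw [e, this]; push_cast; ring

theorem polar (x y g : ℝ → ℝ) (T : ℝ) (hT : 0 < T)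
    (hx : ∀ t, HasDerivAt x (y t) t) (hy : ∀ t, HasDerivAt y (- x t - y t * g t) t)
    (hg : Continuous g) (px : ∀ t, x (t + T) = x t) (py : ∀ t, y (t + T) = y t)
    (pg : ∀ t, g (t + T) = g t) (hr : ∀ t, 0 < x t ^ 2 + y t ^ 2)
    (hA : ∀ t, 0 < x t ^ 2 + y t ^ 2 + x t * y t * g t) :
    ∃ (τ u : ℝ → ℝ) (N : ℕ), 0 < N ∧ Function.Surjective τ ∧
      (∀ θ, x (τ θ) = exp (u θ) * cos θ) ∧ (∀ θ, y (τ θ) = - (exp (u θ) * sin θ)) ∧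
      (∀ θ, 0 < 1 - cos θ * sin θ * g (τ θ)) ∧
      (∀ θ, HasDerivAt u (- (sin θ ^ 2 * g (τ θ) / (1 - cos θ * sin θ * g (τ θ)))) θ) ∧
      (∀ θ, u (θ + N * (2 * π)) = u θ) := by
  have cx : Continuous x := continuous_iff_continuousAt.2 fun t => (hx t).continuousAt
  have cy : Continuous y := continuous_iff_continuousAt.2 fun t => (hy t).continuousAt
  set p : ℝ → ℝ := fun t => - (y t ^ 2 * g t) / (x t ^ 2 + y t ^ 2) with hpdef
  set q : ℝ → ℝ := fun t => (x t ^ 2 + y t ^ 2 + x t * y t * g t) / (x t ^ 2 + y t ^ 2) with hqdef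
  have cp : Continuous p := by
    apply Continuous.div (by fun_prop) (by fun_prop) (fun t => (hr t).ne')
  have cq : Continuous q := by
    apply Continuous.div (by fun_prop) (by fun_prop) (fun t => (hr t).ne')
  -- initial polar coordinates
  set z0 : ℂ := ⟨x 0, y 0⟩ with hz0
  have hz0ne : z0 ≠ 0 := by
    intro h
    have h1 := congrArg Complex.re h
    have h2 := congrArg Complex.im h
    simp [hz0] at h1 h2
    have := hr 0
    rw [h1, h2] at this
    norm_num at this
  set v : ℝ → ℝ := fun t => (Complex.log z0).re + ∫ s in (0:ℝ)..t, p s with hv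
  set ψ : ℝ → ℝ := fun t => - (Complex.log z0).im + ∫ s in (0:ℝ)..t, q s with hψ
  have dv : ∀ t, HasDerivAt v (p t) t := fun t =>
    (integral_hasDerivAt_right (cp.intervalIntegrable _ _)
      (cp.stronglyMeasurableAtFilter _ _) cp.continuousAt).const_add _
  have dψ : ∀ t, HasDerivAt ψ (q t) t := fun t =>
    (integral_hasDerivAt_right (cq.intervalIntegrable _ _)
      (cq.stronglyMeasurableAtFilter _ _) cq.continuousAt).const_add _
  have hexp0 : x 0 = exp (v 0) * cos (ψ 0) ∧ y 0 = - (exp (v 0) * sin (ψ 0)) := by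
    have h := Complex.exp_log hz0ne
    have h1 := congrArg Complex.re h
    have h2 := congrArg Complex.im h
    rw [Complex.exp_re] at h1
    rw [Complex.exp_im] at h2
    simp only [hv, hψ, integral_same, add_zero, Real.cos_neg, Real.sin_neg]
    constructor
    · rw [h1]
    · rw [mul_neg, neg_neg, h2]
  -- P = e^{-v}(x cos ψ - y sin ψ), Q = e^{-v}(x sin ψ + y cos ψ)
  have hP : ∀ t, exp (- v t) * (x t * cos (ψ t) - y t * sin (ψ t)) = 1 := by
    have hd : ∀ t, HasDerivAt (fun t => exp (- v t) * (x t * cos (ψ t) - y t * sin (ψ t))) 0 t := by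
      intro t
      have h := ((dv t).neg.exp).mul (((hx t).mul (dψ t).cos).sub ((hy t).mul (dψ t).sin))
      refine h.congr_deriv ?_
      have := (hr t).ne'
      simp only [hpdef, hqdef, Pi.mul_apply, Pi.sub_apply, Pi.neg_apply]
      field_simp
      ring
    intro t
    have := is_const_of_deriv_eq_zero (fun t => (hd t).differentiableAt) (fun t => (hd t).deriv) t 0
    rw [this, hexp0.1, hexp0.2]
    have e : exp (-v 0) * exp (v 0) = 1 := by rw [← exp_add]; simp
    linear_combination exp (-v 0) * exp (v 0) * (cos_sq_add_sin_sq (ψ 0)) + e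
  have hQ : ∀ t, exp (- v t) * (x t * sin (ψ t) + y t * cos (ψ t)) = 0 := by
    have hd : ∀ t, HasDerivAt (fun t => exp (- v t) * (x t * sin (ψ t) + y t * cos (ψ t))) 0 t := by
      intro t
      have h := ((dv t).neg.exp).mul (((hx t).mul (dψ t).sin).add ((hy t).mul (dψ t).cos))
      refine h.congr_deriv ?_
      have := (hr t).ne'
      simp only [hpdef, hqdef, Pi.mul_apply, Pi.add_apply, Pi.neg_apply]
      field_simp
      ring
    intro t
    have := is_const_of_deriv_eq_zero (fun t => (hd t).differentiableAt) (fun t => (hd t).deriv) t 0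
    rw [this, hexp0.1, hexp0.2]
    ring
  have hxe : ∀ t, x t = exp (v t) * cos (ψ t) := by
    intro t
    have e : exp (-v t) * exp (v t) = 1 := by rw [← exp_add]; simp
    linear_combination exp (v t) * cos (ψ t) * hP t + exp (v t) * sin (ψ t) * hQ t
      - x t * exp (-v t) * exp (v t) * cos_sq_add_sin_sq (ψ t) - x t * e
  have hye : ∀ t, y t = - (exp (v t) * sin (ψ t)) := by
    intro t
    have e : exp (-v t) * exp (v t) = 1 := by rw [← exp_add]; simp
    linear_combination - exp (v t) * sin (ψ t) * hP t + exp (v t) * cos (ψ t) * hQ t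
      - y t * exp (-v t) * exp (v t) * cos_sq_add_sin_sq (ψ t) - y t * e
  have hre : ∀ t, x t ^ 2 + y t ^ 2 = exp (v t) ^ 2 := by
    intro t
    rw [hxe, hye]
    linear_combination exp (v t) ^ 2 * cos_sq_add_sin_sq (ψ t)
  have hmono : StrictMono ψ := by
    apply strictMono_of_hasDerivAt_pos dψ
    intro t
    exact div_pos (hA t) (hr t)
  have hvT : ∀ t, v (t + T) = v t := by
    intro t
    have h1 := hre (t + T)
    rw [px, py, hre t] at h1
    have := (pow_left_inj₀ (exp_pos (v t)).le (exp_pos _).le two_ne_zero).1 h1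
    exact (exp_injective this).symm
  have hψc : ∀ t, ψ (t + T) - ψ t = ψ T - ψ 0 := by
    intro t
    have hd : ∀ t, HasDerivAt (fun t => ψ (t + T) - ψ t) 0 t := by
      intro t
      have h := ((dψ (t + T)).comp_add_const t T).sub (dψ t)
      refine h.congr_deriv ?_
      simp [hqdef, px, py, pg]
    have := is_const_of_deriv_eq_zero (fun t => (hd t).differentiableAt) (fun t => (hd t).deriv) t 0
    simpa using this
  obtain ⟨N, hN, hNe⟩ : ∃ N : ℕ, 0 < N ∧ ψ T - ψ 0 = N * (2 * π) := by
    have h1 := hxe (0 + T)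
    have h2 := hye (0 + T)
    rw [px, hvT, hxe 0] at h1
    rw [py, hvT, hye 0] at h2
    have e := exp_pos (v 0)
    have h1' : cos (ψ 0) = cos (ψ T) := by
      have := mul_left_cancel₀ e.ne' h1
      simpa using this
    have h2' : sin (ψ 0) = sin (ψ T) := by
      have := mul_left_cancel₀ e.ne' (neg_injective h2)
      simpa using this
    have h3 : cos (ψ T - ψ 0) = 1 := by
      rw [cos_sub, ← h1', ← h2']
      linear_combination cos_sq_add_sin_sq (ψ 0)
    obtain ⟨n, hn⟩ := (cos_eq_one_iff _).1 h3
    have hpos : 0 < ψ T - ψ 0 := sub_pos.2 (hmono hT)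
    have hnpos : 0 < n := by
      rw [← hn] at hpos
      have : (0:ℝ) < n := by
        by_contra hcon
        push Not at hcon
        nlinarith [pi_pos]
      exact_mod_cast this
    refine ⟨n.toNat, by omega, ?_⟩
    rw [← hn]
    have : ((n.toNat : ℤ) : ℝ) = n := by rw [Int.toNat_of_nonneg hnpos.le]
    rw [← this, Int.cast_natCast]
  have hψT : ∀ t, ψ (t + T) = ψ t + N * (2 * π) := fun t => by
    rw [← hNe, ← hψc t]; ring
  have cψ : Continuous ψ := continuous_iff_continuousAt.2 fun t => (dψ t).continuousAt
  have hcpos : (0:ℝ) < N * (2 * π) := by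
    have : (0:ℝ) < N := by exact_mod_cast hN
    have := pi_pos
    positivity
  have hsurj : Function.Surjective ψ := by
    intro c
    apply mem_range_of_exists_le_of_exists_ge cψ
    · obtain ⟨k, hk⟩ := exists_nat_gt ((ψ 0 - c) / (N * (2 * π)))
      rw [div_lt_iff₀ hcpos] at hk
      refine ⟨-(k * T), ?_⟩
      have := per_nat ψ T _ hψT k (-(k * T))
      rw [neg_add_cancel] at this
      linarith
    · obtain ⟨k, hk⟩ := exists_nat_gt ((c - ψ 0) / (N * (2 * π)))
      rw [div_lt_iff₀ hcpos] at hk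
      refine ⟨0 + (k * T), ?_⟩
      have := per_nat ψ T _ hψT k 0
      linarith
  set e := hmono.orderIsoOfSurjective ψ hsurj with he
  have heψ : ∀ t, e t = ψ t := fun t => rfl
  have hes : ∀ θ, ψ (e.symm θ) = θ := fun θ => e.apply_symm_apply θ
  have hr1 : ∀ θ, q (e.symm θ) = 1 - cos θ * sin θ * g (e.symm θ) := by
    intro θ
    have h1 := hre (e.symm θ)
    have h2 := exp_pos (v (e.symm θ))
    simp only [hqdef]
    rw [h1, hxe, hye, hes]
    field_simp
    ring
  refine ⟨e.symm, fun θ => v (e.symm θ), N, hN, e.symm.surjective, ?_, ?_, ?_, ?_, ?_⟩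
  · intro θ; rw [hxe, hes]
  · intro θ; rw [hye, hes]
  · intro θ
    rw [← hr1]
    exact div_pos (hA _) (hr _)
  · intro θ
    have hq : 0 < q (e.symm θ) := div_pos (hA _) (hr _)
    have h1 : HasDerivAt e.symm (q (e.symm θ))⁻¹ θ := by
      apply HasDerivAt.of_local_left_inverse (f := ψ) e.symm.continuous.continuousAt (dψ _) hq.ne'
      exact Eventually.of_forall hes
    have h2 := (dv (e.symm θ)).comp θ h1
    refine h2.congr_deriv ?_
    rw [hr1] at hq ⊢
    have hp' : p (e.symm θ) = - (sin θ ^ 2 * g (e.symm θ)) := by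
      have h1 := hre (e.symm θ)
      have h2 := exp_pos (v (e.symm θ))
      simp only [hpdef]
      rw [h1, hye, hes]
      field_simp
    rw [hp']
    ring
  · intro θ
    have : e.symm (θ + N * (2 * π)) = e.symm θ + T := by
      rw [OrderIso.symm_apply_eq, heψ, hψT, hes]
    simp only [this, hvT]

def phiF (J : ℕ) (f : ℕ → ℝ → ℝ) (p : ℝ × ℝ) : ℝ :=
  ∑ j ∈ Finset.Icc 1 J, f j p.1 * p.2 ^ (j - 1)

def nuF (J : ℕ) (f : ℕ → ℝ → ℝ) (p : ℝ × ℝ) : ℝ :=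
  ∑ j ∈ Finset.Icc 1 J, (p.1 * deriv (f j) p.1 + ((j : ℝ) - 1) * f j p.1) * p.2 ^ (j - 1)

theorem polyVF_eq (J : ℕ) (f : ℕ → ℝ → ℝ) (p : ℝ × ℝ) :
    polyVF J f p = (p.2, - p.1 - p.2 * phiF J f p) := by
  simp only [polyVF, phiF, Prod.mk.injEq, true_and, Finset.mul_sum]
  congr 1
  apply Finset.sum_congr rfl
  intro j hj
  obtain ⟨k, rfl⟩ : ∃ k, j = k + 1 := ⟨j - 1, by simp at hj; omega⟩
  simp; ring

theorem scale_mem {a b x k1 k2 k : ℝ} (h1 : exp k1 * x ∈ Ioo a b) (h2 : exp k2 * x ∈ Ioo a b)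
    (hk : k ∈ Icc k1 k2) : exp k * x ∈ Ioo a b := by
  have e1 := exp_le_exp.2 hk.1
  have e2 := exp_le_exp.2 hk.2
  rcases le_total 0 x with hx | hx
  · exact ⟨by nlinarith [h1.1, mul_le_mul_of_nonneg_right e1 hx],
      by nlinarith [h2.2, mul_le_mul_of_nonneg_right e2 hx]⟩
  · exact ⟨by nlinarith [h2.1, mul_le_mul_of_nonpos_right e2 hx],
      by nlinarith [h1.2, mul_le_mul_of_nonpos_right e1 hx]⟩

theorem phi_scale_deriv (a b : ℝ) (J : ℕ) (f : ℕ → ℝ → ℝ)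
    (hd : ∀ j ∈ Finset.Icc 1 J, ∀ x ∈ Ioo a b, HasDerivAt (f j) (deriv (f j) x) x)
    (x y k : ℝ) (hk : exp k * x ∈ Ioo a b) :
    HasDerivAt (fun k => phiF J f (exp k * x, exp k * y)) (nuF J f (exp k * x, exp k * y)) k := by
  unfold phiF nuF
  apply HasDerivAt.fun_sum
  intro j hj
  have h1 : HasDerivAt (fun k => exp k * x) (exp k * x) k := (hasDerivAt_exp k).mul_const x
  have h2 : HasDerivAt (fun k => exp k * y) (exp k * y) k := (hasDerivAt_exp k).mul_const y
  have h3 := ((hd j hj _ hk).comp k h1).mul (h2.pow (j - 1))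
  refine h3.congr_deriv ?_
  have hj1 : ((j - 1 : ℕ) : ℝ) = (j : ℝ) - 1 := by
    rw [Nat.cast_sub (Finset.mem_Icc.1 hj).1]; simp
  simp only [hj1, Function.comp, Pi.pow_apply]
  rcases Nat.eq_zero_or_pos (j - 1) with h0 | h0
  · have : (j : ℝ) - 1 = 0 := by rw [← hj1, h0]; simp
    rw [h0, this]; simp; ring
  · obtain ⟨i, hi⟩ : ∃ i, j - 1 = i + 1 := ⟨j - 1 - 1, by omega⟩
    rw [hi]; simp only [add_tsub_cancel_right]; ring

theorem phi_deriv (a b : ℝ) (J : ℕ) (f : ℕ → ℝ → ℝ)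
    (hd : ∀ j ∈ Finset.Icc 1 J, ∀ x ∈ Ioo a b, HasDerivAt (f j) (deriv (f j) x) x)
    (x y : ℝ → ℝ) (x' y' t : ℝ) (hx : HasDerivAt x x' t) (hy : HasDerivAt y y' t)
    (ht : x t ∈ Ioo a b) :
    HasDerivAt (fun s => phiF J f (x s, y s))
      (∑ j ∈ Finset.Icc 1 J, (deriv (f j) (x t) * x' * y t ^ (j - 1) +
        f j (x t) * (((j:ℝ) - 1) * y t ^ (j - 1 - 1) * y'))) t := by
  unfold phiF
  apply HasDerivAt.fun_sum
  intro j hj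
  have h3 := ((hd j hj _ ht).comp t hx).mul (hy.pow (j - 1))
  refine h3.congr_deriv ?_
  have hj1 : ((j - 1 : ℕ) : ℝ) = (j : ℝ) - 1 := by
    rw [Nat.cast_sub (Finset.mem_Icc.1 hj).1]; simp
  simp only [hj1, Function.comp, Pi.pow_apply]

/-- `x y dφ = x y (y φ_x + ẏ φ_y)` rewritten. -/
theorem A_alg (J : ℕ) (f : ℕ → ℝ → ℝ) (x y : ℝ) :
    2 * x * y + 2 * y * (- x - y * phiF J f (x, y)) +
      ((y * y + x * (- x - y * phiF J f (x, y))) * phiF J f (x, y) +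
      x * y * ∑ j ∈ Finset.Icc 1 J, (deriv (f j) x * y * y ^ (j - 1) +
        f j x * (((j:ℝ) - 1) * y ^ (j - 1 - 1) * (- x - y * phiF J f (x, y))))) =
    polyDiv J f (x, y) * (x ^ 2 + y ^ 2 + x * y * phiF J f (x, y)) + y ^ 2 * nuF J f (x, y) := by
  set S := ∑ j ∈ Finset.Icc 1 J, deriv (f j) x * y ^ (j - 1) with hS
  set R := ∑ j ∈ Finset.Icc 1 J, f j x * (((j:ℝ) - 1) * y ^ (j - 1)) with hR
  have e1 : y * (∑ j ∈ Finset.Icc 1 J, (deriv (f j) x * y * y ^ (j - 1) +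
        f j x * (((j:ℝ) - 1) * y ^ (j - 1 - 1) * (- x - y * phiF J f (x, y))))) =
      y ^ 2 * S + (- x - y * phiF J f (x, y)) * R := by
    rw [hS, hR, Finset.mul_sum, Finset.mul_sum, Finset.mul_sum, ← Finset.sum_add_distrib]
    apply Finset.sum_congr rfl
    intro j hj
    rcases Nat.eq_zero_or_pos (j - 1) with h0 | h0
    · have hj1 : ((j - 1 : ℕ) : ℝ) = (j : ℝ) - 1 := by
        rw [Nat.cast_sub (Finset.mem_Icc.1 hj).1]; simp
      have : (j : ℝ) - 1 = 0 := by rw [← hj1, h0]; simp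
      rw [h0, this]; simp; ring
    · obtain ⟨i, hi⟩ : ∃ i, j - 1 = i + 1 := ⟨j - 1 - 1, by omega⟩
      rw [hi]; simp only [add_tsub_cancel_right]; ring
  have e2 : nuF J f (x, y) = x * S + R := by
    rw [hS, hR, Finset.mul_sum, ← Finset.sum_add_distrib]
    unfold nuF
    apply Finset.sum_congr rfl
    intro j hj
    ring
  have e3 : polyDiv J f (x, y) = - (phiF J f (x, y) + R) := by
    rw [hR]
    unfold polyDiv phiF
    rw [← Finset.sum_add_distrib]
    congr 1
    apply Finset.sum_congr rfl
    intro j hj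
    simp only; ring
  rw [e2, e3]
  linear_combination x * e1

theorem nu_nonneg_term (a b : ℝ) (J : ℕ) (f : ℕ → ℝ → ℝ)
    (heven : ∀ j ∈ Finset.Icc 1 J, Even j → ∀ x : ℝ, f j x = 0)
    (hodd : ∀ j ∈ Finset.Icc 1 J, Odd j → ∀ x ∈ Ioo a b,
      x * deriv (f j) x + ((j : ℝ) - 1) * f j x ≥ 0)
    (x y : ℝ) (hx : x ∈ Ioo a b) (j : ℕ) (hj : j ∈ Finset.Icc 1 J) :
    0 ≤ (x * deriv (f j) x + ((j : ℝ) - 1) * f j x) * y ^ (j - 1) := by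
  rcases Nat.even_or_odd j with h | h
  · have : f j = fun _ => 0 := funext (heven j hj h)
    rw [this]; simp
  · have : Even (j - 1) := by
      obtain ⟨k, rfl⟩ := h
      simp
    exact mul_nonneg (hodd j hj h x hx) (this.pow_nonneg y)

theorem nu_nonneg (a b : ℝ) (J : ℕ) (f : ℕ → ℝ → ℝ)
    (heven : ∀ j ∈ Finset.Icc 1 J, Even j → ∀ x : ℝ, f j x = 0)
    (hodd : ∀ j ∈ Finset.Icc 1 J, Odd j → ∀ x ∈ Ioo a b,
      x * deriv (f j) x + ((j : ℝ) - 1) * f j x ≥ 0)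
    (x y : ℝ) (hx : x ∈ Ioo a b) : 0 ≤ nuF J f (x, y) :=
  Finset.sum_nonneg fun j hj => nu_nonneg_term a b J f heven hodd x y hx j hj

theorem nu_pos (a b : ℝ) (J : ℕ) (f : ℕ → ℝ → ℝ)
    (heven : ∀ j ∈ Finset.Icc 1 J, Even j → ∀ x : ℝ, f j x = 0)
    (hodd : ∀ j ∈ Finset.Icc 1 J, Odd j → ∀ x ∈ Ioo a b,
      x * deriv (f j) x + ((j : ℝ) - 1) * f j x ≥ 0)
    (x y : ℝ) (hx : x ∈ Ioo a b) (hy : y ≠ 0)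
    (h : ∃ j ∈ Finset.Icc 1 J, x * deriv (f j) x + ((j : ℝ) - 1) * f j x ≠ 0) :
    0 < nuF J f (x, y) := by
  obtain ⟨j, hj, hne⟩ := h
  apply Finset.sum_pos' (fun j hj => nu_nonneg_term a b J f heven hodd x y hx j hj)
  exact ⟨j, hj, lt_of_le_of_ne (nu_nonneg_term a b J f heven hodd x y hx j hj)
    (mul_ne_zero hne (pow_ne_zero _ hy)).symm⟩

/-- analytic facts along a cycle -/
theorem cycle_facts (a b : ℝ) (J : ℕ) (f : ℕ → ℝ → ℝ)
    (hf : ∀ j ∈ Finset.Icc 1 J, ContDiffOn ℝ 1 (f j) (Ioo a b))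
    (heven : ∀ j ∈ Finset.Icc 1 J, Even j → ∀ x : ℝ, f j x = 0)
    (hodd : ∀ j ∈ Finset.Icc 1 J, Odd j → ∀ x ∈ Ioo a b,
      x * deriv (f j) x + ((j : ℝ) - 1) * f j x ≥ 0)
    (hd : ∀ j ∈ Finset.Icc 1 J, ∀ x ∈ Ioo a b, HasDerivAt (f j) (deriv (f j) x) x)
    (hseq : ∃ xs : ℕ → ℝ, (∀ m, xs m ∈ Ioo a b) ∧ Tendsto xs atTop (𝓝 0) ∧
      ∀ m, ∃ j ∈ Finset.Icc 1 J,
        xs m * deriv (f j) (xs m) + ((j : ℝ) - 1) * f j (xs m) ≠ 0)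
    (γ : ℝ → ℝ × ℝ) (T : ℝ) (hc : IsCycle (polyVF J f) γ T)
    (hstrip : range γ ⊆ Ioo a b ×ˢ (univ : Set ℝ)) :
    (∫ t in (0:ℝ)..T, polyDiv J f (γ t)) ≠ 0 ∧
    (∃ t, (γ t).2 ≠ 0 ∧ 0 < nuF J f (γ t)) ∧
    ∃ (τ u : ℝ → ℝ) (N : ℕ), 0 < N ∧ Function.Surjective τ ∧
      (∀ θ, γ (τ θ) = (exp (u θ) * cos θ, - (exp (u θ) * sin θ))) ∧
      (∀ θ, 0 < 1 - cos θ * sin θ * phiF J f (γ (τ θ))) ∧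
      (∀ θ, HasDerivAt u (- (sin θ ^ 2 * phiF J f (γ (τ θ)) /
        (1 - cos θ * sin θ * phiF J f (γ (τ θ))))) θ) ∧
      (∀ θ, u (θ + N * (2 * π)) = u θ) := by
  obtain ⟨hsol, hT, hper, hnc⟩ := hc
  set x : ℝ → ℝ := fun t => (γ t).1 with hxdef
  set y : ℝ → ℝ := fun t => (γ t).2 with hydef
  set g : ℝ → ℝ := fun t => phiF J f (γ t) with hgdef
  have hI : ∀ t, x t ∈ Ioo a b := fun t => (hstrip ⟨t, rfl⟩).1
  have hx : ∀ t, HasDerivAt x (y t) t := by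
    intro t
    have := (hsol t).fst
    rwa [polyVF_eq] at this
  have hy : ∀ t, HasDerivAt y (- x t - y t * g t) t := by
    intro t
    have := (hsol t).snd
    rwa [polyVF_eq] at this
  have cx : Continuous x := continuous_iff_continuousAt.2 fun t => (hx t).continuousAt
  have cy : Continuous y := continuous_iff_continuousAt.2 fun t => (hy t).continuousAt
  have cf : ∀ j ∈ Finset.Icc 1 J, Continuous fun t => f j (x t) := by
    intro j hj
    exact (hf j hj).continuousOn.comp_continuous cx hI
  have cdf : ∀ j ∈ Finset.Icc 1 J, Continuous fun t => deriv (f j) (x t) := by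
    intro j hj
    exact ((hf j hj).continuousOn_deriv_of_isOpen isOpen_Ioo le_rfl).comp_continuous cx hI
  have cg : Continuous g := by
    apply continuous_finsetSum
    intro j hj
    exact (cf j hj).mul (cy.pow _)
  have cnu : Continuous fun t => nuF J f (γ t) := by
    apply continuous_finsetSum
    intro j hj
    exact ((cx.mul (cdf j hj)).add (continuous_const.mul (cf j hj))).mul (cy.pow _)
  have cdiv : Continuous fun t => polyDiv J f (γ t) := by
    apply Continuous.neg
    apply continuous_finsetSum
    intro j hj
    exact (continuous_const.mul (cf j hj)).mul (cy.pow _)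
  have px : ∀ t, x (t + T) = x t := fun t => by simp only [hxdef, hper]
  have py : ∀ t, y (t + T) = y t := fun t => by simp only [hydef, hper]
  have pg : ∀ t, g (t + T) = g t := fun t => by simp only [hgdef, hper]
  have hnu : ∀ t, 0 ≤ nuF J f (γ t) := fun t =>
    nu_nonneg a b J f heven hodd (x t) (y t) (hI t)
  have later : ∀ t t0, ∃ t', t0 ≤ t' ∧ γ t' = γ t := by
    intro t t0
    obtain ⟨k, hk⟩ := exists_nat_gt ((t0 - t) / T)
    rw [div_lt_iff₀ hT] at hk
    refine ⟨t + k * T, by linarith, ?_⟩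
    have := (show Function.Periodic γ T from hper).nat_mul k
    exact this t
  -- nonvanishing
  have hr : ∀ t, 0 < x t ^ 2 + y t ^ 2 := by
    by_contra hcon
    push Not at hcon
    obtain ⟨t0, ht0⟩ := hcon
    have dG : ∀ t, HasDerivAt (fun t => ∫ s in (0:ℝ)..t, |g s|) |g t| t := fun t =>
      integral_hasDerivAt_right (cg.abs.intervalIntegrable _ _)
        (cg.abs.stronglyMeasurableAtFilter _ _) cg.abs.continuousAt
    set G : ℝ → ℝ := fun t => ∫ s in (0:ℝ)..t, |g s| with hG
    have dh : ∀ t, HasDerivAt (fun t => (x t ^ 2 + y t ^ 2) * exp (-(2 * G t)))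
        ((2 * x t * y t + 2 * y t * (- x t - y t * g t)) * exp (-(2 * G t)) +
          (x t ^ 2 + y t ^ 2) * (exp (-(2 * G t)) * (-(2 * |g t|)))) t := by
      intro t
      have h := (((hx t).pow 2).add ((hy t).pow 2)).mul (((dG t).const_mul 2).neg.exp)
      refine h.congr_deriv ?_
      simp
    have hanti : Antitone (fun t => (x t ^ 2 + y t ^ 2) * exp (-(2 * G t))) := by
      apply antitone_of_hasDerivAt_nonpos dh
      intro t
      have e := exp_pos (-(2 * G t))
      have : (2 * x t * y t + 2 * y t * (- x t - y t * g t)) +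
          (x t ^ 2 + y t ^ 2) * (-(2 * |g t|)) ≤ 0 := by
        have h1 : 0 ≤ y t ^ 2 * (g t + |g t|) :=
          mul_nonneg (sq_nonneg _) (by linarith [neg_abs_le (g t)])
        have h2 : 0 ≤ x t ^ 2 * |g t| := by positivity
        linarith
      have := mul_nonpos_of_nonpos_of_nonneg this e.le
      simp only [Pi.zero_apply]
      linarith
    have hzero : ∀ t, γ t = 0 := by
      intro t
      obtain ⟨t', ht', he⟩ := later t t0
      have h1 := hanti ht'
      simp only at h1
      have e0 := exp_pos (-(2 * G t0))
      have e1 := exp_pos (-(2 * G t'))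
      have h2 : (x t' ^ 2 + y t' ^ 2) * exp (-(2 * G t')) ≤ 0 :=
        h1.trans (mul_nonpos_of_nonpos_of_nonneg ht0 e0.le)
      have h3 : x t' ^ 2 + y t' ^ 2 ≤ 0 := by
        by_contra hc
        push Not at hc
        linarith [mul_pos hc e1]
      have hx0 : x t' = 0 := by nlinarith [sq_nonneg (x t'), sq_nonneg (y t')]
      have hy0 : y t' = 0 := by nlinarith [sq_nonneg (x t'), sq_nonneg (y t')]
      rw [← he]
      exact Prod.ext hx0 hy0
    obtain ⟨t1, t2, h12⟩ := hnc
    exact h12 (by rw [hzero, hzero])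
  -- A
  set A : ℝ → ℝ := fun t => x t ^ 2 + y t ^ 2 + x t * y t * g t with hAdef
  have dA : ∀ t, HasDerivAt A (polyDiv J f (γ t) * A t + y t ^ 2 * nuF J f (γ t)) t := by
    intro t
    have hg' := phi_deriv a b J f hd x y _ _ t (hx t) (hy t) (hI t)
    have h := (((hx t).pow 2).add ((hy t).pow 2)).add (((hx t).mul (hy t)).mul hg')
    refine h.congr_deriv ?_
    have := A_alg J f (x t) (y t)
    simp only [hAdef, hgdef]
    change _ = polyDiv J f (x t, y t) * (x t ^ 2 + y t ^ 2 + x t * y t * phiF J f (x t, y t)) + y t ^ 2 * nuF J f (x t, y t)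
    rw [← this]
    simp only [hxdef, hydef, Prod.mk.eta, Pi.mul_apply]
    norm_num
  have hy0 : ∃ t0, y t0 = 0 := by
    obtain ⟨c, _, hc⟩ := exists_hasDerivAt_eq_zero (f := x) (f' := y) hT cx.continuousOn
      (by rw [← px 0, zero_add]) (fun t _ => hx t)
    exact ⟨c, hc⟩
  have hA : ∀ t, 0 < A t := by
    obtain ⟨t0, ht0⟩ := hy0
    have hA0 : 0 < A t0 := by
      have := hr t0
      simp only [hAdef]
      rw [ht0] at this ⊢
      simpa using this
    have dD : ∀ t, HasDerivAt (fun t => ∫ s in (0:ℝ)..t, polyDiv J f (γ s)) (polyDiv J f (γ t)) t :=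
      fun t => integral_hasDerivAt_right (cdiv.intervalIntegrable _ _)
        (cdiv.stronglyMeasurableAtFilter _ _) cdiv.continuousAt
    set D : ℝ → ℝ := fun t => ∫ s in (0:ℝ)..t, polyDiv J f (γ s) with hD
    have hmono : Monotone (fun t => A t * exp (- D t)) := by
      apply monotone_of_hasDerivAt_nonneg (fun t => (dA t).mul (dD t).neg.exp)
      intro t
      have e := exp_pos (-D t)
      have := mul_nonneg (mul_nonneg (sq_nonneg (y t)) (hnu t)) e.le
      simp only [Pi.zero_apply, Pi.neg_apply]
      linarith
    intro t
    obtain ⟨t', ht', he⟩ := later t t0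
    have h1 := hmono ht'
    simp only at h1
    have e0 := exp_pos (-D t0)
    have e1 := exp_pos (-D t')
    have h2 : A t = A t' := by simp only [hAdef, hxdef, hydef, hgdef, he]
    rw [h2]
    exact pos_of_mul_pos_left ((mul_pos hA0 e0).trans_le h1) e1.le
  obtain ⟨τ, u, N, hN, hτ, hxτ, hyτ, hpos, hu, hup⟩ := polar x y g T hT hx hy cg px py pg hr hA
  have hgood : ∃ t, (γ t).2 ≠ 0 ∧ 0 < nuF J f (γ t) := by
    set s := τ (-(π/2)) with hs
    have hxs : x s = 0 := by rw [hxτ]; simp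
    have hys : 0 < y s := by rw [hyτ]; simp [exp_pos]
    have hev : ∀ᶠ t in 𝓝 s, 0 < y t := cy.continuousAt.eventually_const_lt hys
    obtain ⟨ε, hε, hball⟩ := Metric.eventually_nhds_iff.1 hev
    have hin : ∀ t ∈ Icc (s - ε / 2) (s + ε / 2), 0 < y t := by
      intro t ht
      apply hball
      rw [Real.dist_eq, abs_lt]
      constructor <;> linarith [ht.1, ht.2]
    have hsm : StrictMonoOn x (Icc (s - ε / 2) (s + ε / 2)) := by
      apply strictMonoOn_of_deriv_pos (convex_Icc _ _) cx.continuousOn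
      intro t ht
      rw [(hx t).deriv]
      exact hin t (interior_subset ht)
    have h1 : x (s - ε / 2) < 0 := by
      rw [← hxs]
      exact hsm ⟨by linarith, by linarith⟩ ⟨by linarith, by linarith⟩ (by linarith)
    have h2 : 0 < x (s + ε / 2) := by
      rw [← hxs]
      exact hsm ⟨by linarith, by linarith⟩ ⟨by linarith, by linarith⟩ (by linarith)
    obtain ⟨xs, hxsI, hxs0, hxsne⟩ := hseq
    obtain ⟨m, hm⟩ := (hxs0.eventually (Icc_mem_nhds h1 h2)).exists
    obtain ⟨t, ht, hxt⟩ := intermediate_value_Icc (by linarith : s - ε/2 ≤ s + ε/2) cx.continuousOn hm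
    refine ⟨t, (hin t ht).ne', ?_⟩
    have := nu_pos a b J f heven hodd (x t) (y t) (hI t) (hin t ht).ne' (by rw [hxt]; exact hxsne m)
    exact this
  refine ⟨?_, hgood, τ, u, N, hN, hτ, ?_, hpos, hu, hup⟩
  · have cA : Continuous A := continuous_iff_continuousAt.2 fun t => (dA t).continuousAt
    have cq : Continuous fun t => y t ^ 2 * nuF J f (γ t) / A t :=
      ((cy.pow 2).mul cnu).div cA (fun t => (hA t).ne')
    have hint : ∫ t in (0:ℝ)..T, (polyDiv J f (γ t) + y t ^ 2 * nuF J f (γ t) / A t) = 0 := by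
      rw [integral_eq_sub_of_hasDerivAt (f := fun t => Real.log (A t))]
      · have : A T = A 0 := by
          have h1 := px 0
          have h2 := py 0
          have h3 := pg 0
          rw [zero_add] at h1 h2 h3
          simp only [hAdef, h1, h2, h3]
        simp [this]
      · intro t _
        refine ((dA t).log (hA t).ne').congr_deriv ?_
        have := (hA t).ne'
        field_simp
      · exact (cdiv.add cq).intervalIntegrable _ _
    rw [integral_add (cdiv.intervalIntegrable _ _) (cq.intervalIntegrable _ _)] at hint
    have hp : 0 < ∫ t in (0:ℝ)..T, y t ^ 2 * nuF J f (γ t) / A t := by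
      apply intervalIntegral.integral_pos hT cq.continuousOn
      · intro t _
        exact div_nonneg (mul_nonneg (sq_nonneg _) (hnu t)) (hA t).le
      · obtain ⟨t, ht, ht'⟩ := hgood
        obtain ⟨c, hc, hce⟩ := (show Function.Periodic γ T from hper).exists_mem_Ico₀ hT t
        refine ⟨c, ⟨hc.1, hc.2.le⟩, ?_⟩
        rw [hce] at ht ht'
        exact div_pos (mul_pos (by positivity) ht') (hA c)
    intro h0
    rw [h0] at hint
    linarith
  · intro θ
    exact Prod.ext (hxτ θ) (hyτ θ)

theorem mono_phi (a b : ℝ) (J : ℕ) (f : ℕ → ℝ → ℝ)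
    (heven : ∀ j ∈ Finset.Icc 1 J, Even j → ∀ x : ℝ, f j x = 0)
    (hodd : ∀ j ∈ Finset.Icc 1 J, Odd j → ∀ x ∈ Ioo a b,
      x * deriv (f j) x + ((j : ℝ) - 1) * f j x ≥ 0)
    (hd : ∀ j ∈ Finset.Icc 1 J, ∀ x ∈ Ioo a b, HasDerivAt (f j) (deriv (f j) x) x)
    (x y k1 k2 : ℝ) (h1 : exp k1 * x ∈ Ioo a b) (h2 : exp k2 * x ∈ Ioo a b) :
    MonotoneOn (fun k => phiF J f (exp k * x, exp k * y)) (Icc k1 k2) := by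
  have hD : ∀ k ∈ Icc k1 k2, HasDerivAt (fun k => phiF J f (exp k * x, exp k * y))
      (nuF J f (exp k * x, exp k * y)) k := fun k hk =>
    phi_scale_deriv a b J f hd x y k (scale_mem h1 h2 hk)
  apply monotoneOn_of_deriv_nonneg (convex_Icc _ _)
  · exact fun k hk => (hD k hk).continuousAt.continuousWithinAt
  · exact fun k hk => (hD k (interior_subset hk)).differentiableAt.differentiableWithinAt
  · intro k hk
    rw [(hD k (interior_subset hk)).deriv]
    exact nu_nonneg a b J f heven hodd _ _ (scale_mem h1 h2 (interior_subset hk))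

/-- a monotone function on a nontrivial interval with equal end values has zero derivative at an end. -/
theorem const_deriv (h : ℝ → ℝ) (k1 k2 k d : ℝ) (h12 : k1 < k2) (hm : MonotoneOn h (Icc k1 k2))
    (he : h k1 = h k2) (hk : k ∈ Icc k1 k2) (hd : HasDerivAt h d k) : d = 0 := by
  have hc : ∀ s ∈ Icc k1 k2, h s = h k1 := by
    intro s hs
    apply le_antisymm
    · rw [he]; exact hm hs ⟨h12.le, le_rfl⟩ hs.2
    · exact hm ⟨le_rfl, h12.le⟩ hs hs.1
  have h1 : HasDerivWithinAt h 0 (Icc k1 k2) k :=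
    (hasDerivWithinAt_const k (Icc k1 k2) (h k1)).congr hc (hc k hk)
  exact (uniqueDiffOn_Icc h12 k hk).eq_deriv _ hd.hasDerivWithinAt h1

theorem uniq_s3 (a b : ℝ) (J : ℕ) (f : ℕ → ℝ → ℝ)
    (hf : ∀ j ∈ Finset.Icc 1 J, ContDiffOn ℝ 1 (f j) (Ioo a b))
    (heven : ∀ j ∈ Finset.Icc 1 J, Even j → ∀ x : ℝ, f j x = 0)
    (hodd : ∀ j ∈ Finset.Icc 1 J, Odd j → ∀ x ∈ Ioo a b,
      x * deriv (f j) x + ((j : ℝ) - 1) * f j x ≥ 0)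
    (hd : ∀ j ∈ Finset.Icc 1 J, ∀ x ∈ Ioo a b, HasDerivAt (f j) (deriv (f j) x) x)
    (hseq : ∃ xs : ℕ → ℝ, (∀ m, xs m ∈ Ioo a b) ∧ Tendsto xs atTop (𝓝 0) ∧
      ∀ m, ∃ j ∈ Finset.Icc 1 J,
        xs m * deriv (f j) (xs m) + ((j : ℝ) - 1) * f j (xs m) ≠ 0)
    (γ₁ : ℝ → ℝ × ℝ) (T₁ : ℝ) (γ₂ : ℝ → ℝ × ℝ) (T₂ : ℝ)
    (hc1 : IsCycle (polyVF J f) γ₁ T₁) (hs1 : range γ₁ ⊆ Ioo a b ×ˢ (univ : Set ℝ))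
    (hc2 : IsCycle (polyVF J f) γ₂ T₂) (hs2 : range γ₂ ⊆ Ioo a b ×ˢ (univ : Set ℝ)) :
    range γ₁ = range γ₂ := by
  obtain ⟨-, ⟨t1, hyt1, hnt1⟩, τ₁, u₁, N₁, hN1, hτ1, he1, hp1, hu1, hup1⟩ :=
    cycle_facts a b J f hf heven hodd hd hseq γ₁ T₁ hc1 hs1
  obtain ⟨-, -, τ₂, u₂, N₂, hN2, hτ2, he2, hp2, hu2, hup2⟩ :=
    cycle_facts a b J f hf heven hodd hd hseq γ₂ T₂ hc2 hs2
  set g₁ : ℝ → ℝ := fun θ => phiF J f (γ₁ (τ₁ θ)) with hg1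
  set g₂ : ℝ → ℝ := fun θ => phiF J f (γ₂ (τ₂ θ)) with hg2
  have hI1 : ∀ θ, exp (u₁ θ) * cos θ ∈ Ioo a b := by
    intro θ
    have := (hs1 ⟨τ₁ θ, rfl⟩).1
    rwa [he1] at this
  have hI2 : ∀ θ, exp (u₂ θ) * cos θ ∈ Ioo a b := by
    intro θ
    have := (hs2 ⟨τ₂ θ, rfl⟩).1
    rwa [he2] at this
  set H : ℝ → ℝ → ℝ := fun θ k => phiF J f (exp k * cos θ, exp k * (- sin θ)) with hH
  have hH1 : ∀ θ, g₁ θ = H θ (u₁ θ) := by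
    intro θ; simp only [hg1, hH, he1]; congr 2; ring
  have hH2 : ∀ θ, g₂ θ = H θ (u₂ θ) := by
    intro θ; simp only [hg2, hH, he2]; congr 2; ring
  have hM : ∀ θ, 0 ≤ (u₂ θ - u₁ θ) * (g₂ θ - g₁ θ) := by
    intro θ
    rw [hH1, hH2]
    rcases le_total (u₁ θ) (u₂ θ) with h | h
    · have := mono_phi a b J f heven hodd hd (cos θ) (- sin θ) _ _ (hI1 θ) (hI2 θ)
        ⟨le_rfl, h⟩ ⟨h, le_rfl⟩ h
      exact mul_nonneg (by linarith) (sub_nonneg.2 this)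
    · have := mono_phi a b J f heven hodd hd (cos θ) (- sin θ) _ _ (hI2 θ) (hI1 θ)
        ⟨le_rfl, h⟩ ⟨h, le_rfl⟩ h
      exact mul_nonneg_of_nonpos_of_nonpos (by linarith) (sub_nonpos.2 this)
  have hw : ∀ θ, HasDerivAt (fun θ => (u₂ θ - u₁ θ) ^ 2)
      (- (2 * sin θ ^ 2 * ((u₂ θ - u₁ θ) * (g₂ θ - g₁ θ)) /
        ((1 - cos θ * sin θ * g₂ θ) * (1 - cos θ * sin θ * g₁ θ)))) θ := by
    intro θ
    refine (((hu2 θ).sub (hu1 θ)).pow 2).congr_deriv ?_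
    have e1 : 1 - cos θ * sin θ * g₁ θ ≠ 0 := (hp1 θ).ne'
    have e2 : 1 - cos θ * sin θ * g₂ θ ≠ 0 := (hp2 θ).ne'
    change ((2:ℕ):ℝ) * (u₂ θ - u₁ θ) ^ (2 - 1) * (- (sin θ ^ 2 * g₂ θ / (1 - cos θ * sin θ * g₂ θ)) -
      - (sin θ ^ 2 * g₁ θ / (1 - cos θ * sin θ * g₁ θ))) = _
    rw [neg_sub_neg, div_sub_div _ _ e1 e2, mul_comm (1 - cos θ * sin θ * g₂ θ), ← mul_div_assoc,
      ← neg_div]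
    congr 1
    norm_num
    ring
  have hanti : Antitone (fun θ => (u₂ θ - u₁ θ) ^ 2) := by
    apply antitone_of_hasDerivAt_nonpos hw
    intro θ
    have h1 : 0 < 1 - cos θ * sin θ * g₁ θ := hp1 θ
    have h2 : 0 < 1 - cos θ * sin θ * g₂ θ := hp2 θ
    simp only [Pi.zero_apply, Left.neg_nonpos_iff]
    exact div_nonneg (mul_nonneg (by positivity) (hM θ)) (mul_pos h2 h1).le
  have hconst := anti_per_const _ (N₁ * N₂ * (2 * π))
    (by have := pi_pos; positivity) hanti (by
      intro θ
      have q1 := per_nat u₁ (N₁ * (2 * π)) 0 (by simpa using hup1) N₂ θ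
      have q2 := per_nat u₂ (N₂ * (2 * π)) 0 (by simpa using hup2) N₁ θ
      have r1 : u₁ (θ + N₁ * N₂ * (2 * π)) = u₁ θ := by
        rw [show θ + N₁ * N₂ * (2 * π) = θ + N₂ * (N₁ * (2 * π)) by ring, q1]; ring
      have r2 : u₂ (θ + N₁ * N₂ * (2 * π)) = u₂ θ := by
        rw [show θ + N₁ * N₂ * (2 * π) = θ + N₁ * (N₂ * (2 * π)) by ring, q2]; ring
      simp only [r1, r2])
  obtain ⟨θ₀, hθ₀⟩ := hτ1 t1
  by_cases hz : u₂ θ₀ - u₁ θ₀ = 0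
  · have hall : ∀ θ, γ₁ (τ₁ θ) = γ₂ (τ₂ θ) := by
      intro θ
      have := hconst θ θ₀
      rw [hz] at this
      have h0 : u₂ θ - u₁ θ = 0 := by
        apply pow_eq_zero_iff (two_ne_zero) |>.1
        rw [this]; norm_num
      have : u₂ θ = u₁ θ := by linarith
      rw [he1, he2, this]
    rw [← hτ1.range_comp γ₁, ← hτ2.range_comp γ₂]
    congr 1
    exact funext hall
  · exfalso
    have hd0 : HasDerivAt (fun θ => (u₂ θ - u₁ θ) ^ 2) 0 θ₀ := by
      have : (fun θ => (u₂ θ - u₁ θ) ^ 2) = fun _ => (u₂ θ₀ - u₁ θ₀) ^ 2 :=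
        funext fun θ => hconst θ θ₀
      rw [this]
      exact hasDerivAt_const _ _
    have h0 := (hw θ₀).unique hd0
    have e1 : 1 - cos θ₀ * sin θ₀ * g₁ θ₀ ≠ 0 := (hp1 θ₀).ne'
    have e2 : 1 - cos θ₀ * sin θ₀ * g₂ θ₀ ≠ 0 := (hp2 θ₀).ne'
    have hsin : sin θ₀ ≠ 0 := by
      intro h
      apply hyt1
      rw [← hθ₀, he1, h]; simp
    have hgeq : g₂ θ₀ = g₁ θ₀ := by
      by_contra hne
      have hne' := sub_ne_zero.2 hne
      have := neg_eq_zero.1 h0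
      revert this
      exact div_ne_zero (mul_ne_zero (by positivity) (mul_ne_zero hz hne')) (mul_ne_zero e2 e1)
    rw [hH1, hH2] at hgeq
    have hdd := phi_scale_deriv a b J f hd (cos θ₀) (- sin θ₀) (u₁ θ₀) (hI1 θ₀)
    have hn0 : nuF J f (exp (u₁ θ₀) * cos θ₀, exp (u₁ θ₀) * (- sin θ₀)) = 0 := by
      rcases lt_or_gt_of_ne (sub_ne_zero.1 hz) with h | h
      · exact const_deriv _ _ _ _ _ h
          (mono_phi a b J f heven hodd hd (cos θ₀) (- sin θ₀) _ _ (hI2 θ₀) (hI1 θ₀)) hgeq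
          ⟨h.le, le_rfl⟩ hdd
      · exact const_deriv _ _ _ _ _ h
          (mono_phi a b J f heven hodd hd (cos θ₀) (- sin θ₀) _ _ (hI1 θ₀) (hI2 θ₀)) hgeq.symm
          ⟨le_rfl, h.le⟩ hdd
    rw [← hθ₀, he1] at hnt1
    rw [mul_neg] at hn0
    linarith

/-- if `f_j ≡ 0` for even `j`, `x f_j'(x) + (j−1) f_j(x) ≥ 0` on
`(a,b)` for odd `j`, and condition (Seq) holds, then the system
ẋ = y, ẏ = −x − Σ_j f_j(x) yʲ has at most one limit cycle in `(a,b) × ℝ`,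
which is hyperbolic. -/
theorem statement3 (a b : ℝ) (ha : a < 0) (hb : 0 < b) (J : ℕ)
    (f : ℕ → ℝ → ℝ)
    (hf : ∀ j ∈ Finset.Icc 1 J, ContDiffOn ℝ 1 (f j) (Ioo a b))
    (heven : ∀ j ∈ Finset.Icc 1 J, Even j → ∀ x : ℝ, f j x = 0)
    (hodd : ∀ j ∈ Finset.Icc 1 J, Odd j → ∀ x ∈ Ioo a b,
      x * deriv (f j) x + ((j : ℝ) - 1) * f j x ≥ 0)
    (hseq : ∃ xs : ℕ → ℝ, (∀ m, xs m ∈ Ioo a b) ∧ Tendsto xs atTop (𝓝 0) ∧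
      ∀ m, ∃ j ∈ Finset.Icc 1 J,
        xs m * deriv (f j) (xs m) + ((j : ℝ) - 1) * f j (xs m) ≠ 0) :
    (∀ (γ₁ : ℝ → ℝ × ℝ) (T₁ : ℝ) (γ₂ : ℝ → ℝ × ℝ) (T₂ : ℝ),
        IsLimitCycle (polyVF J f) γ₁ T₁ → range γ₁ ⊆ Ioo a b ×ˢ (univ : Set ℝ) →
        IsLimitCycle (polyVF J f) γ₂ T₂ → range γ₂ ⊆ Ioo a b ×ˢ (univ : Set ℝ) →
        range γ₁ = range γ₂) ∧
    (∀ (μ : ℝ → ℝ × ℝ) (T : ℝ),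
        IsLimitCycle (polyVF J f) μ T → range μ ⊆ Ioo a b ×ˢ (univ : Set ℝ) →
        (∫ t in (0:ℝ)..T, polyDiv J f (μ t)) ≠ 0) := by
  have hd : ∀ j ∈ Finset.Icc 1 J, ∀ x ∈ Ioo a b, HasDerivAt (f j) (deriv (f j) x) x := by
    intro j hj x hx
    exact (((hf j hj).differentiableOn one_ne_zero).differentiableAt
      (isOpen_Ioo.mem_nhds hx)).hasDerivAt
  refine ⟨?_, ?_⟩
  · intro γ₁ T₁ γ₂ T₂ h1 hs1 h2 hs2
    exact uniq_s3 a b J f hf heven hodd hd hseq γ₁ T₁ γ₂ T₂ h1.1 hs1 h2.1 hs2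
  · intro μ T h hs
    exact (cycle_facts a b J f hf heven hodd hd hseq μ T h.1 hs).1
end
end

section
/- Let f₁, f₃, f₅, …, f_{2N+1} : ℝ → ℝ be continuously differentiable, set all even-index coefficients f_{2k} ≡ 0, and assume x·f_{2k+1}'(x) + 2k·f_{2k+1}(x) ≥ 0 for all x ∈ ℝ and k = 1, …, N. Assume additionally that there exists ε > 0 with f₁(x) ≥ 0 for all x ∈ ℝ \ [−ε, ε], and that there exists 1 ≤ k̄ ≤ N such that f_{2k̄+1}(x) > 0 for all x ∈ [−ε, ε]. Then there exists M > 0 such that every forward-complete solution of the system ẋ = y, ẏ = −x − y·Σ_{k=0}^{N} f_{2k+1}(x)·y^{2k} definitely enters the disk D_M = {(x,y) : x² + y² ≤ M²} and remains inside it. -/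
open Set Filter Metric Real Topology intervalIntegral

noncomputable section

/-- The vector field of the system ẋ = y, ẏ = −x − y·Σ_{k=0}^{N} f_{2k+1}(x) y^{2k},
where `o k` stands for `f_{2k+1}`. -/
def oddVF (N : ℕ) (o : ℕ → ℝ → ℝ) : ℝ × ℝ → ℝ × ℝ :=
  fun p => (p.2, -p.1 - p.2 * ∑ k ∈ Finset.range (N + 1), o k p.1 * p.2 ^ (2 * k))

/-- The divergence of `oddVF N o`. -/
def oddDiv (N : ℕ) (o : ℕ → ℝ → ℝ) : ℝ × ℝ → ℝ :=
  fun p => -∑ k ∈ Finset.range (N + 1), (2 * (k : ℝ) + 1) * o k p.1 * p.2 ^ (2 * k)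

lemma aux_mono (k : ℕ) (hk : 1 ≤ k) (f : ℝ → ℝ) (hf : ContDiff ℝ 1 f)
    (h : ∀ x : ℝ, x * deriv f x + 2 * (k : ℝ) * f x ≥ 0) (a x : ℝ) (ha : 0 ≤ a) (hx : a ≤ x) :
    a ^ (2 * k) * f a ≤ x ^ (2 * k) * f x := by
  have hd : ∀ x : ℝ, HasDerivAt (fun x => x ^ (2 * k) * f x)
      (((2 * k : ℕ) : ℝ) * x ^ (2 * k - 1) * f x + x ^ (2 * k) * deriv f x) x := fun x =>
    (hasDerivAt_pow (2 * k) x).mul (hf.differentiable (by norm_num) x).hasDerivAt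
  have hm : MonotoneOn (fun x => x ^ (2 * k) * f x) (Ici (0:ℝ)) := by
    apply monotoneOn_of_deriv_nonneg (convex_Ici 0)
    · exact fun x _ => (hd x).continuousAt.continuousWithinAt
    · exact fun x _ => (hd x).differentiableAt.differentiableWithinAt
    · intro x hx
      rw [interior_Ici] at hx
      rw [(hd x).deriv]
      have hx' : (0:ℝ) < x := hx
      have e : x ^ (2 * k) = x ^ (2 * k - 1) * x := by
        rw [← pow_succ]; congr 1; omega
      rw [e]
      have := mul_nonneg (pow_nonneg hx'.le (2 * k - 1)) (h x)
      push_cast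
      linarith
  exact hm ha (ha.trans hx : (0:ℝ) ≤ x) hx

lemma aux_mono' (k : ℕ) (hk : 1 ≤ k) (f : ℝ → ℝ) (hf : ContDiff ℝ 1 f)
    (h : ∀ x : ℝ, x * deriv f x + 2 * (k : ℝ) * f x ≥ 0) (a x : ℝ) (ha : 0 ≤ a) (hx : a ≤ x) :
    a ^ (2 * k) * f (-a) ≤ x ^ (2 * k) * f (-x) := by
  refine aux_mono k hk (fun x => f (-x)) (hf.comp contDiff_neg) ?_ a x ha hx
  intro x
  rw [deriv_comp_neg]
  have := h (-x)
  linarith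

lemma aux_nonneg (k : ℕ) (hk : 1 ≤ k) (f : ℝ → ℝ) (hf : ContDiff ℝ 1 f)
    (h : ∀ x : ℝ, x * deriv f x + 2 * (k : ℝ) * f x ≥ 0) (x : ℝ) : 0 ≤ f x := by
  have hk0 : (0:ℝ) < k := by exact_mod_cast hk
  have h2 : 2 * k ≠ 0 := by omega
  rcases lt_trichotomy x 0 with hx | hx | hx
  · have := aux_mono' k hk f hf h 0 (-x) le_rfl (by linarith)
    rw [zero_pow h2, zero_mul, neg_neg] at this
    exact nonneg_of_mul_nonneg_right this (pow_pos (by linarith) _)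
  · subst hx
    have := h 0
    by_contra hc
    push Not at hc
    nlinarith
  · have := aux_mono k hk f hf h 0 x le_rfl hx.le
    rw [zero_pow h2, zero_mul] at this
    exact nonneg_of_mul_nonneg_right this (pow_pos (by linarith) _)

lemma aux_pos (k : ℕ) (hk : 1 ≤ k) (f : ℝ → ℝ) (hf : ContDiff ℝ 1 f)
    (h : ∀ x : ℝ, x * deriv f x + 2 * (k : ℝ) * f x ≥ 0) (ε : ℝ) (hε : 0 < ε)
    (hp : ∀ x ∈ Icc (-ε) ε, 0 < f x) (x : ℝ) : 0 < f x := by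
  by_cases h1 : ε < x
  · have := aux_mono k hk f hf h ε x hε.le h1.le
    have h3 : 0 < ε ^ (2 * k) * f ε := mul_pos (pow_pos hε _) (hp ε ⟨by linarith, le_rfl⟩)
    exact pos_of_mul_pos_right (h3.trans_le this) (pow_pos (by linarith) _).le
  by_cases h2 : x < -ε
  · have := aux_mono' k hk f hf h ε (-x) hε.le (by linarith)
    rw [neg_neg] at this
    have h3 : 0 < ε ^ (2 * k) * f (-ε) := mul_pos (pow_pos hε _) (hp _ ⟨le_rfl, by linarith⟩)
    exact pos_of_mul_pos_right (h3.trans_le this) (pow_pos (by linarith) _).le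
  exact hp x ⟨by linarith, by linarith⟩

/-- Abstract dissipativity for `phiVF`-type systems. -/
lemma aux_dyn (φ : ℝ × ℝ → ℝ) (hφ : Continuous φ) (M : ℝ) (hM : 0 < M)
    (hpos : ∀ p : ℝ × ℝ, M ^ 2 ≤ p.1 ^ 2 + p.2 ^ 2 → p.2 ≠ 0 → 0 < φ p)
    (γ : ℝ → ℝ × ℝ) (t₀ : ℝ)
    (hγ : ∀ t ∈ Ici t₀, HasDerivAt γ ((γ t).2, -(γ t).1 - (γ t).2 * φ (γ t)) t) :
    ∃ T ≥ t₀, ∀ t ≥ T, (γ t).1 ^ 2 + (γ t).2 ^ 2 ≤ M ^ 2 := by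
  have hX : ∀ t ≥ t₀, HasDerivAt (fun t => (γ t).1) (γ t).2 t := fun t ht => (hγ t ht).fst
  have hY : ∀ t ≥ t₀, HasDerivAt (fun t => (γ t).2) (-(γ t).1 - (γ t).2 * φ (γ t)) t :=
    fun t ht => (hγ t ht).snd
  have hV : ∀ t ≥ t₀, HasDerivAt (fun t => (γ t).1 ^ 2 + (γ t).2 ^ 2)
      (-(2 * (γ t).2 ^ 2 * φ (γ t))) t := by
    intro t ht
    refine (((hX t ht).pow 2).add ((hY t ht).pow 2)).congr_deriv ?_
    push_cast
    ring
  have hW : ∀ t ≥ t₀, HasDerivAt (fun t => (γ t).1 * (γ t).2)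
      ((γ t).2 ^ 2 - (γ t).1 ^ 2 - (γ t).1 * (γ t).2 * φ (γ t)) t := by
    intro t ht
    refine ((hX t ht).mul (hY t ht)).congr_deriv ?_
    ring
  have hPn : ∀ p : ℝ × ℝ, M ^ 2 ≤ p.1 ^ 2 + p.2 ^ 2 → 0 ≤ 2 * p.2 ^ 2 * φ p := by
    intro p hp
    by_cases h0 : p.2 = 0
    · simp [h0]
    · have := hpos p hp h0
      positivity
  by_cases hent : ∃ T ≥ t₀, (γ T).1 ^ 2 + (γ T).2 ^ 2 ≤ M ^ 2
  · obtain ⟨T, hT, hTM⟩ := hent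
    refine ⟨T, hT, fun t ht => ?_⟩
    have key : ∀ e > 0, (γ t).1 ^ 2 + (γ t).2 ^ 2 ≤ M ^ 2 + e * (t - T) := by
      intro e he
      refine image_le_of_deriv_right_lt_deriv_boundary
        (f := fun t => (γ t).1 ^ 2 + (γ t).2 ^ 2)
        (f' := fun t => -(2 * (γ t).2 ^ 2 * φ (γ t))) (a := T) (b := t)
        (B := fun s => M ^ 2 + e * (s - T)) (B' := fun _ => e)
        ?_ ?_ ?_ ?_ ?_ (right_mem_Icc.2 ht)
      · exact fun s hs => (hV s (hT.trans hs.1)).continuousAt.continuousWithinAt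
      · exact fun s hs => (hV s (hT.trans hs.1)).hasDerivWithinAt
      · simpa using hTM
      · intro s
        simpa using (((hasDerivAt_id s).sub_const T).const_mul e).const_add (M ^ 2)
      · intro s hs heq
        have h1 : 0 ≤ e * (s - T) := mul_nonneg he.le (sub_nonneg.2 hs.1)
        have := hPn (γ s) (by linarith)
        linarith
    refine le_of_forall_pos_le_add fun d hd => ?_
    have hp : 0 < t - T + 1 := by linarith
    refine (key (d / (t - T + 1)) (by positivity)).trans ?_
    have : d / (t - T + 1) * (t - T) ≤ d := by
      rw [div_mul_eq_mul_div, div_le_iff₀ hp]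
      nlinarith
    linarith
  · exfalso
    push Not at hent
    have hanti : AntitoneOn (fun t => (γ t).1 ^ 2 + (γ t).2 ^ 2) (Ici t₀) := by
      apply antitoneOn_of_deriv_nonpos (convex_Ici t₀)
      · exact fun s hs => (hV s hs).continuousAt.continuousWithinAt
      · rw [interior_Ici]
        exact fun s hs => (hV s (le_of_lt hs)).differentiableAt.differentiableWithinAt
      · rw [interior_Ici]
        intro s hs
        rw [(hV s (le_of_lt hs)).deriv]
        have := hPn (γ s) (hent s (le_of_lt hs)).le
        linarith
    set R := (γ t₀).1 ^ 2 + (γ t₀).2 ^ 2 with hR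
    set A : Set (ℝ × ℝ) := {p | M ^ 2 ≤ p.1 ^ 2 + p.2 ^ 2 ∧ p.1 ^ 2 + p.2 ^ 2 ≤ R} with hA
    have hAγ : ∀ t ≥ t₀, γ t ∈ A := fun t ht =>
      ⟨(hent t ht).le, hanti (self_mem_Ici) ht ht⟩
    have hAc : IsCompact A := by
      have hcl : IsClosed A := by
        have c1 : IsClosed {p : ℝ × ℝ | M ^ 2 ≤ p.1 ^ 2 + p.2 ^ 2} :=
          isClosed_le (by fun_prop) (by fun_prop)
        have c2 : IsClosed {p : ℝ × ℝ | p.1 ^ 2 + p.2 ^ 2 ≤ R} :=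
          isClosed_le (by fun_prop) (by fun_prop)
        exact c1.inter c2
      have hR0 : 0 ≤ R := by positivity
      refine (isCompact_Icc (a := ((-(R+1), -(R+1)) : ℝ × ℝ)) (b := (R+1, R+1))).of_isClosed_subset
        hcl ?_
      rintro ⟨x, y⟩ ⟨-, h2⟩
      simp only at h2
      refine ⟨⟨?_, ?_⟩, ⟨?_, ?_⟩⟩ <;> simp only <;> nlinarith
    let P : ℝ × ℝ → ℝ := fun p => 2 * p.2 ^ 2 * φ p
    let Q : ℝ × ℝ → ℝ := fun p => p.2 ^ 2 - p.1 ^ 2 - p.1 * p.2 * φ p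
    have hPc : Continuous P := by fun_prop
    have hQc : Continuous Q := by fun_prop
    have hδ : ∃ δ > 0, ∀ p ∈ A, -P p + δ * Q p < 0 := by
      have hPz : ∀ p ∈ A, 0 ≤ Q p → 0 < P p := by
        intro p hp hq
        by_cases h0 : p.2 = 0
        · exfalso
          have h1 := hp.1
          simp only [Q, h0] at hq h1
          nlinarith
        · have := hpos p hp.1 h0
          simp only [P]
          positivity
      have hBc : IsCompact (A ∩ {p | 0 ≤ Q p}) :=
        hAc.inter_right (isClosed_le continuous_const hQc)
      rcases (A ∩ {p | 0 ≤ Q p}).eq_empty_or_nonempty with he | hne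
      · refine ⟨1, one_pos, fun p hp => ?_⟩
        have h1 : Q p < 0 := by
          by_contra hc
          have : p ∈ A ∩ {p | 0 ≤ Q p} := ⟨hp, not_lt.1 hc⟩
          rw [he] at this
          exact this
        have := hPn p hp.1
        simp only [P]
        linarith
      · obtain ⟨q, hq, hqm⟩ := hBc.exists_isMinOn hne hPc.continuousOn
        obtain ⟨r, hr, hrm⟩ := hBc.exists_isMaxOn hne hQc.continuousOn
        have hm : 0 < P q := hPz q hq.1 hq.2
        have hB : 0 ≤ Q r := hr.2
        refine ⟨P q / (Q r + 1), by positivity, fun p hp => ?_⟩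
        by_cases hc : 0 ≤ Q p
        · have h1 : P q ≤ P p := hqm ⟨hp, hc⟩
          have h2 : Q p ≤ Q r := hrm ⟨hp, hc⟩
          have h3 : P q / (Q r + 1) * Q p < P q := by
            rw [div_mul_eq_mul_div, div_lt_iff₀ (by positivity)]
            nlinarith
          linarith
        · have h1 := hPn p hp.1
          have h2 : P q / (Q r + 1) * Q p < 0 := mul_neg_of_pos_of_neg (by positivity) (not_le.1 hc)
          simp only [P] at h2 ⊢
          linarith
    obtain ⟨δ, hδ0, hδ⟩ := hδ
    have hAne : A.Nonempty := ⟨_, hAγ t₀ le_rfl⟩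
    obtain ⟨q, hq, hqm⟩ := hAc.exists_isMaxOn hAne
      (f := fun p => -P p + δ * Q p) (by fun_prop)
    obtain ⟨r, hr, hrm⟩ := hAc.exists_isMinOn hAne
      (f := fun p : ℝ × ℝ => (p.1 ^ 2 + p.2 ^ 2) + δ * (p.1 * p.2)) (by fun_prop)
    set η := -(-P q + δ * Q q) with hη
    have hη0 : 0 < η := by have := hδ q hq; linarith
    let U : ℝ → ℝ := fun t => ((γ t).1 ^ 2 + (γ t).2 ^ 2) + δ * ((γ t).1 * (γ t).2)
    have hU : ∀ t ≥ t₀, HasDerivAt U (-P (γ t) + δ * Q (γ t)) t := fun t ht =>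
      (hV t ht).add ((hW t ht).const_mul δ)
    set m := (r.1 ^ 2 + r.2 ^ 2) + δ * (r.1 * r.2) with hmdef
    have hUm : ∀ t ≥ t₀, m ≤ U t := fun t ht => hrm (hAγ t ht)
    have hdec : ∀ t ≥ t₀, U t - U t₀ ≤ (-η) * (t - t₀) := by
      intro t ht
      refine (convex_Ici t₀).image_sub_le_mul_sub_of_deriv_le ?_ ?_ ?_ t₀ self_mem_Ici t ht ht
      · exact fun s hs => (hU s hs).continuousAt.continuousWithinAt
      · rw [interior_Ici]
        exact fun s hs => (hU s (le_of_lt hs)).differentiableAt.differentiableWithinAt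
      · rw [interior_Ici]
        intro s hs
        rw [(hU s (le_of_lt hs)).deriv]
        have : -P (γ s) + δ * Q (γ s) ≤ -P q + δ * Q q := hqm (hAγ s (le_of_lt hs))
        linarith
    have h0 := hUm t₀ le_rfl
    have ht1 : t₀ + (U t₀ - m + 1) / η ≥ t₀ := by
      have : 0 ≤ (U t₀ - m + 1) / η := div_nonneg (by linarith) hη0.le
      linarith
    have h1 := hdec _ ht1
    have h2 := hUm _ ht1
    have h3 : -η * (t₀ + (U t₀ - m + 1) / η - t₀) = -(U t₀ - m + 1) := by
      field_simp
      ring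
    linarith

/-- for the odd system (even coefficients vanish), if
`x f_{2k+1}'(x) + 2k f_{2k+1}(x) ≥ 0` for `k = 1,…,N`, `f₁ ≥ 0` outside
`[−ε,ε]` and some `f_{2k̄+1} > 0` on `[−ε,ε]`, then there is a disk `D_M` which
every forward-complete solution definitely enters and remains in. -/
theorem statement7 (N : ℕ) (o : ℕ → ℝ → ℝ)
    (ho : ∀ k ∈ Finset.range (N + 1), ContDiff ℝ 1 (o k))
    (hmono : ∀ k ∈ Finset.Icc 1 N, ∀ x : ℝ,
      x * deriv (o k) x + 2 * (k : ℝ) * o k x ≥ 0)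
    (ε : ℝ) (hε : 0 < ε)
    (hf1 : ∀ x : ℝ, ε < |x| → o 0 x ≥ 0)
    (hkbar : ∃ kbar ∈ Finset.Icc 1 N, ∀ x ∈ Icc (-ε) ε, 0 < o kbar x) :
    ∃ M > (0:ℝ), ∀ (γ : ℝ → ℝ × ℝ) (t₀ : ℝ), IsSolOn (oddVF N o) γ (Ici t₀) →
      ∃ T ≥ t₀, ∀ t ≥ T, (γ t).1 ^ 2 + (γ t).2 ^ 2 ≤ M ^ 2 := by
  obtain ⟨kb, hkb, hkp⟩ := hkbar
  obtain ⟨hkb1, hkbN⟩ := Finset.mem_Icc.1 hkb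
  have hoc : ∀ k, k ≤ N → ContDiff ℝ 1 (o k) := fun k hk => ho k (by simp; omega)
  have hnn : ∀ k, 1 ≤ k → k ≤ N → ∀ x, 0 ≤ o k x := fun k h1 h2 =>
    aux_nonneg k h1 (o k) (hoc k h2) (hmono k (Finset.mem_Icc.2 ⟨h1, h2⟩))
  have hbp : ∀ x, 0 < o kb x :=
    aux_pos kb hkb1 (o kb) (hoc kb hkbN) (hmono kb hkb) ε hε hkp
  let φ : ℝ × ℝ → ℝ := fun p => ∑ k ∈ Finset.range (N + 1), o k p.1 * p.2 ^ (2 * k)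
  have hφc : Continuous φ := by
    refine continuous_finsetSum _ fun k hk => ?_
    exact ((ho k hk).continuous.comp continuous_fst).mul (continuous_snd.pow _)
  have hlow : ∀ p : ℝ × ℝ, o 0 p.1 + o kb p.1 * p.2 ^ (2 * kb) ≤ φ p := by
    intro p
    have e : φ p = ∑ k ∈ Finset.range N, o (k + 1) p.1 * p.2 ^ (2 * (k + 1)) + o 0 p.1 := by
      simp only [φ]
      rw [Finset.sum_range_succ']
      simp
    have h1 := Finset.single_le_sum (s := Finset.range N)
      (f := fun k => o (k + 1) p.1 * p.2 ^ (2 * (k + 1)))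
      (fun k hk => mul_nonneg (hnn (k + 1) (by omega)
        (by have := Finset.mem_range.1 hk; omega) p.1) ((even_two_mul _).pow_nonneg _))
      (Finset.mem_range.2 (show kb - 1 < N by omega))
    have h2 : kb - 1 + 1 = kb := by omega
    simp only [h2] at h1
    rw [e]
    linarith
  have hne : (Icc (-ε) ε).Nonempty := ⟨0, by constructor <;> linarith⟩
  obtain ⟨a, ha, ham⟩ := isCompact_Icc.exists_isMinOn hne (hoc 0 (by omega)).continuous.continuousOn
  obtain ⟨b, hb, hbm⟩ := isCompact_Icc.exists_isMinOn hne (hoc kb hkbN).continuous.continuousOn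
  have hc := hbp b
  set c := o kb b with hcdef
  set Y := 1 + |o 0 a| / c with hY
  have hY1 : 1 ≤ Y := by
    have : 0 ≤ |o 0 a| / c := by positivity
    linarith
  refine ⟨1 + ε + Y, by positivity, fun γ t₀ hγ => ?_⟩
  refine aux_dyn φ hφc (1 + ε + Y) (by positivity) ?_ γ t₀ hγ
  intro p hp hp0
  have hl := hlow p
  have hp2 : 0 < p.2 ^ (2 * kb) := (even_two_mul _).pow_pos hp0
  by_cases hx : ε < |p.1|
  · have h1 := hf1 p.1 hx
    have h2 := mul_pos (hbp p.1) hp2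
    linarith
  · have hx' : |p.1| ≤ ε := not_lt.1 hx
    have hxm : p.1 ∈ Icc (-ε) ε := abs_le.1 hx'
    have h1 : o 0 a ≤ o 0 p.1 := ham hxm
    have h2 : c ≤ o kb p.1 := hbm hxm
    have hx2 : p.1 ^ 2 ≤ ε ^ 2 := sq_le_sq' hxm.1 hxm.2
    have hy : Y < p.2 ^ 2 := by nlinarith
    have hy2 : p.2 ^ 2 ≤ p.2 ^ (2 * kb) := by
      rw [pow_mul]
      exact le_self_pow₀ (by linarith) (by omega)
    have h3 : c * Y < o kb p.1 * p.2 ^ (2 * kb) := by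
      calc c * Y < c * p.2 ^ (2 * kb) := by
            apply mul_lt_mul_of_pos_left _ hc
            linarith
        _ ≤ _ := mul_le_mul_of_nonneg_right h2 hp2.le
    have h4 : c * Y = c + |o 0 a| := by
      rw [hY]; field_simp
    have h5 := neg_abs_le (o 0 a)
    linarith
end
end

section
/- Let φ : ℝ² → ℝ be continuously differentiable with φ(0,0) < 0, satisfying: (i) x·φ_x(x,y) + y·φ_y(x,y) ≥ 0 on ℝ², and the set {(x,y) : x·φ_x(x,y) + y·φ_y(x,y) = 0} contains no non-trivial positive semi-orbit of the system (S): ẋ = y, ẏ = −x − y·φ(x,y); (ii) there exists M > 0 such that φ(x,y) ≥ 0 outside the disk D_M = {(x,y) : x² + y² ≤ M²}, and the set {φ = 0} \ D_M contains no non-trivial positive semi-orbit of (S). Then (S) has exactly one limit cycle; this limit cycle is hyperbolic and attracts every non-constant solution of (S). -/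
open Set Filter Metric Real Topology intervalIntegral

noncomputable section

section
lemma a_glob_exist {F : ℝ × ℝ → ℝ × ℝ} {K L : NNReal} (hK : LipschitzWith K F)
    (hL : ∀ p, ‖F p‖ ≤ L) (x0 : ℝ × ℝ) :
    ∃ γ : ℝ → ℝ × ℝ, γ 0 = x0 ∧ ∀ t, HasDerivAt γ (F (γ t)) t := by
  have h1 : ∀ n : ℕ, ∃ α : ℝ → ℝ × ℝ, α 0 = x0 ∧
      ∀ t ∈ Ioo (-(n + 1 : ℝ)) (n + 1), HasDerivAt α (F (α t)) t := by
    intro n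
    have hn : (0 : ℝ) ≤ n + 1 := by positivity
    have h0 : (0 : ℝ) ∈ Icc (-(n + 1 : ℝ)) (n + 1) := ⟨by linarith, hn⟩
    have hp : IsPicardLindelof (fun _ => F) (⟨0, h0⟩ : Icc (-(n + 1 : ℝ)) (n + 1)) x0
        (L * (n + 1)) 0 L K := by
      refine IsPicardLindelof.of_time_independent (fun x _ => hL x) hK.lipschitzOnWith ?_
      simp
    obtain ⟨α, ha, hd⟩ := hp.exists_eq_forall_mem_Icc_hasDerivWithinAt₀
    exact ⟨α, ha, fun t ht => (hd t (Ioo_subset_Icc_self ht)).hasDerivAt (Icc_mem_nhds ht.1 ht.2)⟩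
  choose α ha hd using h1
  have hag : ∀ n m : ℕ, n ≤ m → EqOn (α n) (α m) (Ioo (-(n + 1 : ℝ)) (n + 1)) := by
    intro n m hnm
    have hnm' : (n : ℝ) ≤ m := by exact_mod_cast hnm
    have hn : (0 : ℝ) < n + 1 := by positivity
    refine ODE_solution_unique_of_mem_Ioo (v := fun _ => F) (s := fun _ => univ) (K := K) (t₀ := 0)
      (fun t _ => hK.lipschitzOnWith) ⟨by linarith, hn⟩ (fun t ht => ⟨hd n t ht, trivial⟩)
      (fun t ht => ⟨hd m t ⟨by linarith [ht.1], by linarith [ht.2]⟩, trivial⟩) (by rw [ha, ha])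
  refine ⟨fun t => α ⌈|t|⌉₊ t, by simp [ha], fun t => ?_⟩
  set n := ⌈|t|⌉₊ + 1 with hn
  have htn : |t| < n := by
    have := Nat.le_ceil |t|
    rw [hn]; push_cast; linarith
  have hev : (fun t => α ⌈|t|⌉₊ t) =ᶠ[𝓝 t] α n := by
    have : ∀ᶠ u : ℝ in 𝓝 t, |u| < (n : ℝ) := (continuous_abs.tendsto t).eventually_lt_const htn
    filter_upwards [this] with u hu
    have h1 : ⌈|u|⌉₊ ≤ n := Nat.ceil_le.2 hu.le
    refine hag _ _ h1 ?_
    have := Nat.le_ceil |u|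
    rw [mem_Ioo, ← abs_lt]; linarith
  have := hd n t (by rw [mem_Ioo, ← abs_lt]; linarith)
  have h2 := this.congr_of_eventuallyEq hev
  rwa [← hev.eq_of_nhds] at h2

/-- Uniqueness on closed intervals -/
lemma a_unique_Icc {F : ℝ × ℝ → ℝ × ℝ} (hF : ContDiff ℝ 1 F) {f g : ℝ → ℝ × ℝ} {a b t0 : ℝ}
    (hf : ∀ t ∈ Icc a b, HasDerivAt f (F (f t)) t) (hg : ∀ t ∈ Icc a b, HasDerivAt g (F (g t)) t)
    (ht0 : t0 ∈ Icc a b) (h0 : f t0 = g t0) : EqOn f g (Icc a b) := by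
  have cf : ContinuousOn f (Icc a b) := fun t ht => (hf t ht).continuousAt.continuousWithinAt
  have cg : ContinuousOn g (Icc a b) := fun t ht => (hg t ht).continuousAt.continuousWithinAt
  obtain ⟨R, hR⟩ := ((isCompact_Icc.image_of_continuousOn cf).union
    (isCompact_Icc.image_of_continuousOn cg)).isBounded.subset_closedBall 0
  obtain ⟨K, hK⟩ := hF.contDiffOn.exists_lipschitzOnWith (s := closedBall (0 : ℝ × ℝ) R)
    one_ne_zero (convex_closedBall _ _) (isCompact_closedBall _ _)
  have mf : ∀ t ∈ Icc a b, f t ∈ closedBall (0 : ℝ × ℝ) R :=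
    fun t ht => hR (Or.inl (mem_image_of_mem _ ht))
  have mg : ∀ t ∈ Icc a b, g t ∈ closedBall (0 : ℝ × ℝ) R :=
    fun t ht => hR (Or.inr (mem_image_of_mem _ ht))
  have hr : EqOn f g (Icc t0 b) := by
    have hs : ∀ t ∈ Ico t0 b, t ∈ Icc a b := fun t ht => ⟨ht0.1.trans ht.1, ht.2.le⟩
    have hs' : Icc t0 b ⊆ Icc a b := Icc_subset_Icc_left ht0.1
    exact ODE_solution_unique_of_mem_Icc_right (v := fun _ => F) (s := fun _ => closedBall 0 R)
      (fun t _ => hK) (cf.mono hs') (fun t ht => (hf t (hs t ht)).hasDerivWithinAt)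
      (fun t ht => mf t (hs t ht)) (cg.mono hs') (fun t ht => (hg t (hs t ht)).hasDerivWithinAt)
      (fun t ht => mg t (hs t ht)) h0
  have hl : EqOn f g (Icc a t0) := by
    have hs : ∀ t ∈ Ioc a t0, t ∈ Icc a b := fun t ht => ⟨ht.1.le, ht.2.trans ht0.2⟩
    have hs' : Icc a t0 ⊆ Icc a b := Icc_subset_Icc_right ht0.2
    exact ODE_solution_unique_of_mem_Icc_left (v := fun _ => F) (s := fun _ => closedBall 0 R)
      (fun t _ => hK) (cf.mono hs') (fun t ht => (hf t (hs t ht)).hasDerivWithinAt)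
      (fun t ht => mf t (hs t ht)) (cg.mono hs') (fun t ht => (hg t (hs t ht)).hasDerivWithinAt)
      (fun t ht => mg t (hs t ht)) h0
  intro t ht
  rcases le_total t t0 with h | h
  · exact hl ⟨ht.1, h⟩
  · exact hr ⟨h, ht.2⟩

lemma a_unique_Ici {F : ℝ × ℝ → ℝ × ℝ} (hF : ContDiff ℝ 1 F) {f g : ℝ → ℝ × ℝ} {a t0 : ℝ}
    (hf : IsSolOn F f (Ici a)) (hg : IsSolOn F g (Ici a))
    (ht0 : a ≤ t0) (h0 : f t0 = g t0) : EqOn f g (Ici a) := by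
  intro t ht
  exact a_unique_Icc hF (b := max t t0) (fun u hu => hf u hu.1) (fun u hu => hg u hu.1)
    ⟨ht0, le_max_right _ _⟩ h0 ⟨ht, le_max_left _ _⟩

/-- barrier lemma -/
lemma a_barrier {f f' : ℝ → ℝ} {K : ℝ} (hf : ∀ t, 0 ≤ t → HasDerivAt f (f' t) t)
    (h' : ∀ t, 0 ≤ t → K < f t → f' t ≤ 0) (h0 : f 0 ≤ K) : ∀ t, 0 ≤ t → f t ≤ K := by
  intro t ht
  by_contra! hlt
  have cf : ContinuousOn f (Icc 0 t) := fun u hu => (hf u hu.1).continuousAt.continuousWithinAt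
  have hc : IsCompact (Icc 0 t ∩ f ⁻¹' Iic K) :=
    isCompact_Icc.of_isClosed_subset (cf.preimage_isClosed_of_isClosed isClosed_Icc isClosed_Iic)
      inter_subset_left
  obtain ⟨s, ⟨hs1, hs2⟩, hs3⟩ := hc.exists_isGreatest ⟨0, ⟨le_rfl, ht⟩, h0⟩
  have han : AntitoneOn f (Icc s t) := by
    refine antitoneOn_of_deriv_nonpos (convex_Icc _ _) (cf.mono (Icc_subset_Icc_left hs1.1)) ?_ ?_
    · intro u hu
      rw [interior_Icc] at hu
      exact (hf u (hs1.1.trans hu.1.le)).differentiableAt.differentiableWithinAt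
    · intro u hu
      rw [interior_Icc] at hu
      rw [(hf u (hs1.1.trans hu.1.le)).deriv]
      refine h' u (hs1.1.trans hu.1.le) ?_
      by_contra! hle
      have := hs3 ⟨⟨hs1.1.trans hu.1.le, hu.2.le⟩, hle⟩
      linarith [hu.1]
  have := han ⟨le_rfl, hs1.2⟩ ⟨hs1.2, le_rfl⟩ hs1.2
  simp only [mem_preimage, mem_Iic] at hs2
  linarith

lemma a_antideriv {g : ℝ → ℝ} (hg : ContinuousOn g (Ici 0)) :
    ∃ A : ℝ → ℝ, A 0 = 0 ∧ ∀ t, HasDerivAt A (g (max t 0)) t := by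
  have hc : Continuous fun t => g (max t 0) :=
    hg.comp_continuous (by fun_prop) (fun t => mem_Ici.2 (le_max_right _ _))
  refine ⟨fun t => ∫ u in (0:ℝ)..t, g (max u 0), by simp, fun t => ?_⟩
  exact hc.integral_hasStrictDerivAt 0 t |>.hasDerivAt

lemma a_const {f : ℝ → ℝ} (hf : ∀ t, 0 ≤ t → HasDerivAt f 0 t) {t : ℝ} (ht : 0 ≤ t) :
    f t = f 0 :=
  constant_of_has_deriv_right_zero (fun u hu => (hf u hu.1).continuousAt.continuousWithinAt)
    (fun u hu => (hf u hu.1).hasDerivWithinAt) t ⟨ht, le_rfl⟩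

lemma a_fst {f : ℝ → ℝ × ℝ} {v : ℝ × ℝ} {t : ℝ} (h : HasDerivAt f v t) :
    HasDerivAt (fun t => (f t).1) v.1 t := by
  have h2 : HasFDerivAt (fun p : ℝ × ℝ => p.1) (ContinuousLinearMap.fst ℝ ℝ ℝ) (f t) := hasFDerivAt_fst
  exact h2.comp_hasDerivAt t h

lemma a_snd {f : ℝ → ℝ × ℝ} {v : ℝ × ℝ} {t : ℝ} (h : HasDerivAt f v t) :
    HasDerivAt (fun t => (f t).2) v.2 t := by
  have h2 : HasFDerivAt (fun p : ℝ × ℝ => p.2) (ContinuousLinearMap.snd ℝ ℝ ℝ) (f t) := hasFDerivAt_snd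
  exact h2.comp_hasDerivAt t h

lemma a_shift {F : ℝ × ℝ → ℝ × ℝ} {f : ℝ → ℝ × ℝ} {a c : ℝ} (hf : IsSolOn F f (Ici a)) :
    IsSolOn F (fun t => f (t + c)) (Ici (a - c)) := by
  intro t ht
  exact (hf (t + c) (by simp only [mem_Ici] at ht ⊢; linarith)).comp_add_const t c

lemma a_growth {f f' : ℝ → ℝ} {a ε B : ℝ} (hε : 0 < ε) (hf : ∀ t, a ≤ t → HasDerivAt f (f' t) t)
    (h' : ∀ t, a ≤ t → ε ≤ f' t) (hB : ∀ t, a ≤ t → |f t| ≤ B) : False := by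
  have hB0 : 0 ≤ B := (abs_nonneg _).trans (hB a le_rfl)
  have hlt : a < a + (2 * B + 1) / ε := by
    have : 0 < (2 * B + 1) / ε := by positivity
    linarith
  obtain ⟨c, hc, hc'⟩ := exists_hasDerivAt_eq_slope f f' hlt
    (fun u hu => (hf u hu.1).continuousAt.continuousWithinAt) (fun u hu => hf u hu.1.le)
  have h1 := h' c hc.1.le
  rw [hc', le_div_iff₀ (by linarith)] at h1
  have h2 : ε * (a + (2 * B + 1) / ε - a) = 2 * B + 1 := by field_simp; ring
  have := abs_le.1 (hB a le_rfl)
  have := abs_le.1 (hB _ hlt.le)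
  linarith

/-- y cannot remain positive -/
lemma a_nopos {x y f : ℝ → ℝ} {a C R δ : ℝ} (hx : ∀ t, a ≤ t → HasDerivAt x (y t) t)
    (hy : ∀ t, a ≤ t → HasDerivAt y (-x t - y t * f t) t) (hC : ∀ t, a ≤ t → |f t| ≤ C)
    (hxR : ∀ t, a ≤ t → |x t| ≤ R) (hyR : ∀ t, a ≤ t → |y t| ≤ R) (hδ : 0 < δ)
    (hr : ∀ t, a ≤ t → δ ^ 2 ≤ x t ^ 2 + y t ^ 2) (hpos : ∀ t, a ≤ t → 0 < y t) : False := by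
  have hC0 : 0 ≤ C := (abs_nonneg _).trans (hC a le_rfl)
  have hmono : MonotoneOn x (Ici a) := by
    refine monotoneOn_of_deriv_nonneg (convex_Ici a)
      (fun u hu => (hx u hu).continuousAt.continuousWithinAt) ?_ ?_
    · intro u hu
      rw [interior_Ici] at hu
      exact (hx u (le_of_lt hu)).differentiableAt.differentiableWithinAt
    · intro u hu
      rw [interior_Ici] at hu
      rw [(hx u (le_of_lt hu)).deriv]
      exact (hpos u (le_of_lt hu)).le
  have hbd : ∀ s : ℝ, |s| ≤ C → ∀ t, a ≤ t → |y t + s * x t| ≤ R + C * R := by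
    intro s hs t ht
    refine (abs_add_le _ _).trans ?_
    rw [abs_mul]
    exact add_le_add (hyR t ht) (mul_le_mul hs (hxR t ht) (abs_nonneg _) hC0)
  set ε := δ / 2 with hε
  have hε0 : 0 < ε := by positivity
  -- x ≤ -ε cannot hold forever
  have h1 : ∃ t1, a ≤ t1 ∧ -ε < x t1 := by
    by_contra! hcon
    refine a_growth (f := fun t => y t + C * x t) (f' := fun t => (-x t - y t * f t) + C * y t)
      (a := a) (B := R + C * R) hε0
      (fun t ht => (hy t ht).add ((hx t ht).const_mul C)) (fun t ht => ?_)
      (hbd C (by rw [abs_of_nonneg hC0]))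
    have := hcon t ht
    have := (abs_le.1 (hC t ht)).2
    have := mul_nonneg (hpos t ht).le (sub_nonneg.2 this)
    nlinarith
  obtain ⟨t1, ht1, hxt1⟩ := h1
  have h2 : ∀ t, a ≤ t → x t < ε := by
    by_contra! hcon
    obtain ⟨t2, ht2, hx2⟩ := hcon
    refine a_growth (f := fun t => -(y t + (-C) * x t)) (f' := fun t => -((-x t - y t * f t) + (-C) * y t))
      (a := t2) (B := R + C * R) hε0
      (fun t ht => ((hy t (ht2.trans ht)).add ((hx t (ht2.trans ht)).const_mul (-C))).neg)
      (fun t ht => ?_) (fun t ht => ?_)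
    · have h3 := hmono (mem_Ici.2 ht2) (mem_Ici.2 (ht2.trans ht)) ht
      have := (abs_le.1 (hC t (ht2.trans ht))).1
      have := mul_nonneg (hpos t (ht2.trans ht)).le (by linarith : 0 ≤ f t + C)
      nlinarith
    · rw [abs_neg]
      exact hbd (-C) (by rw [abs_neg, abs_of_nonneg hC0]) t (ht2.trans ht)
  refine a_growth (f := x) (f' := y) (a := t1) (B := R) hε0 (fun t ht => hx t (ht1.trans ht))
    (fun t ht => ?_) (fun t ht => hxR t (ht1.trans ht))
  have h3 := hmono (mem_Ici.2 ht1) (mem_Ici.2 (ht1.trans ht)) ht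
  have h4 := h2 t (ht1.trans ht)
  have h5 := hr t (ht1.trans ht)
  have h6 := hpos t (ht1.trans ht)
  have h7 : x t ^ 2 ≤ ε ^ 2 := by
    apply sq_le_sq' <;> linarith
  by_contra! h8
  have : y t ^ 2 ≤ ε ^ 2 := by
    apply sq_le_sq' <;> linarith
  have : δ = 2 * ε := by rw [hε]; ring
  rw [this] at h5
  nlinarith

end

section
structure BH (φ : ℝ × ℝ → ℝ) (M : ℝ) : Prop where
  c1 : ContDiff ℝ 1 φ
  neg : φ (0, 0) < 0
  star : ∀ p : ℝ × ℝ, 0 ≤ p.1 * fderiv ℝ φ p (1, 0) + p.2 * fderiv ℝ φ p (0, 1)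
  nsemi : ¬ HasSemiOrbitIn (phiVF φ)
      {p : ℝ × ℝ | p.1 * fderiv ℝ φ p (1, 0) + p.2 * fderiv ℝ φ p (0, 1) = 0}
  Mpos : 0 < M
  pos : ∀ p : ℝ × ℝ, M ^ 2 < p.1 ^ 2 + p.2 ^ 2 → φ p ≥ 0

def bE (φ : ℝ × ℝ → ℝ) (p : ℝ × ℝ) : ℝ := p.1 * fderiv ℝ φ p (1, 0) + p.2 * fderiv ℝ φ p (0, 1)
def bN (φ : ℝ × ℝ → ℝ) (p : ℝ × ℝ) : ℝ := p.1 ^ 2 + p.2 ^ 2 + p.1 * p.2 * φ p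
def bdiv (φ : ℝ × ℝ → ℝ) (p : ℝ × ℝ) : ℝ := -φ p - p.2 * fderiv ℝ φ p (0, 1)

variable {φ : ℝ × ℝ → ℝ} {M : ℝ}

lemma b_contDiff (hφ : ContDiff ℝ 1 φ) : ContDiff ℝ 1 (phiVF φ) := by
  unfold phiVF
  fun_prop

lemma b_cfd (hφ : ContDiff ℝ 1 φ) (v : ℝ × ℝ) : Continuous (fun p => fderiv ℝ φ p v) :=
  (hφ.continuous_fderiv one_ne_zero).clm_apply continuous_const

lemma b_cE (hφ : ContDiff ℝ 1 φ) : Continuous (bE φ) := by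
  have := b_cfd hφ (1, 0)
  have := b_cfd hφ (0, 1)
  unfold bE
  fun_prop

lemma b_cN (hφ : ContDiff ℝ 1 φ) : Continuous (bN φ) := by
  have := hφ.continuous
  unfold bN
  fun_prop

lemma b_cdiv (hφ : ContDiff ℝ 1 φ) : Continuous (bdiv φ) := by
  have := b_cfd hφ (0, 1)
  have := hφ.continuous
  unfold bdiv
  fun_prop

lemma b_phi (hφ : ContDiff ℝ 1 φ) {γ : ℝ → ℝ × ℝ} {v : ℝ × ℝ} {t : ℝ} (h : HasDerivAt γ v t) :
    HasDerivAt (fun t => φ (γ t))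
      (v.1 * fderiv ℝ φ (γ t) (1, 0) + v.2 * fderiv ℝ φ (γ t) (0, 1)) t := by
  have h1 : HasFDerivAt φ (fderiv ℝ φ (γ t)) (γ t) :=
    (hφ.differentiable one_ne_zero _).hasFDerivAt
  have h2 := h1.comp_hasDerivAt t h
  have h3 : v = v.1 • ((1 : ℝ), (0 : ℝ)) + v.2 • ((0 : ℝ), (1 : ℝ)) := by ext <;> simp
  have h4 : fderiv ℝ φ (γ t) v
      = v.1 * fderiv ℝ φ (γ t) (1, 0) + v.2 * fderiv ℝ φ (γ t) (0, 1) := by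
    conv_lhs => rw [h3, map_add, map_smul, map_smul]
    simp
  rw [← h4]
  exact h2

lemma b_V {γ : ℝ → ℝ × ℝ} {c : ℝ} {t : ℝ} (h : HasDerivAt γ (c • phiVF φ (γ t)) t) :
    HasDerivAt (fun t => (γ t).1 ^ 2 + (γ t).2 ^ 2) (-(2 * c * (γ t).2 ^ 2 * φ (γ t))) t := by
  have h1 := ((a_fst h).pow 2).add ((a_snd h).pow 2)
  refine HasDerivAt.congr_deriv h1 ?_
  simp [phiVF]
  ring

lemma b_V1 {γ : ℝ → ℝ × ℝ} {t : ℝ} (h : HasDerivAt γ (phiVF φ (γ t)) t) :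
    HasDerivAt (fun t => (γ t).1 ^ 2 + (γ t).2 ^ 2) (-(2 * (γ t).2 ^ 2 * φ (γ t))) t := by
  have := b_V (φ := φ) (γ := γ) (c := 1) (t := t) (by simpa using h)
  simpa using this

lemma b_N (hφ : ContDiff ℝ 1 φ) {γ : ℝ → ℝ × ℝ} {t : ℝ} (h : HasDerivAt γ (phiVF φ (γ t)) t) :
    HasDerivAt (fun t => bN φ (γ t)) (bdiv φ (γ t) * bN φ (γ t) + (γ t).2 ^ 2 * bE φ (γ t)) t := by
  have h1 := (b_V1 h).add (((a_fst h).mul (a_snd h)).mul (b_phi hφ h))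
  refine HasDerivAt.congr_deriv h1 ?_
  simp [phiVF, bN, bdiv, bE]
  ring

lemma b_upper0 (H : BH φ M) {γ : ℝ → ℝ × ℝ} {c : ℝ → ℝ} {K : ℝ} (hc : ∀ t, 0 ≤ c t)
    (h : ∀ t, 0 ≤ t → HasDerivAt γ (c t • phiVF φ (γ t)) t) (hK : M ^ 2 ≤ K)
    (h0 : (γ 0).1 ^ 2 + (γ 0).2 ^ 2 ≤ K) : ∀ t, 0 ≤ t → (γ t).1 ^ 2 + (γ t).2 ^ 2 ≤ K := by
  refine a_barrier (fun t ht => b_V (h t ht)) (fun t ht hlt => ?_) h0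
  have := H.pos (γ t) (by linarith)
  have h2 := hc t
  have : 0 ≤ 2 * c t * (γ t).2 ^ 2 * φ (γ t) := by positivity
  linarith

lemma b_upper (H : BH φ M) {γ : ℝ → ℝ × ℝ} {K : ℝ} (h : IsSolOn (phiVF φ) γ (Ici 0))
    (hK : M ^ 2 ≤ K) (h0 : (γ 0).1 ^ 2 + (γ 0).2 ^ 2 ≤ K) :
    ∀ t, 0 ≤ t → (γ t).1 ^ 2 + (γ t).2 ^ 2 ≤ K :=
  b_upper0 H (c := fun _ => 1) (fun _ => zero_le_one) (fun t ht => by simpa using h t ht) hK h0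

lemma b_lower (H : BH φ M) : ∃ δ, 0 < δ ∧ δ ≤ M ∧ ∀ (γ : ℝ → ℝ × ℝ) (k : ℝ),
    IsSolOn (phiVF φ) γ (Ici 0) → k ≤ δ → 0 < k → k ^ 2 ≤ (γ 0).1 ^ 2 + (γ 0).2 ^ 2 →
    ∀ t, 0 ≤ t → k ^ 2 ≤ (γ t).1 ^ 2 + (γ t).2 ^ 2 := by
  have h1 : ∀ᶠ p in 𝓝 ((0 : ℝ), (0 : ℝ)), φ p < 0 :=
    H.c1.continuous.continuousAt.eventually_lt_const H.neg
  obtain ⟨ε, hε, h2⟩ := Metric.eventually_nhds_iff.1 h1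
  refine ⟨min ε M, lt_min hε H.Mpos, min_le_right _ _, fun γ k hγ hk hk0 h0 t ht => ?_⟩
  have := a_barrier (K := -k ^ 2) (fun t ht => (b_V1 (hγ t ht)).neg) (fun t ht hlt => ?_)
    (by simp only [Pi.neg_apply]; linarith) t ht
  · simp only [Pi.neg_apply] at this
    linarith
  · simp only [Pi.neg_apply] at hlt
    have hkε : k ≤ ε := hk.trans (min_le_left _ _)
    have : φ (γ t) < 0 := by
      apply h2
      rw [Prod.dist_eq, max_lt_iff]
      simp only [Real.dist_eq, sub_zero]
      refine ⟨abs_lt_of_sq_lt_sq ?_ hε.le, abs_lt_of_sq_lt_sq ?_ hε.le⟩ <;> nlinarith [sq_nonneg (γ t).1, sq_nonneg (γ t).2]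
    nlinarith [sq_nonneg (γ t).2]

lemma b_exist (H : BH φ M) (p : ℝ × ℝ) :
    ∃ γ : ℝ → ℝ × ℝ, γ 0 = p ∧ IsSolOn (phiVF φ) γ (Ici 0) := by
  set R := 1 + M ^ 2 + (p.1 ^ 2 + p.2 ^ 2) with hR
  have hR1 : 1 ≤ R := by rw [hR]; nlinarith [sq_nonneg M, sq_nonneg p.1, sq_nonneg p.2]
  let χ : ContDiffBump (0 : ℝ × ℝ) := ⟨R, R + 1, by linarith, by linarith⟩
  have hF : ContDiff ℝ 1 (fun q => χ q • phiVF φ q) := χ.contDiff.smul (b_contDiff H.c1)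
  have hcs : HasCompactSupport (fun q => χ q • phiVF φ q) := χ.hasCompactSupport.smul_right
  obtain ⟨K, hK⟩ := hF.lipschitzWith_of_hasCompactSupport hcs one_ne_zero
  obtain ⟨L, hL⟩ := hcs.exists_bound_of_continuous hF.continuous
  obtain ⟨γ, h0, hd⟩ := a_glob_exist (L := L.toNNReal) hK (fun p => (hL p).trans (le_coe_toNNReal L)) p
  refine ⟨γ, h0, fun t ht => ?_⟩
  have hb := b_upper0 H (γ := γ) (c := fun t => χ (γ t)) (K := R) (fun t => χ.nonneg)
    (fun t _ => hd t) (by rw [hR]; nlinarith [sq_nonneg p.1, sq_nonneg p.2])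
    (by rw [h0, hR]; nlinarith [sq_nonneg M]) t ht
  have h1 : χ (γ t) = 1 := by
    apply χ.one_of_mem_closedBall
    rw [mem_closedBall_zero_iff, Prod.norm_def, max_le_iff]
    simp only [Real.norm_eq_abs]
    have hh : R ≤ R ^ 2 := by nlinarith
    refine ⟨abs_le_of_sq_le_sq ?_ (by linarith), abs_le_of_sq_le_sq ?_ (by linarith)⟩ <;> nlinarith [sq_nonneg (γ t).1, sq_nonneg (γ t).2]
  have := hd t
  simp only [h1, one_smul] at this
  exact this

lemma b_cont {F : ℝ × ℝ → ℝ × ℝ} {γ : ℝ → ℝ × ℝ} {a : ℝ} (h : IsSolOn F γ (Ici a)) :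
    ContinuousOn γ (Ici a) :=
  fun t ht => (h t ht).continuousAt.continuousWithinAt

lemma b_Npos (H : BH φ M) {γ : ℝ → ℝ × ℝ} (h : IsSolOn (phiVF φ) γ (Ici 0))
    (h0 : 0 < bN φ (γ 0)) : ∀ t, 0 ≤ t → 0 < bN φ (γ t) := by
  intro t ht
  obtain ⟨A, hA0, hA⟩ := a_antideriv ((b_cdiv H.c1).comp_continuousOn (b_cont h))
  have hd : ∀ u, 0 ≤ u → HasDerivAt (fun u => Real.exp (-A u) * bN φ (γ u))
      (Real.exp (-A u) * ((γ u).2 ^ 2 * bE φ (γ u))) u := by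
    intro u hu
    have h1 := hA u
    rw [max_eq_left hu] at h1
    refine (h1.neg.exp.mul (b_N H.c1 (h u hu))).congr_deriv ?_
    simp only [Function.comp, Pi.neg_apply]
    ring
  have hm : MonotoneOn (fun u => Real.exp (-A u) * bN φ (γ u)) (Icc 0 t) := by
    refine monotoneOn_of_deriv_nonneg (convex_Icc _ _)
      (fun u hu => (hd u hu.1).continuousAt.continuousWithinAt) ?_ ?_
    · intro u hu
      rw [interior_Icc] at hu
      exact (hd u hu.1.le).differentiableAt.differentiableWithinAt
    · intro u hu
      rw [interior_Icc] at hu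
      rw [(hd u hu.1.le).deriv]
      have := H.star (γ u)
      unfold bE
      positivity
  have h1 := hm ⟨le_rfl, ht⟩ ⟨ht, le_rfl⟩ ht
  simp only [hA0, neg_zero, Real.exp_zero, one_mul] at h1
  exact pos_of_mul_pos_right (h0.trans_le h1) (Real.exp_pos _).le

/-- nonconstant solutions avoid the origin -/
lemma b_ne_zero (H : BH φ M) {γ : ℝ → ℝ × ℝ} {a : ℝ} (h : IsSolOn (phiVF φ) γ (Ici a))
    (hn : ∃ t₁ ∈ Ici a, ∃ t₂ ∈ Ici a, γ t₁ ≠ γ t₂) : ∀ t, a ≤ t → γ t ≠ 0 := by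
  intro t ht h0
  have hz : IsSolOn (phiVF φ) (fun _ => (0 : ℝ × ℝ)) (Ici a) := by
    intro u _
    have : phiVF φ 0 = 0 := by simp [phiVF]
    rw [this]
    exact hasDerivAt_const _ _
  have := a_unique_Ici (b_contDiff H.c1) h hz ht h0
  obtain ⟨t1, ht1, t2, ht2, hne⟩ := hn
  exact hne ((this ht1).trans (this ht2).symm)

lemma b_Vpos {p : ℝ × ℝ} (hp : p ≠ 0) : 0 < p.1 ^ 2 + p.2 ^ 2 := by
  by_contra! h
  apply hp
  have h1 : p.1 = 0 := by nlinarith [sq_nonneg p.1, sq_nonneg p.2]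
  have h2 : p.2 = 0 := by nlinarith [sq_nonneg p.1, sq_nonneg p.2]
  exact Prod.ext h1 h2

/-- bounds along a solution -/
lemma b_bounds (H : BH φ M) {γ : ℝ → ℝ × ℝ} (h : IsSolOn (phiVF φ) γ (Ici 0)) (h0 : γ 0 ≠ 0) :
    ∃ k R C : ℝ, 0 < k ∧ ∀ t, 0 ≤ t → k ^ 2 ≤ (γ t).1 ^ 2 + (γ t).2 ^ 2 ∧ |(γ t).1| ≤ R ∧
      |(γ t).2| ≤ R ∧ |φ (γ t)| ≤ C := by
  obtain ⟨δ, hδ, -, hlow⟩ := b_lower H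
  set V0 := (γ 0).1 ^ 2 + (γ 0).2 ^ 2 with hV0
  have hV : 0 < V0 := b_Vpos h0
  have hk : 0 < min δ (√V0) := lt_min hδ (Real.sqrt_pos.2 hV)
  have hk2 : (min δ (√V0)) ^ 2 ≤ V0 := by
    have : (min δ (√V0)) ^ 2 ≤ (√V0) ^ 2 := pow_le_pow_left₀ hk.le (min_le_right _ _) 2
    rwa [Real.sq_sqrt hV.le] at this
  set R := 1 + M ^ 2 + V0
  have hR : 1 ≤ R := by nlinarith [sq_nonneg M]
  have hup := b_upper H (K := R) h (by linarith) (by nlinarith [sq_nonneg M])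
  have hx : ∀ t, 0 ≤ t → |(γ t).1| ≤ R ∧ |(γ t).2| ≤ R := by
    intro t ht
    have := hup t ht
    have hh : R ≤ R ^ 2 := by nlinarith
    refine ⟨abs_le_of_sq_le_sq ?_ (by linarith), abs_le_of_sq_le_sq ?_ (by linarith)⟩ <;> nlinarith [sq_nonneg (γ t).1, sq_nonneg (γ t).2]
  obtain ⟨C, hC⟩ := (isCompact_closedBall (0 : ℝ × ℝ) R).exists_bound_of_continuousOn
    H.c1.continuous.continuousOn
  refine ⟨_, R, C, hk, fun t ht => ⟨hlow γ _ h (min_le_left _ _) hk hk2 t ht, (hx t ht).1,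
    (hx t ht).2, ?_⟩⟩
  refine hC _ ?_
  rw [mem_closedBall_zero_iff, Prod.norm_def, max_le_iff]
  exact hx t ht

lemma b_nopos (H : BH φ M) {γ : ℝ → ℝ × ℝ} (h : IsSolOn (phiVF φ) γ (Ici 0)) (h0 : γ 0 ≠ 0)
    {a : ℝ} (ha : 0 ≤ a) : ¬ ∀ t, a ≤ t → 0 < (γ t).2 := by
  intro hp
  obtain ⟨k, R, C, hk, hb⟩ := b_bounds H h h0
  exact a_nopos (a := a) (x := fun t => (γ t).1) (y := fun t => (γ t).2) (f := fun t => φ (γ t))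
    (fun t ht => a_fst (h t (ha.trans ht))) (fun t ht => a_snd (h t (ha.trans ht)))
    (fun t ht => (hb t (ha.trans ht)).2.2.2) (fun t ht => (hb t (ha.trans ht)).2.1)
    (fun t ht => (hb t (ha.trans ht)).2.2.1) hk (fun t ht => (hb t (ha.trans ht)).1) hp

lemma b_noneg (H : BH φ M) {γ : ℝ → ℝ × ℝ} (h : IsSolOn (phiVF φ) γ (Ici 0)) (h0 : γ 0 ≠ 0)
    {a : ℝ} (ha : 0 ≤ a) : ¬ ∀ t, a ≤ t → (γ t).2 < 0 := by
  intro hp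
  obtain ⟨k, R, C, hk, hb⟩ := b_bounds H h h0
  refine a_nopos (a := a) (x := fun t => -(γ t).1) (y := fun t => -(γ t).2) (f := fun t => φ (γ t))
    (C := C) (R := R)
    (fun t ht => (a_fst (h t (ha.trans ht))).neg) (fun t ht => ?_)
    (fun t ht => (hb t (ha.trans ht)).2.2.2) (fun t ht => by rw [abs_neg]; exact (hb t (ha.trans ht)).2.1)
    (fun t ht => by rw [abs_neg]; exact (hb t (ha.trans ht)).2.2.1) hk
    (fun t ht => by simpa using (hb t (ha.trans ht)).1) (fun t ht => by simpa using hp t ht)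
  refine (a_snd (h t (ha.trans ht))).neg.congr_deriv ?_
  simp [phiVF]
  ring

lemma b_hit (H : BH φ M) {γ : ℝ → ℝ × ℝ} (h : IsSolOn (phiVF φ) γ (Ici 0)) (h0 : γ 0 ≠ 0) :
    ∃ t, 0 ≤ t ∧ (γ t).2 = 0 := by
  have h1 := b_nopos H h h0 le_rfl
  have h2 := b_noneg H h h0 le_rfl
  push Not at h1 h2
  obtain ⟨a, ha, ha'⟩ := h1
  obtain ⟨b, hb, hb'⟩ := h2
  have hc : ContinuousOn (fun t => (γ t).2) (Ici 0) := continuous_snd.comp_continuousOn (b_cont h)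
  have := isPreconnected_Ici.intermediate_value (mem_Ici.2 ha) (mem_Ici.2 hb) hc ⟨ha', hb'⟩
  obtain ⟨t, ht, ht'⟩ := this
  exact ⟨t, ht, ht'⟩

end

section
def cpt (ρ s : ℝ) : ℝ × ℝ := (Real.exp ρ * Real.cos s, -(Real.exp ρ * Real.sin s))
def cD (φ : ℝ × ℝ → ℝ) (ρ s : ℝ) : ℝ := 1 - Real.sin s * Real.cos s * φ (cpt ρ s)
def cf (φ : ℝ × ℝ → ℝ) (ρ s : ℝ) : ℝ := -(Real.sin s ^ 2 * φ (cpt ρ s)) / cD φ ρ s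

variable {φ : ℝ × ℝ → ℝ} {M : ℝ}

lemma c_V (ρ s : ℝ) : (cpt ρ s).1 ^ 2 + (cpt ρ s).2 ^ 2 = Real.exp ρ ^ 2 := by
  simp only [cpt]
  linear_combination Real.exp ρ ^ 2 * (Real.sin_sq_add_cos_sq s)

lemma c_N (ρ s : ℝ) : bN φ (cpt ρ s) = Real.exp ρ ^ 2 * cD φ ρ s := by
  have := c_V ρ s
  unfold bN cD
  rw [this]
  simp only [cpt]
  ring

lemma c_logV (ρ s : ℝ) : Real.log ((cpt ρ s).1 ^ 2 + (cpt ρ s).2 ^ 2) / 2 = ρ := by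
  rw [c_V, Real.log_pow, Real.log_exp]; push_cast; ring

lemma c_tau (H : BH φ M) {γ : ℝ → ℝ × ℝ} (h : IsSolOn (phiVF φ) γ (Ici 0)) {ρ0 a : ℝ}
    (h0 : γ 0 = cpt ρ0 a) (hN : 0 < bN φ (γ 0)) :
    ∃ (L τ : ℝ → ℝ) (g : ℝ → ℝ), τ 0 = a ∧ (∀ t, HasDerivAt τ (g (max t 0)) t) ∧
      (∀ t, 0 ≤ t → 0 < g t ∧ g t = cD φ (L t) (τ t) ∧
        HasDerivAt L (-(Real.sin (τ t) ^ 2 * φ (cpt (L t) (τ t)))) t ∧ γ t = cpt (L t) (τ t)) := by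
  have hne : ∀ t, 0 ≤ t → 0 < (γ t).1 ^ 2 + (γ t).2 ^ 2 := by
    have h00 : γ 0 ≠ 0 := by
      intro hz
      rw [hz] at hN
      simp [bN] at hN
    obtain ⟨k, R, C, hk, hb⟩ := b_bounds H h h00
    intro t ht
    have := (hb t ht).1
    have : 0 < k ^ 2 := by positivity
    linarith
  have hNp := b_Npos H h hN
  obtain ⟨τ0, hτ0, hτd⟩ := a_antideriv (g := fun t => bN φ (γ t) / ((γ t).1 ^ 2 + (γ t).2 ^ 2))
    (by
      refine ContinuousOn.div ((b_cN H.c1).comp_continuousOn (b_cont h)) ?_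
        (fun t ht => (hne t ht).ne')
      exact ((continuous_fst.comp_continuousOn (b_cont h)).pow 2).add
        ((continuous_snd.comp_continuousOn (b_cont h)).pow 2))
  set g : ℝ → ℝ := fun t => bN φ (γ t) / ((γ t).1 ^ 2 + (γ t).2 ^ 2) with hg
  set L : ℝ → ℝ := fun t => Real.log ((γ t).1 ^ 2 + (γ t).2 ^ 2) / 2 with hL
  set τ : ℝ → ℝ := fun t => a + τ0 t with hτ
  have hτd' : ∀ t, HasDerivAt τ (g (max t 0)) t := fun t => (hτd t).const_add a
  have hLd : ∀ t, 0 ≤ t → HasDerivAt L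
      (-((γ t).2 ^ 2 * φ (γ t)) / ((γ t).1 ^ 2 + (γ t).2 ^ 2)) t := by
    intro t ht
    refine (((b_V1 (h t ht)).log (hne t ht).ne').div_const 2).congr_deriv ?_
    field_simp
  have hτ1 : ∀ t, 0 ≤ t → HasDerivAt τ (bN φ (γ t) / ((γ t).1 ^ 2 + (γ t).2 ^ 2)) t := by
    intro t ht
    have := hτd' t
    rwa [max_eq_left ht] at this
  have hu : ∀ t, 0 ≤ t → HasDerivAt (fun t => Real.exp (-L t) *
      ((γ t).1 * Real.cos (τ t) - (γ t).2 * Real.sin (τ t))) 0 t := by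
    intro t ht
    have hx := a_fst (h t ht)
    have hy := a_snd (h t ht)
    have hV := (hne t ht).ne'
    refine ((hLd t ht).neg.exp.mul ((hx.mul (hτ1 t ht).cos).sub (hy.mul (hτ1 t ht).sin))).congr_deriv ?_
    simp only [phiVF, bN, Pi.neg_apply]
    field_simp
    simp only [Pi.mul_apply, Pi.sub_apply]
    field_simp
    ring
  have hv : ∀ t, 0 ≤ t → HasDerivAt (fun t => Real.exp (-L t) *
      ((γ t).1 * Real.sin (τ t) + (γ t).2 * Real.cos (τ t))) 0 t := by
    intro t ht
    have hx := a_fst (h t ht)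
    have hy := a_snd (h t ht)
    have hV := (hne t ht).ne'
    refine ((hLd t ht).neg.exp.mul ((hx.mul (hτ1 t ht).sin).add (hy.mul (hτ1 t ht).cos))).congr_deriv ?_
    simp only [phiVF, bN, Pi.neg_apply]
    field_simp
    simp only [Pi.mul_apply, Pi.add_apply]
    field_simp
    ring
  have hL0 : L 0 = ρ0 := by simp only [hL]; rw [h0, c_logV]
  have ht0 : τ 0 = a := by simp [hτ, hτ0]
  have hrep : ∀ t, 0 ≤ t → γ t = cpt (L t) (τ t) := by
    intro t ht
    have h1 := a_const hu ht
    have h2 := a_const hv ht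
    rw [hL0, ht0, h0] at h1 h2
    simp only [cpt] at h1 h2
    have e0 : Real.exp (-ρ0) * Real.exp ρ0 = 1 := by rw [← Real.exp_add]; simp
    have e1 : Real.exp (-L t) * Real.exp (L t) = 1 := by rw [← Real.exp_add]; simp
    have s0 := Real.sin_sq_add_cos_sq a
    have s1 := Real.sin_sq_add_cos_sq (τ t)
    have h1' : Real.exp (-L t) * ((γ t).1 * Real.cos (τ t) - (γ t).2 * Real.sin (τ t)) = 1 := by
      rw [h1]; linear_combination e0 * (Real.sin a ^ 2 + Real.cos a ^ 2) + s0
    have h2' : Real.exp (-L t) * ((γ t).1 * Real.sin (τ t) + (γ t).2 * Real.cos (τ t)) = 0 := by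
      rw [h2]; ring
    have h3 : (γ t).1 * Real.cos (τ t) - (γ t).2 * Real.sin (τ t) = Real.exp (L t) := by
      linear_combination Real.exp (L t) * h1' - ((γ t).1 * Real.cos (τ t) - (γ t).2 * Real.sin (τ t)) * e1
    have h4 : (γ t).1 * Real.sin (τ t) + (γ t).2 * Real.cos (τ t) = 0 := by
      linear_combination Real.exp (L t) * h2' - ((γ t).1 * Real.sin (τ t) + (γ t).2 * Real.cos (τ t)) * e1
    ext
    · simp only [cpt]
      linear_combination Real.cos (τ t) * h3 + Real.sin (τ t) * h4 - (γ t).1 * s1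
    · simp only [cpt]
      linear_combination -Real.sin (τ t) * h3 + Real.cos (τ t) * h4 - (γ t).2 * s1
  refine ⟨L, τ, g, ht0, hτd', fun t ht => ⟨div_pos (hNp t ht) (hne t ht), ?_, ?_, hrep t ht⟩⟩
  · simp only [hg]
    have := hrep t ht
    have h1 : bN φ (γ t) / ((γ t).1 ^ 2 + (γ t).2 ^ 2) = bN φ (cpt (L t) (τ t)) / ((cpt (L t) (τ t)).1 ^ 2 + (cpt (L t) (τ t)).2 ^ 2) := by rw [← this]
    rw [h1, c_N, c_V]
    have := (Real.exp_pos (L t)).ne'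
    field_simp
  · refine (hLd t ht).congr_deriv ?_
    have h1 : -((γ t).2 ^ 2 * φ (γ t)) / ((γ t).1 ^ 2 + (γ t).2 ^ 2) = -((cpt (L t) (τ t)).2 ^ 2 * φ (cpt (L t) (τ t))) / ((cpt (L t) (τ t)).1 ^ 2 + (cpt (L t) (τ t)).2 ^ 2) := by rw [← hrep t ht]
    rw [h1, c_V]
    have := (Real.exp_pos (L t)).ne'
    have h2 : (cpt (L t) (τ t)).2 = -(Real.exp (L t) * Real.sin (τ t)) := rfl
    rw [h2]
    field_simp

lemma c_polar (H : BH φ M) {γ : ℝ → ℝ × ℝ} (h : IsSolOn (phiVF φ) γ (Ici 0)) {ρ0 a : ℝ}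
    (h0 : γ 0 = cpt ρ0 a) (hN : 0 < bN φ (γ 0)) :
    ∃ ρ σ τ : ℝ → ℝ, τ 0 = a ∧ (∀ t, σ (τ t) = t) ∧ (∀ s, τ (σ s) = s) ∧ StrictMono τ ∧
      StrictMono σ ∧ Tendsto τ atTop atTop ∧ ρ a = ρ0 ∧
      ∀ s, a ≤ s → γ (σ s) = cpt (ρ s) s ∧ 0 < cD φ (ρ s) s ∧ HasDerivAt ρ (cf φ (ρ s) s) s := by
  obtain ⟨L, τ, g, ht0, hτd, hall⟩ := c_tau H h h0 hN
  have hgp : ∀ t, 0 < g (max t 0) := fun t => (hall _ (le_max_right _ _)).1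
  have hmono : StrictMono τ := strictMono_of_deriv_pos (fun t => by rw [(hτd t).deriv]; exact hgp t)
  have hc : Continuous τ := continuous_iff_continuousAt.2 fun t => (hτd t).continuousAt
  have h00 : γ 0 ≠ 0 := by
    intro hz
    rw [hz] at hN
    simp [bN] at hN
  have htop : Tendsto τ atTop atTop := by
    rcases tendsto_atTop_of_monotone hmono.monotone with h1 | ⟨l, hl⟩
    · exact h1
    exfalso
    have hlt : ∀ t, τ t < l := fun t =>
      (hmono (lt_add_one t)).trans_le (hmono.monotone.ge_of_tendsto hl (t + 1))
    set k : ℤ := ⌈l / π⌉ - 1 with hk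
    have hk1 : (k : ℝ) * π < l := by
      have := Int.ceil_lt_add_one (l / π)
      rw [← lt_div_iff₀ Real.pi_pos, hk]; push_cast; linarith
    have hk2 : l ≤ (k : ℝ) * π + π := by
      have := Int.le_ceil (l / π)
      rw [div_le_iff₀ Real.pi_pos] at this
      rw [hk]; push_cast; linarith
    obtain ⟨b, hb⟩ := eventually_atTop.1 (hl.eventually_const_lt hk1)
    have hsin : ∀ t, max b 0 ≤ t → 0 < (-1) ^ k * Real.sin (τ t) := by
      intro t ht
      rw [← Real.sin_sub_int_mul_pi]
      have h1 := hb t ((le_max_left _ _).trans ht)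
      have h2 := hlt t
      exact Real.sin_pos_of_pos_of_lt_pi (by linarith) (by linarith)
    have hy : ∀ t, max b 0 ≤ t → (γ t).2 = -(Real.exp (L t) * Real.sin (τ t)) := by
      intro t ht
      rw [(hall t ((le_max_right _ _).trans ht)).2.2.2]; rfl
    rcases Int.even_or_odd k with he | ho
    · refine b_noneg H h h00 (le_max_right b 0) (fun t ht => ?_)
      have := hsin t ht
      rw [he.neg_one_zpow, one_mul] at this
      rw [hy t ht]
      have := mul_pos (Real.exp_pos (L t)) this
      linarith
    · refine b_nopos H h h00 (le_max_right b 0) (fun t ht => ?_)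
      have := hsin t ht
      rw [ho.neg_one_zpow] at this
      rw [hy t ht]
      have := mul_pos (Real.exp_pos (L t)) this
      linarith
  have hbot : Tendsto τ atBot atBot := by
    have hg0 : 0 < g 0 := (hall 0 le_rfl).1
    have h1 : ∀ᶠ t in atBot, τ t ≤ a + g 0 * t := by
      filter_upwards [eventually_lt_atBot 0] with t ht
      obtain ⟨c, hc1, hc2⟩ := exists_hasDerivAt_eq_slope τ (fun t => g (max t 0)) ht
        hc.continuousOn (fun u _ => hτd u)
      rw [max_eq_right hc1.2.le, eq_div_iff (by linarith), ht0] at hc2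
      linarith
    refine tendsto_atBot_mono' _ h1 ?_
    exact tendsto_atBot_add_const_left _ _ (tendsto_id.const_mul_atBot hg0)
  have hsurj : Function.Surjective τ := hc.surjective htop hbot
  let e := hmono.orderIsoOfSurjective τ hsurj
  have he : ∀ t, e t = τ t := fun t => rfl
  have hστ : ∀ t, e.symm (τ t) = t := fun t => e.symm_apply_apply t
  have hτσ : ∀ s, τ (e.symm s) = s := fun s => e.apply_symm_apply s
  refine ⟨fun s => L (e.symm s), e.symm, τ, ht0, hστ, hτσ, hmono, e.symm.strictMono, htop, ?_, ?_⟩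
  · have h1 : e.symm a = 0 := by rw [← ht0, hστ]
    have h2 := (hall 0 le_rfl).2.2.2
    rw [h0, ht0] at h2
    simp only [h1]
    have h3 := c_logV (L 0) a
    rw [← h2, c_logV] at h3
    exact h3.symm
  · intro s hs
    have hs0 : 0 ≤ e.symm s := by
      have h1 : e.symm a = 0 := by rw [← ht0, hστ]
      rw [← h1]
      exact e.symm.monotone hs
    obtain ⟨g1, g2, g3, g4⟩ := hall _ hs0
    rw [hτσ] at g2 g3 g4
    refine ⟨g4, by rw [← g2]; exact g1, ?_⟩
    have hd : HasDerivAt e.symm (g (e.symm s))⁻¹ s := by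
      refine HasDerivAt.of_local_left_inverse (f := τ) e.symm.continuous.continuousAt ?_ g1.ne'
        (Eventually.of_forall hτσ)
      have := hτd (e.symm s)
      rwa [max_eq_left hs0] at this
    refine (g3.comp s hd).congr_deriv ?_
    rw [g2]
    rfl

end

section
def PS (φ : ℝ × ℝ → ℝ) (ρ : ℝ → ℝ) : Prop :=
  ∀ s, 0 ≤ s → 0 < cD φ (ρ s) s ∧ HasDerivAt ρ (cf φ (ρ s) s) s

variable {φ : ℝ × ℝ → ℝ} {M : ℝ}

lemma d_phid (H : BH φ M) (r s : ℝ) : HasDerivAt (fun r => φ (cpt r s)) (bE φ (cpt r s)) r := by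
  have h1 : HasDerivAt (fun r => cpt r s) (cpt r s) r :=
    ((Real.hasDerivAt_exp r).mul_const _).prodMk ((Real.hasDerivAt_exp r).mul_const _).neg
  exact b_phi H.c1 h1

lemma d_mono (H : BH φ M) (s : ℝ) : Monotone (fun r => φ (cpt r s)) := by
  refine monotone_of_deriv_nonneg (fun r => (d_phid H r s).differentiableAt) (fun r => ?_)
  rw [(d_phid H r s).deriv]
  exact H.star _

lemma d_nonneg (H : BH φ M) (s r1 r2 : ℝ) : 0 ≤ (r1 - r2) * (φ (cpt r1 s) - φ (cpt r2 s)) := by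
  rcases le_total r1 r2 with h | h
  · exact mul_nonneg_of_nonpos_of_nonpos (by linarith) (by have := d_mono H s h; simp only at this; linarith)
  · exact mul_nonneg (by linarith) (by have := d_mono H s h; simp only at this; linarith)

lemma d_ne (H : BH φ M) (s r1 r2 : ℝ) (hE : 0 < bE φ (cpt r2 s)) (hne : r1 ≠ r2) :
    φ (cpt r1 s) ≠ φ (cpt r2 s) := by
  intro heq
  have hd := d_phid H r2 s
  rcases lt_or_gt_of_ne hne with h | h
  · have h1 : HasDerivWithinAt (fun r => φ (cpt r s)) 0 (Icc r1 r2) r2 := by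
      refine (hasDerivWithinAt_const r2 (Icc r1 r2) (φ (cpt r2 s))).congr (fun u hu => ?_) rfl
      have a1 := d_mono H s hu.1
      have a2 := d_mono H s hu.2
      simp only at a1 a2
      linarith
    have h2 := (uniqueDiffOn_Icc h r2 ⟨h.le, le_rfl⟩).eq_deriv _ h1 hd.hasDerivWithinAt
    linarith
  · have h1 : HasDerivWithinAt (fun r => φ (cpt r s)) 0 (Icc r2 r1) r2 := by
      refine (hasDerivWithinAt_const r2 (Icc r2 r1) (φ (cpt r2 s))).congr (fun u hu => ?_) rfl
      have a1 := d_mono H s hu.1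
      have a2 := d_mono H s hu.2
      simp only at a1 a2
      linarith
    have h2 := (uniqueDiffOn_Icc h r2 ⟨le_rfl, h.le⟩).eq_deriv _ h1 hd.hasDerivWithinAt
    linarith

lemma d_diff {ρ1 ρ2 : ℝ → ℝ} (h1 : PS φ ρ1) (h2 : PS φ ρ2) {s : ℝ} (hs : 0 ≤ s) :
    HasDerivAt (fun s => (ρ1 s - ρ2 s) ^ 2)
      (-(2 * Real.sin s ^ 2 * ((ρ1 s - ρ2 s) * (φ (cpt (ρ1 s) s) - φ (cpt (ρ2 s) s)))
        / (cD φ (ρ1 s) s * cD φ (ρ2 s) s))) s := by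
  refine (((h1 s hs).2.sub (h2 s hs).2).pow 2).congr_deriv ?_
  have n1 := (h1 s hs).1.ne'
  have n2 := (h2 s hs).1.ne'
  simp only [cf, Pi.sub_apply]
  field_simp
  simp only [cD]
  ring

lemma d_anti (H : BH φ M) {ρ1 ρ2 : ℝ → ℝ} (h1 : PS φ ρ1) (h2 : PS φ ρ2) :
    AntitoneOn (fun s => (ρ1 s - ρ2 s) ^ 2) (Ici 0) := by
  refine antitoneOn_of_deriv_nonpos (convex_Ici 0)
    (fun s hs => (d_diff h1 h2 hs).continuousAt.continuousWithinAt) ?_ ?_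
  · intro s hs
    rw [interior_Ici] at hs
    exact (d_diff h1 h2 (le_of_lt hs)).differentiableAt.differentiableWithinAt
  · intro s hs
    rw [interior_Ici] at hs
    have hs' : 0 ≤ s := le_of_lt hs
    rw [(d_diff h1 h2 hs').deriv]
    have := d_nonneg H s (ρ1 s) (ρ2 s)
    have := (h1 s hs').1
    have := (h2 s hs').1
    rw [neg_nonpos]
    positivity

lemma d_abs (H : BH φ M) {ρ1 ρ2 : ℝ → ℝ} (h1 : PS φ ρ1) (h2 : PS φ ρ2) {s t : ℝ} (hs : 0 ≤ s)
    (hst : s ≤ t) : |ρ1 t - ρ2 t| ≤ |ρ1 s - ρ2 s| :=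
  sq_le_sq.1 (d_anti H h1 h2 hs (mem_Ici.2 (hs.trans hst)) hst)

lemma d_cpt (r s : ℝ) : cpt r (s + 2 * π) = cpt r s := by simp [cpt]

lemma d_shift {ρ : ℝ → ℝ} (h : PS φ ρ) : PS φ (fun s => ρ (s + 2 * π)) := by
  intro s hs
  have h1 := h (s + 2 * π) (by positivity)
  have e1 : cD φ (ρ (s + 2 * π)) (s + 2 * π) = cD φ (ρ (s + 2 * π)) s := by simp [cD, d_cpt]
  have e2 : cf φ (ρ (s + 2 * π)) (s + 2 * π) = cf φ (ρ (s + 2 * π)) s := by simp [cf, d_cpt, e1]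
  rw [e1, e2] at h1
  exact ⟨h1.1, h1.2.comp_add_const s (2 * π)⟩

lemma d_shiftn {ρ : ℝ → ℝ} (h : PS φ ρ) (n : ℕ) : PS φ (fun s => ρ (s + n * (2 * π))) := by
  induction n with
  | zero => simpa using h
  | succ n ih =>
    have := d_shift ih
    convert this using 3
    push_cast; ring

lemma d_Npos (q : ℝ) : 0 < bN φ (cpt q 0) := by
  rw [c_N]
  simp [cD]
  positivity

lemma d_ne0 (q a : ℝ) : cpt q a ≠ 0 := by
  intro h
  have := c_V q a
  rw [h] at this
  simp at this
  exact (pow_pos (Real.exp_pos q) 2).ne this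

/-- polar data for solutions issued from the positive axis -/
lemma d_polar (H : BH φ M) {γ : ℝ → ℝ × ℝ} (h : IsSolOn (phiVF φ) γ (Ici 0)) {q : ℝ}
    (h0 : γ 0 = cpt q 0) :
    ∃ ρ σ τ : ℝ → ℝ, τ 0 = 0 ∧ (∀ t, σ (τ t) = t) ∧ (∀ s, τ (σ s) = s) ∧ StrictMono τ ∧
      StrictMono σ ∧ Tendsto τ atTop atTop ∧ ρ 0 = q ∧ PS φ ρ ∧
      ∀ s, 0 ≤ s → γ (σ s) = cpt (ρ s) s := by
  obtain ⟨ρ, σ, τ, a1, a2, a3, a4, a5, a6, a7, a8⟩ := c_polar H h h0 (by rw [h0]; exact d_Npos q)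
  exact ⟨ρ, σ, τ, a1, a2, a3, a4, a5, a6, a7, fun s hs => (a8 s hs).2, fun s hs => (a8 s hs).1⟩

lemma d_axis (H : BH φ M) {γ : ℝ → ℝ × ℝ} (h : IsSolOn (phiVF φ) γ (Ici 0)) (h0 : γ 0 ≠ 0) :
    ∃ t q, 0 ≤ t ∧ γ t = cpt q 0 := by
  obtain ⟨t1, ht1, hy⟩ := b_hit H h h0
  have hne : γ t1 ≠ 0 := by
    obtain ⟨k, R, C, hk, hb⟩ := b_bounds H h h0
    intro hz
    have := (hb t1 ht1).1
    rw [hz] at this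
    simp at this
    exact hk.ne' this
  have hx : (γ t1).1 ≠ 0 := fun hx => hne (Prod.ext hx hy)
  rcases lt_or_gt_of_ne hx with hlt | hgt
  · have hs : IsSolOn (phiVF φ) (fun t => γ (t + t1)) (Ici 0) := by
      intro t ht
      exact a_shift h t (by simp only [mem_Ici] at ht ⊢; linarith)
    have hg : (fun t => γ (t + t1)) 0 = cpt (Real.log (-(γ t1).1)) π := by
      simp only [zero_add, cpt]
      rw [Real.exp_log (by linarith)]
      ext <;> simp [hy]
    have hN : 0 < bN φ ((fun t => γ (t + t1)) 0) := by
      rw [hg, c_N]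
      simp [cD]
      positivity
    obtain ⟨ρ, σ, τ, a1, a2, a3, a4, a5, a6, a7, a8⟩ := c_polar H hs hg hN
    refine ⟨σ (2 * π) + t1, ρ (2 * π), ?_, ?_⟩
    · have h1 : σ π = 0 := by rw [← a1, a2]
      have h2 : σ π ≤ σ (2 * π) := a5.monotone (by linarith [Real.pi_pos])
      linarith
    · have := (a8 (2 * π) (by linarith [Real.pi_pos])).1
      refine this.trans ?_
      simpa using d_cpt (ρ (2 * π)) 0
  · refine ⟨t1, Real.log (γ t1).1, ht1, ?_⟩
    simp only [cpt]
    rw [Real.exp_log hgt]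
    ext <;> simp [hy]

lemma d_ex (H : BH φ M) (q : ℝ) : ∃ ρ : ℝ → ℝ, ρ 0 = q ∧ PS φ ρ := by
  obtain ⟨γ, h0, h⟩ := b_exist H (cpt q 0)
  obtain ⟨ρ, σ, τ, a1, a2, a3, a4, a5, a6, a7, a8, a9⟩ := d_polar H h h0
  exact ⟨ρ, a7, a8⟩

/-- Poincaré map -/
lemma d_P (H : BH φ M) : ∃ P : ℝ → ℝ, Continuous P ∧ (∀ ρ, PS φ ρ → ρ (2 * π) = P (ρ 0)) := by
  choose ρ h0 hP using d_ex H
  have h2 : (0 : ℝ) ≤ 2 * π := by positivity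
  refine ⟨fun q => ρ q (2 * π), ?_, fun r hr => ?_⟩
  · have : LipschitzWith 1 (fun q => ρ q (2 * π)) := by
      refine LipschitzWith.of_dist_le_mul fun a b => ?_
      have := d_abs H (hP a) (hP b) le_rfl h2
      rw [h0, h0] at this
      simpa [Real.dist_eq] using this
    exact this.continuous
  · have := d_abs H hr (hP (r 0)) le_rfl h2
    rw [h0, sub_self, abs_zero] at this
    exact sub_eq_zero.1 (abs_eq_zero.1 (le_antisymm this (abs_nonneg _)))

/-- existence of closed orbit -/
lemma d_closed (H : BH φ M) : ∃ (γ : ℝ → ℝ × ℝ) (q : ℝ) (ρ σ τ : ℝ → ℝ),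
    IsSolOn (phiVF φ) γ (Ici 0) ∧ γ 0 = cpt q 0 ∧ τ 0 = 0 ∧ (∀ t, σ (τ t) = t) ∧
    (∀ s, τ (σ s) = s) ∧ StrictMono τ ∧ StrictMono σ ∧ Tendsto τ atTop atTop ∧ ρ 0 = q ∧ PS φ ρ ∧
    (∀ s, 0 ≤ s → γ (σ s) = cpt (ρ s) s) ∧ ρ (2 * π) = q ∧ ∀ s, 0 ≤ s → Real.exp (ρ s) ≤ M := by
  obtain ⟨P, hPc, hP⟩ := d_P H
  obtain ⟨δ, hδ, hδM, hlow⟩ := b_lower H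
  have hinv : ∀ (γ : ℝ → ℝ × ℝ) (q : ℝ) (ρ σ : ℝ → ℝ), IsSolOn (phiVF φ) γ (Ici 0) → γ 0 = cpt q 0 →
      q ∈ Icc (Real.log δ) (Real.log M) → (∀ s, 0 ≤ s → γ (σ s) = cpt (ρ s) s) →
      (∀ s, 0 ≤ s → 0 ≤ σ s) → ∀ s, 0 ≤ s → δ ≤ Real.exp (ρ s) ∧ Real.exp (ρ s) ≤ M := by
    intro γ q ρ σ h h0 hq hr hσ s hs
    have hq1 : δ ≤ Real.exp q := (Real.log_le_iff_le_exp hδ).1 hq.1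
    have hq2 : Real.exp q ≤ M := (Real.le_log_iff_exp_le H.Mpos).1 hq.2
    have h1 := hlow γ δ h le_rfl hδ (by rw [h0, c_V]; exact pow_le_pow_left₀ hδ.le hq1 2) (σ s) (hσ s hs)
    have h2 := b_upper H h le_rfl (by rw [h0, c_V]; exact pow_le_pow_left₀ (Real.exp_pos _).le hq2 2) (σ s) (hσ s hs)
    rw [hr s hs, c_V] at h1 h2
    exact ⟨(sq_le_sq₀ hδ.le (Real.exp_pos _).le).1 h1, (sq_le_sq₀ (Real.exp_pos _).le H.Mpos.le).1 h2⟩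
  have hσ0 : ∀ σ τ : ℝ → ℝ, τ 0 = 0 → (∀ t, σ (τ t) = t) → StrictMono σ → ∀ s, 0 ≤ s → 0 ≤ σ s := by
    intro σ τ h0 h1 h2 s hs
    have h3 : σ 0 = 0 := by have := h1 0; rwa [h0] at this
    rw [← h3]
    exact h2.monotone hs
  have h2π : (0 : ℝ) ≤ 2 * π := by positivity
  have hmaps : MapsTo P (Icc (Real.log δ) (Real.log M)) (Icc (Real.log δ) (Real.log M)) := by
    intro q hq
    obtain ⟨γ, h0, h⟩ := b_exist H (cpt q 0)
    obtain ⟨ρ, σ, τ, a1, a2, a3, a4, a5, a6, a7, a8, a9⟩ := d_polar H h h0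
    have := hinv γ q ρ σ h h0 hq a9 (hσ0 σ τ a1 a2 a5) (2 * π) h2π
    have h3 := hP ρ a8
    rw [a7] at h3
    rw [← h3]
    exact ⟨(Real.log_le_iff_le_exp hδ).2 this.1, (Real.le_log_iff_exp_le H.Mpos).2 this.2⟩
  obtain ⟨q, hq, hfix⟩ := exists_mem_Icc_isFixedPt_of_mapsTo hPc.continuousOn
    (Real.log_le_log hδ hδM) hmaps
  obtain ⟨γ, h0, h⟩ := b_exist H (cpt q 0)
  obtain ⟨ρ, σ, τ, a1, a2, a3, a4, a5, a6, a7, a8, a9⟩ := d_polar H h h0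
  refine ⟨γ, q, ρ, σ, τ, h, h0, a1, a2, a3, a4, a5, a6, a7, a8, a9, ?_, fun s hs => ?_⟩
  · rw [hP ρ a8, a7, hfix]
  · exact (hinv γ q ρ σ h h0 hq a9 (hσ0 σ τ a1 a2 a5) s hs).2

lemma d_periodic (hφ : ContDiff ℝ 1 φ) {γ : ℝ → ℝ × ℝ} (h : IsSolOn (phiVF φ) γ (Ici 0)) {T : ℝ}
    (hT : 0 < T) (hc : γ T = γ 0) :
    ∃ μ : ℝ → ℝ × ℝ, (∀ t, HasDerivAt μ (phiVF φ (μ t)) t) ∧ (∀ t, μ (t + T) = μ t) ∧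
      ∀ t, 0 ≤ t → μ t = γ t := by
  have h1 : ∀ t, 0 ≤ t → γ (t + T) = γ t := by
    have hs : IsSolOn (phiVF φ) (fun t => γ (t + T)) (Ici 0) := by
      intro t ht
      exact a_shift h t (by simp only [mem_Ici] at ht ⊢; linarith)
    exact fun t ht => a_unique_Ici (b_contDiff hφ) hs h le_rfl (by simpa using hc) ht
  have h2 : ∀ (n : ℕ) t, 0 ≤ t → γ (t + n * T) = γ t := by
    intro n
    induction n with
    | zero => simp
    | succ n ih =>
      intro t ht
      have e : t + ((n + 1 : ℕ) : ℝ) * T = (t + n * T) + T := by push_cast; ring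
      rw [e, h1 _ (by positivity), ih t ht]
  have h3 : ∀ (n m : ℕ) t, 0 ≤ t + n * T → n ≤ m → γ (t + n * T) = γ (t + m * T) := by
    intro n m t ht hnm
    obtain ⟨k, rfl⟩ := Nat.exists_eq_add_of_le hnm
    rw [← h2 k _ ht]
    congr 1; push_cast; ring
  have h4 : ∀ t : ℝ, 0 ≤ t + ⌈|t| / T⌉₊ * T := by
    intro t
    have := Nat.le_ceil (|t| / T)
    rw [div_le_iff₀ hT] at this
    linarith [neg_abs_le t]
  have h5 : ∀ (n : ℕ) t, 0 ≤ t + n * T → γ (t + ⌈|t| / T⌉₊ * T) = γ (t + n * T) := by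
    intro n t ht
    rcases le_total ⌈|t| / T⌉₊ n with hh | hh
    · exact h3 _ _ _ (h4 t) hh
    · exact (h3 _ _ _ ht hh).symm
  refine ⟨fun t => γ (t + ⌈|t| / T⌉₊ * T), fun t => ?_, fun t => ?_, fun t ht => ?_⟩
  · set n := ⌈|t| / T⌉₊ + 1 with hn
    have hpos : 0 < t + n * T := by
      have := h4 t
      rw [hn]; push_cast; linarith
    have hev : (fun t => γ (t + ⌈|t| / T⌉₊ * T)) =ᶠ[𝓝 t] fun t => γ (t + n * T) := by
      have : ∀ᶠ u : ℝ in 𝓝 t, 0 < u + n * T :=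
        ((continuous_id.add continuous_const).tendsto t).eventually_const_lt hpos
      filter_upwards [this] with u hu
      exact h5 n u hu.le
    have h6 := (h (t + n * T) hpos.le).comp_add_const t (n * T)
    have h7 := h6.congr_of_eventuallyEq hev
    have h8 := hev.eq_of_nhds
    rw [← h8] at h7
    exact h7
  · set n := ⌈|t| / T⌉₊ with hn
    have := h4 t
    have e : t + T + n * T = (t + n * T) + T := by ring
    show γ (t + T + _) = _
    rw [h5 n (t + T) (by rw [e]; linarith), e, h1 _ this]
  · have := h5 0 t (by simpa using ht)
    simpa using this

end

section
variable {φ : ℝ × ℝ → ℝ} {M : ℝ}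

lemma e_star (H : BH φ M) {μ : ℝ → ℝ × ℝ} {T : ℝ} (hc : IsCycle (phiVF φ) μ T)
    (hnz : ∀ t, μ t ≠ 0) : ∃ t ∈ Ico 0 T, 0 < bE φ (μ t) ∧ (μ t).2 ≠ 0 := by
  obtain ⟨hμ, hT, hper, t1, t2, hne⟩ := hc
  have hp : Function.Periodic μ T := hper
  have hμc : Continuous μ := continuous_iff_continuousAt.2 fun t => (hμ t).continuousAt
  have h1 : ∃ t, bE φ (μ t) ≠ 0 := by
    by_contra! hall
    obtain ⟨a, ha, ea⟩ := hp.exists_mem_Ico₀ hT t1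
    obtain ⟨b, hb, eb⟩ := hp.exists_mem_Ico₀ hT t2
    refine H.nsemi ⟨μ, 0, fun t _ => hμ t, ⟨a, ha.1, b, hb.1, by rw [← ea, ← eb]; exact hne⟩, ?_⟩
    rintro _ ⟨t, -, rfl⟩
    exact hall t
  obtain ⟨a, ha⟩ := h1
  have ha' : 0 < bE φ (μ a) := lt_of_le_of_ne (H.star _) ha.symm
  have hev : ∀ᶠ t in 𝓝 a, 0 < bE φ (μ t) :=
    ((b_cE H.c1).comp hμc).continuousAt.eventually_const_lt ha'
  have h2 : ∃ t, 0 < bE φ (μ t) ∧ (μ t).2 ≠ 0 := by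
    by_contra! hall
    have hz : (fun t => (μ t).2) =ᶠ[𝓝 a] fun _ => (0 : ℝ) := by
      filter_upwards [hev] with t ht using hall t ht
    have hd := a_snd (hμ a)
    have hd2 := hd.congr_of_eventuallyEq hz.symm
    have h3 := hd2.unique (hasDerivAt_const a (0 : ℝ))
    have h4 := hz.eq_of_nhds
    simp only [phiVF] at h3
    rw [h4] at h3
    exact hnz a (Prod.ext (by simp at h3; exact h3) h4)
  obtain ⟨b, hb1, hb2⟩ := h2
  obtain ⟨c, hc, ec⟩ := hp.exists_mem_Ico₀ hT b
  exact ⟨c, hc, by rw [← ec]; exact hb1, by rw [← ec]; exact hb2⟩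

lemma e_hyp (H : BH φ M) {μ : ℝ → ℝ × ℝ} {T : ℝ} (hc : IsCycle (phiVF φ) μ T)
    (hN : ∀ t, 0 ≤ t → 0 < bN φ (μ t)) {a : ℝ} (ha : a ∈ Ico 0 T) (hE : 0 < bE φ (μ a))
    (hy : (μ a).2 ≠ 0) : ∫ t in (0:ℝ)..T, bdiv φ (μ t) < 0 := by
  obtain ⟨hμ, hT, hper, -⟩ := hc
  have hμc : Continuous μ := continuous_iff_continuousAt.2 fun t => (hμ t).continuousAt
  have hd : ∀ t ∈ uIcc 0 T, HasDerivAt (fun t => Real.log (bN φ (μ t)))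
      (bdiv φ (μ t) + (μ t).2 ^ 2 * bE φ (μ t) / bN φ (μ t)) t := by
    intro t ht
    rw [uIcc_of_le hT.le] at ht
    have hn := (hN t ht.1).ne'
    refine ((b_N H.c1 (hμ t)).log hn).congr_deriv ?_
    field_simp
  have c1 : ContinuousOn (fun t => bdiv φ (μ t)) (Icc 0 T) := ((b_cdiv H.c1).comp hμc).continuousOn
  have c2 : ContinuousOn (fun t => (μ t).2 ^ 2 * bE φ (μ t) / bN φ (μ t)) (Icc 0 T) := by
    refine ContinuousOn.div ?_ ((b_cN H.c1).comp hμc).continuousOn (fun t ht => (hN t ht.1).ne')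
    exact (((continuous_snd.comp hμc).pow 2).mul ((b_cE H.c1).comp hμc)).continuousOn
  have i1 := c1.intervalIntegrable_of_Icc (μ := MeasureTheory.volume) hT.le
  have i2 := c2.intervalIntegrable_of_Icc (μ := MeasureTheory.volume) hT.le
  have h1 := integral_eq_sub_of_hasDerivAt hd (i1.add i2)
  rw [intervalIntegral.integral_add i1 i2] at h1
  have e : μ T = μ 0 := by simpa using hper 0
  rw [e, sub_self] at h1
  have h2 : 0 < ∫ t in (0:ℝ)..T, (μ t).2 ^ 2 * bE φ (μ t) / bN φ (μ t) := by
    refine intervalIntegral.integral_pos hT c2 (fun t ht => ?_) ⟨a, ⟨ha.1, ha.2.le⟩, ?_⟩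
    · exact div_nonneg (mul_nonneg (sq_nonneg _) (H.star _)) (hN t ht.1.le).le
    · exact div_pos (mul_pos (by positivity) hE) (hN a ha.1)
  linarith

lemma e_strict (H : BH φ M) {ρ1 ρ : ℝ → ℝ} (h1 : PS φ ρ1) (h : PS φ ρ) {a : ℝ} (ha : a ∈ Ioo 0 (2 * π))
    (hs : Real.sin a ≠ 0) (hE : 0 < bE φ (cpt (ρ a) a)) (hne : ρ1 0 ≠ ρ 0) :
    |ρ1 (2 * π) - ρ (2 * π)| < |ρ1 0 - ρ 0| := by
  have h2π : (0 : ℝ) ≤ 2 * π := by positivity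
  refine lt_of_le_of_ne (d_abs H h1 h le_rfl h2π) (fun heq => ?_)
  have hconst : ∀ s ∈ Icc 0 (2 * π), (ρ1 s - ρ s) ^ 2 = (ρ1 0 - ρ 0) ^ 2 := by
    intro s hs
    have b1 := d_abs H h1 h le_rfl hs.1
    have b2 := d_abs H h1 h hs.1 hs.2
    exact sq_eq_sq_iff_abs_eq_abs _ _ |>.2 (by linarith)
  have hd := d_diff h1 h ha.1.le
  have hev : (fun s => (ρ1 s - ρ s) ^ 2) =ᶠ[𝓝 a] fun _ => (ρ1 0 - ρ 0) ^ 2 := by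
    filter_upwards [Ioo_mem_nhds ha.1 ha.2] with s hs using hconst s ⟨hs.1.le, hs.2.le⟩
  have h3 := (hd.congr_of_eventuallyEq hev.symm).unique (hasDerivAt_const a _)
  have hr : ρ1 a ≠ ρ a := by
    intro hh
    have := hconst a ⟨ha.1.le, ha.2.le⟩
    rw [hh, sub_self] at this
    simp at this
    exact sub_ne_zero.2 hne ((pow_eq_zero_iff two_ne_zero).1 this.symm)
  have h4 := d_ne H a (ρ1 a) (ρ a) hE hr
  have n1 := (h1 a ha.1.le).1.ne'
  have n2 := (h a ha.1.le).1.ne'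
  have n3 := sub_ne_zero.2 hr
  have n4 := sub_ne_zero.2 h4
  have : 2 * Real.sin a ^ 2 * ((ρ1 a - ρ a) * (φ (cpt (ρ1 a) a) - φ (cpt (ρ a) a)))
        / (cD φ (ρ1 a) a * cD φ (ρ a) a) ≠ 0 := by positivity
  exact this (neg_eq_zero.1 h3)

lemma e_conv (H : BH φ M) {ρ1 ρ : ℝ → ℝ} {q : ℝ} (h1 : PS φ ρ1) (h : PS φ ρ) (h0 : ρ 0 = q)
    (hq : ρ (2 * π) = q) {a : ℝ} (ha : a ∈ Ioo 0 (2 * π))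
    (hs : Real.sin a ≠ 0) (hE : 0 < bE φ (cpt (ρ a) a)) :
    Tendsto (fun s => |ρ1 s - ρ s|) atTop (𝓝 0) := by
  obtain ⟨P, hPc, hP⟩ := d_P H
  have hPq : P q = q := by rw [← h0, ← hP ρ h, hq, h0]
  have hstr : ∀ x, x ≠ q → |P x - q| < |x - q| := by
    intro x hx
    obtain ⟨r, hr0, hr⟩ := d_ex H x
    have := e_strict H hr h ha hs hE (by rw [hr0, h0]; exact hx)
    rwa [hP r hr, hr0, hq, h0] at this
  have hρn : ∀ n : ℕ, ρ (n * (2 * π)) = q := by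
    intro n
    induction n with
    | zero => simpa using h0
    | succ n ih =>
      have := hP _ (d_shiftn h n)
      simp only [zero_add] at this
      rw [ih, hPq] at this
      rw [← this]; congr 1; push_cast; ring
  set x : ℕ → ℝ := fun n => ρ1 (n * (2 * π)) with hx
  have hxs : ∀ n, x (n + 1) = P (x n) := by
    intro n
    have := hP _ (d_shiftn h1 n)
    simp only [zero_add] at this
    rw [hx]; simp only
    rw [← this]; congr 1; push_cast; ring
  set d : ℕ → ℝ := fun n => |x n - q| with hd
  have hanti : Antitone d := by
    refine antitone_nat_of_succ_le fun n => ?_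
    simp only [hd, hxs]
    by_cases hh : x n = q
    · rw [hh, hPq]
    · exact (hstr _ hh).le
  have hlim := tendsto_atTop_ciInf hanti ⟨0, by rintro _ ⟨n, rfl⟩; exact abs_nonneg _⟩
  set D := ⨅ n, d n with hD
  have hle : ∀ n, d (n + 1) ≤ max |P (q + d n) - q| |P (q - d n) - q| := by
    intro n
    simp only [hd, hxs]
    rcases le_total 0 (x n - q) with hh | hh
    · rw [abs_of_nonneg hh]
      refine le_max_of_le_left (le_of_eq ?_)
      congr 2; ring_nf
    · rw [abs_of_nonpos hh]
      refine le_max_of_le_right (le_of_eq ?_)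
      congr 2; ring_nf
  have hG : Continuous fun u => max |P (q + u) - q| |P (q - u) - q| := by fun_prop
  have hDle : D ≤ max |P (q + D) - q| |P (q - D) - q| :=
    le_of_tendsto_of_tendsto' ((tendsto_add_atTop_iff_nat 1).2 hlim) ((hG.tendsto D).comp hlim) hle
  have hD0 : 0 ≤ D := ge_of_tendsto' hlim fun n => abs_nonneg _
  have hDz : D = 0 := by
    by_contra hne
    have hpos : 0 < D := lt_of_le_of_ne hD0 (Ne.symm hne)
    have a1 := hstr (q + D) (by linarith)
    have a2 := hstr (q - D) (by linarith)
    rw [add_sub_cancel_left, abs_of_pos hpos] at a1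
    rw [show q - D - q = -D by ring, abs_neg, abs_of_pos hpos] at a2
    exact absurd hDle (not_le.2 (max_lt a1 a2))
  rw [hDz] at hlim
  rw [Metric.tendsto_atTop]
  intro ε hε
  obtain ⟨n, hn⟩ := (hlim.eventually_lt_const hε).exists
  refine ⟨n * (2 * π), fun s hs => ?_⟩
  have := d_abs H h1 h (by positivity) hs
  rw [hρn n] at this
  rw [Real.dist_eq, sub_zero, abs_abs]
  exact this.trans_lt hn

lemma e_dist (r1 r2 s : ℝ) : dist (cpt r1 s) (cpt r2 s) ≤ |Real.exp r1 - Real.exp r2| := by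
  rw [Prod.dist_eq]
  simp only [cpt, Real.dist_eq]
  refine max_le ?_ ?_
  · rw [← sub_mul, abs_mul]
    exact mul_le_of_le_one_right (abs_nonneg _) (Real.abs_cos_le_one s)
  · rw [show -(Real.exp r1 * Real.sin s) - -(Real.exp r2 * Real.sin s)
      = -((Real.exp r1 - Real.exp r2) * Real.sin s) by ring, abs_neg, abs_mul]
    exact mul_le_of_le_one_right (abs_nonneg _) (Real.abs_sin_le_one s)

lemma e_exp (r1 r2 : ℝ) (h : Real.exp r2 ≤ M) :
    |Real.exp r1 - Real.exp r2| ≤ M * (Real.exp |r1 - r2| - 1) := by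
  have e : Real.exp r1 - Real.exp r2 = Real.exp r2 * (Real.exp (r1 - r2) - 1) := by
    rw [mul_sub, ← Real.exp_add]; ring_nf
  rw [e, abs_mul, abs_of_pos (Real.exp_pos _)]
  have h1 : |Real.exp (r1 - r2) - 1| ≤ Real.exp |r1 - r2| - 1 := by
    rw [abs_le]
    have a1 := Real.exp_le_exp.2 (le_abs_self (r1 - r2))
    have a2 := Real.exp_le_exp.2 (neg_abs_le (r1 - r2))
    have a3 : 2 ≤ Real.exp |r1 - r2| + Real.exp (-|r1 - r2|) := by
      have b1 := Real.add_one_le_exp |r1 - r2|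
      have b2 := Real.add_one_le_exp (-|r1 - r2|)
      linarith
    constructor <;> linarith
  have h2 : 0 ≤ Real.exp |r1 - r2| - 1 := (abs_nonneg _).trans h1
  calc _ ≤ Real.exp r2 * (Real.exp |r1 - r2| - 1) := by gcongr
    _ ≤ _ := by gcongr

lemma e_uniq (hφ : ContDiff ℝ 1 φ) {f g : ℝ → ℝ × ℝ} (hf : ∀ t, HasDerivAt f (phiVF φ (f t)) t)
    (hg : ∀ t, HasDerivAt g (phiVF φ (g t)) t) {a b : ℝ} (hab : f a = g b) : range f ⊆ range g := by
  rintro _ ⟨t, rfl⟩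
  have h1 : ∀ t, HasDerivAt (fun t => g (t + (b - a))) (phiVF φ (g (t + (b - a)))) t :=
    fun t => (hg (t + (b - a))).comp_add_const t (b - a)
  have := a_unique_Icc (b_contDiff hφ) (a := min a t) (b := max a t) (t0 := a) (fun t _ => hf t)
    (fun t _ => h1 t) ⟨min_le_left _ _, le_max_left _ _⟩ (by simp [hab])
    (show t ∈ _ from ⟨min_le_right _ _, le_max_right _ _⟩)
  exact ⟨_, this.symm⟩

lemma e_main (H : BH φ M) : ∃ (μ : ℝ → ℝ × ℝ) (T : ℝ), IsLimitCycle (phiVF φ) μ T ∧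
      (∀ (μ' : ℝ → ℝ × ℝ) (T' : ℝ), IsLimitCycle (phiVF φ) μ' T' →
        range μ' = range μ) ∧
      (∫ t in (0:ℝ)..T, bdiv φ (μ t)) ≠ 0 ∧
      ∀ (γ : ℝ → ℝ × ℝ) (t₀ : ℝ), IsSolOn (phiVF φ) γ (Ici t₀) →
        (∃ t₁ ∈ Ici t₀, ∃ t₂ ∈ Ici t₀, γ t₁ ≠ γ t₂) →
        Tendsto (fun t => Metric.infDist (γ t) (range μ)) atTop (𝓝 0) := by
  obtain ⟨γ, q, ρ, σ, τ, hγ, hγ0, hτ0, hστ, hτσ, hτm, hσm, hτt, hρ0, hPS, hpol, hρ2, hρM⟩ := d_closed H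
  have hσ0 : σ 0 = 0 := by have := hστ 0; rwa [hτ0] at this
  have hpi := Real.pi_pos
  have hT : 0 < σ (2 * π) := by rw [← hσ0]; exact hσm (by positivity)
  have hσn : ∀ s, 0 ≤ s → 0 ≤ σ s := fun s hs => by rw [← hσ0]; exact hσm.monotone hs
  have hclose : γ (σ (2 * π)) = γ 0 := by
    rw [hpol _ (by positivity), hρ2, hγ0]
    simpa using d_cpt q 0
  obtain ⟨μ, hμ, hper, hμγ⟩ := d_periodic H.c1 hγ hT hclose
  have hp : Function.Periodic μ (σ (2 * π)) := hper
  have hμc : Continuous μ := continuous_iff_continuousAt.2 fun t => (hμ t).continuousAt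
  have hnc : μ 0 ≠ μ (σ π) := by
    rw [hμγ 0 le_rfl, hμγ _ (hσn _ hpi.le), hγ0, hpol _ hpi.le]
    intro hh
    have := congrArg Prod.fst hh
    simp [cpt] at this
    linarith [Real.exp_pos q, Real.exp_pos (ρ π)]
  have hcyc : IsCycle (phiVF φ) μ (σ (2 * π)) := ⟨hμ, hT, hper, 0, σ π, hnc⟩
  have hsol : IsSolOn (phiVF φ) μ (Ici 0) := fun t _ => hμ t
  have hnz0 : ∀ t, 0 ≤ t → μ t ≠ 0 :=
    b_ne_zero H hsol ⟨0, mem_Ici.2 le_rfl, σ π, hσn _ hpi.le, hnc⟩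
  have hnz : ∀ t, μ t ≠ 0 := by
    intro t
    obtain ⟨a, ha, ea⟩ := hp.exists_mem_Ico₀ hT t
    rw [ea]; exact hnz0 a ha.1
  have hN := b_Npos H hsol (by rw [hμγ 0 le_rfl, hγ0]; exact d_Npos q)
  obtain ⟨a, ha, haE, hay⟩ := e_star H hcyc hnz
  have hhyp := e_hyp H hcyc hN ha haE hay
  have hτa0 : 0 ≤ τ a := by rw [← hτ0]; exact hτm.monotone ha.1
  have hτa1 : τ a < 2 * π := by have := hτm ha.2; rwa [hτσ] at this
  have hμa : μ a = cpt (ρ (τ a)) (τ a) := by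
    rw [hμγ a ha.1, ← hpol _ hτa0, hστ]
  rw [hμa] at haE hay
  have hsin : Real.sin (τ a) ≠ 0 := by
    intro hh
    apply hay
    simp [cpt, hh]
  have hτa : τ a ∈ Ioo 0 (2 * π) := by
    refine ⟨lt_of_le_of_ne hτa0 fun hh => hsin (by rw [← hh]; simp), hτa1⟩
  have hattr : ∀ (γ : ℝ → ℝ × ℝ) (t₀ : ℝ), IsSolOn (phiVF φ) γ (Ici t₀) →
        (∃ t₁ ∈ Ici t₀, ∃ t₂ ∈ Ici t₀, γ t₁ ≠ γ t₂) →
        Tendsto (fun t => Metric.infDist (γ t) (range μ)) atTop (𝓝 0) := by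
    intro g t₀ hg hgn
    have g1 : IsSolOn (phiVF φ) (fun t => g (t + t₀)) (Ici 0) := by
      intro t ht
      exact a_shift hg t (by simp only [mem_Ici] at ht ⊢; linarith)
    have g0 : (fun t => g (t + t₀)) 0 ≠ 0 := by
      simpa using b_ne_zero H hg hgn t₀ le_rfl
    obtain ⟨t2, q', ht2, hq'⟩ := d_axis H g1 g0
    have g2 : IsSolOn (phiVF φ) (fun t => g (t + t2 + t₀)) (Ici 0) := by
      intro t ht
      exact a_shift g1 t (by simp only [mem_Ici] at ht ⊢; linarith)
    obtain ⟨ρ1, σ1, τ1, b1, b2, b3, b4, b5, b6, b7, b8, b9⟩ :=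
      d_polar (q := q') H g2 (by simpa using hq')
    have hc := e_conv H b8 hPS hρ0 hρ2 hτa hsin haE
    have hc2 : Tendsto (fun s => M * (Real.exp |ρ1 s - ρ s| - 1)) atTop (𝓝 0) := by
      have := (((Real.continuous_exp.tendsto 0).comp hc).sub_const 1).const_mul M
      simpa using this
    have hc3 := hc2.comp b6
    have hmain : Tendsto (fun t => Metric.infDist (g (t + t2 + t₀)) (range μ)) atTop (𝓝 0) := by
      refine squeeze_zero' (Eventually.of_forall fun _ => infDist_nonneg) ?_ hc3
      filter_upwards [eventually_ge_atTop 0] with t ht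
      have hs : 0 ≤ τ1 t := by rw [← b1]; exact b4.monotone ht
      have e1 := b9 (τ1 t) hs
      rw [b2] at e1
      have e2 : μ (σ (τ1 t)) = cpt (ρ (τ1 t)) (τ1 t) := by
        rw [hμγ _ (hσn _ hs), hpol _ hs]
      have e3 := infDist_le_dist_of_mem (x := g (t + t2 + t₀)) (mem_range_self (f := μ) (σ (τ1 t)))
      rw [e2, e1] at e3
      rw [e1]
      exact e3.trans ((e_dist _ _ _).trans (e_exp _ _ (hρM _ hs)))
    have := hmain.comp (tendsto_atTop_add_const_right atTop (-(t2 + t₀)) tendsto_id)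
    refine this.congr fun t => ?_
    simp only [Function.comp, id]
    congr 2; ring
  have hcompact : IsCompact (range μ) := by
    have : range μ = μ '' Icc 0 (σ (2 * π)) := by
      refine subset_antisymm ?_ (image_subset_range _ _)
      rintro _ ⟨t, rfl⟩
      obtain ⟨b, hb, eb⟩ := hp.exists_mem_Ico₀ hT t
      exact ⟨b, ⟨hb.1, hb.2.le⟩, eb.symm⟩
    rw [this]
    exact isCompact_Icc.image hμc
  have huniq : ∀ (μ' : ℝ → ℝ × ℝ) (T' : ℝ), IsCycle (phiVF φ) μ' T' → range μ' = range μ := by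
    rintro μ' T' ⟨c1, c2, c3, t1, t2, c4⟩
    have hp' : Function.Periodic μ' T' := c3
    obtain ⟨a1, ha1, ea1⟩ := hp'.exists_mem_Ico₀ c2 t1
    obtain ⟨a2, ha2, ea2⟩ := hp'.exists_mem_Ico₀ c2 t2
    have ht := hattr μ' 0 (fun t _ => c1 t) ⟨a1, ha1.1, a2, ha2.1, by rw [← ea1, ← ea2]; exact c4⟩
    have hn : Tendsto (fun n : ℕ => (n : ℝ) * T') atTop atTop :=
      tendsto_natCast_atTop_atTop.atTop_mul_const c2
    have h1 := ht.comp hn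
    have h2 : ∀ n : ℕ, μ' (n * T') = μ' 0 := fun n => by simpa using hp'.nat_mul n 0
    have h3 : (fun t => infDist (μ' t) (range μ)) ∘ (fun n : ℕ => (n : ℝ) * T')
        = fun _ => infDist (μ' 0) (range μ) := by
      funext n; simp only [Function.comp, h2]
    rw [h3] at h1
    have h4 := tendsto_nhds_unique h1 tendsto_const_nhds
    have h5 : μ' 0 ∈ range μ :=
      (hcompact.isClosed.mem_iff_infDist_zero (range_nonempty μ)).2 h4.symm
    obtain ⟨b, hb⟩ := h5
    exact subset_antisymm (e_uniq H.c1 c1 hμ hb.symm) (e_uniq H.c1 hμ c1 hb)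
  refine ⟨μ, σ (2 * π), ⟨hcyc, univ, isOpen_univ, subset_univ _, ?_⟩, ?_, hhyp.ne, hattr⟩
  · intro γ' T' h1 h2
    exact absurd (huniq γ' T' h1) h2
  · intro μ' T' h1
    exact huniq μ' T' h1.1

end

/-- under the star-shapedness condition with the non-invariance of
`{x φ_x + y φ_y = 0}`, the boundedness condition (`φ ≥ 0` outside `D_M`, with
`{φ = 0} \ D_M` containing no non-trivial positive semi-orbit), and
`φ(0,0) < 0`, the system (S) has exactly one limit cycle; it is hyperbolic and
attracts every non-constant solution. -/
theorem statement8 (φ : ℝ × ℝ → ℝ) (hφ : ContDiff ℝ 1 φ)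
    (h00 : φ (0, 0) < 0)
    (hstar : ∀ p : ℝ × ℝ,
      p.1 * fderiv ℝ φ p (1, 0) + p.2 * fderiv ℝ φ p (0, 1) ≥ 0)
    (hZstar : ¬ HasSemiOrbitIn (phiVF φ)
      {p : ℝ × ℝ | p.1 * fderiv ℝ φ p (1, 0) + p.2 * fderiv ℝ φ p (0, 1) = 0})
    (M : ℝ) (hM : 0 < M)
    (hpos : ∀ p : ℝ × ℝ, M ^ 2 < p.1 ^ 2 + p.2 ^ 2 → φ p ≥ 0)
    (hZφ : ¬ HasSemiOrbitIn (phiVF φ)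
      ({p : ℝ × ℝ | φ p = 0} \ {p : ℝ × ℝ | p.1 ^ 2 + p.2 ^ 2 ≤ M ^ 2})) :
    ∃ (μ : ℝ → ℝ × ℝ) (T : ℝ), IsLimitCycle (phiVF φ) μ T ∧
      (∀ (μ' : ℝ → ℝ × ℝ) (T' : ℝ), IsLimitCycle (phiVF φ) μ' T' →
        range μ' = range μ) ∧
      (∫ t in (0:ℝ)..T,
        (-φ (μ t) - (μ t).2 * fderiv ℝ φ (μ t) (0, 1))) ≠ 0 ∧
      ∀ (γ : ℝ → ℝ × ℝ) (t₀ : ℝ), IsSolOn (phiVF φ) γ (Ici t₀) →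
        (∃ t₁ ∈ Ici t₀, ∃ t₂ ∈ Ici t₀, γ t₁ ≠ γ t₂) →
        Tendsto (fun t => Metric.infDist (γ t) (range μ)) atTop (𝓝 0) := by
  exact e_main ⟨hφ, h00, hstar, hZstar, hM, hpos⟩
end
end
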